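/- arXiv:1910.10894 — 2 statements merged into one kernel-verified Lean document; each statement's English description precedes it below -/
import Mathlib

section
/- Let u be a smooth function on ℝⁿ × (0,1] satisfying ∂ₜ u ≤ Δ u pointwise, such that the positive part u₊ = max(u,0) satisfies: u₊(·,t) → 0 in L²_loc(ℝⁿ) as t → 0⁺, and there exist a > 0 and a positive nondecreasing function L with ∫₁^∞ r/L(r) dr = ∞ such that ∫₀¹ tᵃ ∫_{B(0,r)} u₊(x,t)² dx dt ≤ e^{L(r)} for all r > 0. Then u ≤ 0 on ℝⁿ × (0,1]. -/
open MeasureTheory Filter Set Metric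

/-- The Euclidean Laplacian of `g : ℝⁿ → ℝ`. -/
noncomputable def heatLap {n : ℕ} (g : EuclideanSpace ℝ (Fin n) → ℝ)
    (x : EuclideanSpace ℝ (Fin n)) : ℝ :=
  ∑ i : Fin n, fderiv ℝ (fun y => fderiv ℝ g y (EuclideanSpace.single i (1 : ℝ))) x
    (EuclideanSpace.single i (1 : ℝ))

/-- A function `w` on `(0,1) × ℝⁿ` that is continuous, has a time derivative and second derivatives
along the coordinate directions, and satisfies `∂ₜ w ≤ Δ w`. -/
def IsHeatSubsolution {n : ℕ} (w : ℝ → EuclideanSpace ℝ (Fin n) → ℝ) : Prop :=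
  ContinuousOn (fun p : ℝ × EuclideanSpace ℝ (Fin n) => w p.1 p.2) (Ioo (0 : ℝ) 1 ×ˢ univ) ∧
  ∀ t ∈ Ioo (0 : ℝ) 1, ∀ x, ∃ (wt : ℝ) (D : Fin n → ℝ → ℝ) (D2 : Fin n → ℝ),
    HasDerivAt (fun s => w s x) wt t ∧
    (∀ i s, HasDerivAt (fun s => w t (x + s • EuclideanSpace.single i (1 : ℝ))) (D i s) s) ∧
    (∀ i, HasDerivAt (D i) (D2 i) 0) ∧ wt ≤ ∑ i, D2 i

theorem IsLocalMax.second_deriv_nonpos {f D : ℝ → ℝ} {d : ℝ} {x : ℝ} (hmax : IsLocalMax f x)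
    (hf : ∀ s, HasDerivAt f (D s) s) (hD : HasDerivAt D d x) : d ≤ 0 := by
  by_contra! hd
  have hDf : deriv f = D := funext fun s => (hf s).deriv
  have hmin : IsLocalMin f x := by
    apply isLocalMin_of_deriv_deriv_pos
    · rwa [hDf, hD.deriv]
    · exact hmax.deriv_eq_zero
    · exact (hf x).continuousAt
  have hconst : f =ᶠ[nhds x] fun _ => f x := by
    filter_upwards [hmax, hmin] with s h1 h2 using le_antisymm h1 h2
  have h1 : D =ᶠ[nhds x] fun _ => 0 := by
    rw [← hDf]
    simpa using hconst.deriv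
  have h2 := hD.congr_of_eventuallyEq h1.symm
  have h3 := h2.unique (hasDerivAt_const x (0 : ℝ))
  exact hd.ne' h3

theorem HasDerivAt.nonneg_of_forall_le_left {f : ℝ → ℝ} {d a b : ℝ} (hab : a < b)
    (hf : HasDerivAt f d b) (hmax : ∀ s ∈ Icc a b, f s ≤ f b) : 0 ≤ d := by
  have h := (hasDerivAt_iff_tendsto_slope.1 hf).mono_left
    (nhdsWithin_mono b (fun s (hs : s ∈ Iio b) => ne_of_lt hs))
  refine ge_of_tendsto h ?_
  filter_upwards [Ioo_mem_nhdsLT hab] with s hs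
  rw [slope_def_field]
  exact div_nonneg_of_nonpos (by linarith [hmax s ⟨hs.1.le, hs.2.le⟩]) (by linarith [hs.2])

/-- Comparison of a subsolution with a function that is a strict supersolution wherever it is
smaller than the subsolution. -/
theorem IsHeatSubsolution.le_of_strict_supersolution {n : ℕ}
    {w ψ : ℝ → EuclideanSpace ℝ (Fin n) → ℝ} (hw : IsHeatSubsolution w)
    {t₀ t₁ R : ℝ} {x₀ : EuclideanSpace ℝ (Fin n)} (h0 : 0 < t₀) (h1 : t₁ < 1)
    (hψ : ContinuousOn (fun p : ℝ × EuclideanSpace ℝ (Fin n) => ψ p.1 p.2)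
      (Icc t₀ t₁ ×ˢ closedBall x₀ R))
    (hinit : ∀ x ∈ closedBall x₀ R, w t₀ x ≤ ψ t₀ x)
    (hlat : ∀ t ∈ Icc t₀ t₁, ∀ x, ‖x - x₀‖ = R → w t x ≤ ψ t x)
    (hsuper : ∀ t ∈ Ioc t₀ t₁, ∀ x, ‖x - x₀‖ < R → ψ t x < w t x →
      ∃ (ψt : ℝ) (D : Fin n → ℝ → ℝ) (D2 : Fin n → ℝ),
        HasDerivAt (fun s => ψ s x) ψt t ∧
        (∀ i s, HasDerivAt (fun s => ψ t (x + s • EuclideanSpace.single i (1 : ℝ))) (D i s) s) ∧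
        (∀ i, HasDerivAt (D i) (D2 i) 0) ∧ ∑ i, D2 i < ψt) :
    ∀ t ∈ Icc t₀ t₁, ∀ x ∈ closedBall x₀ R, w t x ≤ ψ t x := by
  intro t' ht' x' hx'
  by_contra! hlt
  have hK : IsCompact (Icc t₀ t₁ ×ˢ closedBall x₀ R) :=
    isCompact_Icc.prod (isCompact_closedBall x₀ R)
  have hsub : Icc t₀ t₁ ×ˢ closedBall x₀ R ⊆
      Ioo (0 : ℝ) 1 ×ˢ (univ : Set (EuclideanSpace ℝ (Fin n))) := fun p hp =>
    ⟨⟨h0.trans_le hp.1.1, hp.1.2.trans_lt h1⟩, mem_univ _⟩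
  obtain ⟨⟨t, x⟩, ⟨ht, hx⟩, hmax⟩ := hK.exists_isMaxOn ⟨(t', x'), ht', hx'⟩
    ((hw.1.mono hsub).sub hψ)
  have hmax' : ∀ s ∈ Icc t₀ t₁, ∀ y ∈ closedBall x₀ R, w s y - ψ s y ≤ w t x - ψ t x :=
    fun s hs y hy => hmax (show (s, y) ∈ Icc t₀ t₁ ×ˢ closedBall x₀ R from ⟨hs, hy⟩)
  have hpos : ψ t x < w t x := by linarith [hmax' t' ht' x' hx']
  dsimp only at ht hx
  have htt : t₀ < t := by
    refine lt_of_le_of_ne ht.1 ?_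
    rintro rfl
    exact absurd (hinit x hx) (not_le.2 hpos)
  have hxR : ‖x - x₀‖ < R := by
    refine lt_of_le_of_ne (mem_closedBall_iff_norm.1 hx) ?_
    intro h
    exact absurd (hlat t ht x h) (not_le.2 hpos)
  obtain ⟨ψt, D, D2, hψt, hD, hD2, hlt'⟩ := hsuper t ⟨htt, ht.2⟩ x hxR hpos
  obtain ⟨wt, D', D2', hwt, hD', hD2', hle'⟩ :=
    hw.2 t ⟨h0.trans_le ht.1, ht.2.trans_lt h1⟩ x
  have hA : 0 ≤ wt - ψt := (hwt.sub hψt).nonneg_of_forall_le_left htt fun s hs =>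
    hmax' s ⟨hs.1, hs.2.trans ht.2⟩ x hx
  have hB : ∀ i, D2' i ≤ D2 i := by
    intro i
    have hloc : IsLocalMax ((fun s : ℝ => w t (x + s • EuclideanSpace.single i (1 : ℝ))) -
        (fun s : ℝ => ψ t (x + s • EuclideanSpace.single i (1 : ℝ)))) 0 := by
      have hcont : Tendsto (fun s : ℝ => x + s • EuclideanSpace.single i (1 : ℝ)) (nhds 0)
          (nhds x) := by
        have : Continuous (fun s : ℝ => x + s • EuclideanSpace.single i (1 : ℝ)) := by fun_prop
        simpa using this.tendsto 0
      have hmem : ball x₀ R ∈ nhds x := isOpen_ball.mem_nhds (mem_ball_iff_norm.2 hxR)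
      filter_upwards [hcont hmem] with s hs
      simpa using hmax' t ht _ (ball_subset_closedBall hs)
    have := hloc.second_deriv_nonpos (fun s => (hD' i s).sub (hD i s)) ((hD2' i).sub (hD2 i))
    linarith
  have := Finset.sum_le_sum fun i (_ : i ∈ Finset.univ) => hB i
  linarith

/-- Comparison with the Gaussian type barrier `A + exp (α(t) |x - x₀|² + β(t))`. -/
theorem IsHeatSubsolution.le_barrier {n : ℕ}
    {w : ℝ → EuclideanSpace ℝ (Fin n) → ℝ} (hw : IsHeatSubsolution w)
    {t₀ t₁ R A : ℝ} {x₀ : EuclideanSpace ℝ (Fin n)} (h0 : 0 < t₀) (h1 : t₁ < 1)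
    {α β α' β' : ℝ → ℝ}
    (hα : ∀ t ∈ Icc t₀ t₁, HasDerivAt α (α' t) t) (hβ : ∀ t ∈ Icc t₀ t₁, HasDerivAt β (β' t) t)
    (hinit : ∀ x ∈ closedBall x₀ R, w t₀ x ≤ A)
    (hlat : ∀ t ∈ Icc t₀ t₁, ∀ x, ‖x - x₀‖ = R → w t x ≤ A + Real.exp (α t * R ^ 2 + β t))
    (hsuper : ∀ t ∈ Ioc t₀ t₁, ∀ x, ‖x - x₀‖ < R →
      A + Real.exp (α t * ‖x - x₀‖ ^ 2 + β t) < w t x →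
      4 * α t ^ 2 * ‖x - x₀‖ ^ 2 + 2 * n * α t < α' t * ‖x - x₀‖ ^ 2 + β' t) :
    ∀ t ∈ Icc t₀ t₁, ∀ x ∈ closedBall x₀ R,
      w t x ≤ A + Real.exp (α t * ‖x - x₀‖ ^ 2 + β t) := by
  have hαc : ContinuousOn α (Icc t₀ t₁) := fun t ht => (hα t ht).continuousAt.continuousWithinAt
  have hβc : ContinuousOn β (Icc t₀ t₁) := fun t ht => (hβ t ht).continuousAt.continuousWithinAt
  refine hw.le_of_strict_supersolution
    (ψ := fun t x => A + Real.exp (α t * ‖x - x₀‖ ^ 2 + β t)) h0 h1 ?_ ?_ ?_ ?_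
  · have hα2 : ContinuousOn (fun p : ℝ × EuclideanSpace ℝ (Fin n) => α p.1)
        (Icc t₀ t₁ ×ˢ closedBall x₀ R) := hαc.comp continuousOn_fst fun p hp => hp.1
    have hβ2 : ContinuousOn (fun p : ℝ × EuclideanSpace ℝ (Fin n) => β p.1)
        (Icc t₀ t₁ ×ˢ closedBall x₀ R) := hβc.comp continuousOn_fst fun p hp => hp.1
    have hx2 : ContinuousOn (fun p : ℝ × EuclideanSpace ℝ (Fin n) => ‖p.2 - x₀‖ ^ 2)
        (Icc t₀ t₁ ×ˢ closedBall x₀ R) := by fun_prop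
    exact continuousOn_const.add (Real.continuous_exp.comp_continuousOn ((hα2.mul hx2).add hβ2))
  · intro x hx
    exact (hinit x hx).trans (le_add_of_nonneg_right (Real.exp_pos _).le)
  · intro t ht x hx
    simpa only [hx] using hlat t ht x hx
  · intro t ht x hx hlt
    have hlin := hsuper t ht x hx hlt
    have hnorm : ∀ (i : Fin n) (s : ℝ), ‖x + s • EuclideanSpace.single i (1 : ℝ) - x₀‖ ^ 2 =
        ‖x - x₀‖ ^ 2 + 2 * s * (x - x₀) i + s ^ 2 := by
      intro i s
      rw [show x + s • EuclideanSpace.single i (1 : ℝ) - x₀ =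
        (x - x₀) + s • EuclideanSpace.single i (1 : ℝ) by abel, norm_add_sq_real,
        inner_smul_right, EuclideanSpace.inner_single_right, norm_smul]
      simp
      ring
    set e := fun (i : Fin n) (s : ℝ) =>
      Real.exp (α t * (‖x - x₀‖ ^ 2 + 2 * s * (x - x₀) i + s ^ 2) + β t) with he
    have hde : ∀ i s, HasDerivAt (e i) (e i s * (α t * (2 * (x - x₀) i + 2 * s))) s := by
      intro i s
      have hq : HasDerivAt
          (fun s : ℝ => α t * (‖x - x₀‖ ^ 2 + 2 * s * (x - x₀) i + s ^ 2) + β t)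
          (α t * (2 * (x - x₀) i + 2 * s)) s := by
        have h1 := (((hasDerivAt_id s).const_mul 2).mul_const ((x - x₀) i)).const_add
          (‖x - x₀‖ ^ 2)
        have h2 := ((h1.add ((hasDerivAt_id s).pow 2)).const_mul (α t)).add_const (β t)
        refine h2.congr_deriv ?_
        simp
      exact hq.exp
    set E₀ := Real.exp (α t * ‖x - x₀‖ ^ 2 + β t) with hE
    have he0 : ∀ i, e i 0 = E₀ := fun i => by simp [he, hE]
    refine ⟨E₀ * (α' t * ‖x - x₀‖ ^ 2 + β' t),
      fun i s => e i s * (α t * (2 * (x - x₀) i + 2 * s)),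
      fun i => E₀ * (4 * α t ^ 2 * (x - x₀) i ^ 2 + 2 * α t), ?_, ?_, ?_, ?_⟩
    · have ht' : t ∈ Icc t₀ t₁ := ⟨ht.1.le, ht.2⟩
      exact ((((hα t ht').mul_const (‖x - x₀‖ ^ 2)).add (hβ t ht')).exp).const_add A
    · intro i s
      simp only [hnorm]
      exact (hde i s).const_add A
    · intro i
      have h1 : HasDerivAt (fun s : ℝ => α t * (2 * (x - x₀) i + 2 * s)) (α t * 2) 0 := by
        have := (((hasDerivAt_id (0 : ℝ)).const_mul 2).const_add (2 * (x - x₀) i)).const_mul (α t)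
        simpa using this
      refine ((hde i 0).mul h1).congr_deriv ?_
      rw [he0]
      ring
    · have hs : ‖x - x₀‖ ^ 2 = ∑ i, (x - x₀) i ^ 2 := by
        rw [EuclideanSpace.norm_sq_eq]
        simp
      have : ∑ i, E₀ * (4 * α t ^ 2 * (x - x₀) i ^ 2 + 2 * α t) =
          E₀ * (4 * α t ^ 2 * ‖x - x₀‖ ^ 2 + 2 * n * α t) := by
        rw [← Finset.mul_sum, Finset.sum_add_distrib, ← Finset.mul_sum, ← hs]
        rw [Finset.sum_const, Finset.card_univ, Fintype.card_fin, nsmul_eq_mul]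
        ring
      rw [this]
      exact mul_lt_mul_of_pos_left hlin (Real.exp_pos _)

/-- Over a time interval of length comparable to `R² / Λ`, a subsolution bounded by `exp Λ` on the
ball of radius `R` increases by at most `exp (-Λ)` on the ball of radius `R / 2`. -/
theorem IsHeatSubsolution.le_add_exp_neg {n : ℕ}
    {w : ℝ → EuclideanSpace ℝ (Fin n) → ℝ} (hw : IsHeatSubsolution w)
    {s t R A Λ : ℝ} (hs : 0 < s) (hst : s ≤ t) (ht : t < 1) (hR : 0 < R) (hA : 0 ≤ A)
    (hΛ : 1 ≤ Λ) (hlen : (8 * n + 65) * Λ * (t - s) ≤ R ^ 2)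
    (hbound : ∀ r ∈ Ioo (0 : ℝ) 1, ∀ x, ‖x‖ ≤ R → w r x ≤ Real.exp Λ)
    (hinit : ∀ x, ‖x‖ ≤ R → w s x ≤ A) :
    ∀ x, ‖x‖ ≤ R / 2 → w t x ≤ A + Real.exp (-Λ) := by
  intro x hx
  have hR2 : 0 < R ^ 2 := by positivity
  have key := hw.le_barrier (x₀ := 0) (R := R) (A := A) hs ht
    (α := fun _ => 4 * Λ / R ^ 2) (α' := fun _ => 0)
    (β := fun r => -3 * Λ + (8 * n + 65) * Λ ^ 2 / R ^ 2 * (r - s))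
    (β' := fun _ => (8 * n + 65) * Λ ^ 2 / R ^ 2)
    (fun r _ => hasDerivAt_const r _)
    (fun r _ => by
      simpa using (((hasDerivAt_id r).sub_const s).const_mul
        ((8 * n + 65) * Λ ^ 2 / R ^ 2)).const_add (-3 * Λ))
    (fun y hy => hinit y (by simpa using hy)) ?_ ?_ t ⟨hst, le_rfl⟩ x
    (by simpa using hx.trans (by linarith))
  · refine key.trans (add_le_add le_rfl (Real.exp_le_exp.2 ?_))
    have h1 : 4 * Λ / R ^ 2 * ‖x - 0‖ ^ 2 ≤ Λ := by
      rw [sub_zero, div_mul_eq_mul_div, div_le_iff₀ hR2]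
      have : ‖x‖ ^ 2 ≤ (R / 2) ^ 2 := by gcongr
      nlinarith
    have h2 : (8 * n + 65) * Λ ^ 2 / R ^ 2 * (t - s) ≤ Λ := by
      rw [div_mul_eq_mul_div, div_le_iff₀ hR2]
      nlinarith
    linarith
  · intro r hr y hy
    rw [sub_zero] at hy
    refine (hbound r ⟨hs.trans_le hr.1, hr.2.trans_lt ht⟩ y hy.le).trans ?_
    refine le_add_of_nonneg_of_le hA (Real.exp_le_exp.2 ?_)
    have : 0 ≤ (8 * n + 65) * Λ ^ 2 / R ^ 2 * (r - s) :=
      mul_nonneg (by positivity) (by linarith [hr.1])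
    rw [div_mul_cancel₀ _ hR2.ne']
    linarith
  · intro r hr y hy _
    rw [sub_zero] at hy ⊢
    have h1 : ‖y‖ ^ 2 ≤ R ^ 2 := by gcongr
    have h2 : 4 * (4 * Λ / R ^ 2) ^ 2 * ‖y‖ ^ 2 ≤ 64 * Λ ^ 2 / R ^ 2 := by
      calc 4 * (4 * Λ / R ^ 2) ^ 2 * ‖y‖ ^ 2 ≤ 4 * (4 * Λ / R ^ 2) ^ 2 * R ^ 2 := by gcongr
        _ = 64 * Λ ^ 2 / R ^ 2 := by field_simp; ring
    have h3 : 2 * n * (4 * Λ / R ^ 2) ≤ 8 * n * Λ ^ 2 / R ^ 2 := by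
      rw [mul_div_assoc', div_le_div_iff_of_pos_right hR2]
      have : Λ ≤ Λ ^ 2 := by nlinarith
      have hn : (0 : ℝ) ≤ 8 * n := by positivity
      nlinarith
    have h4 : 0 < Λ ^ 2 / R ^ 2 := by positivity
    have h5 : (8 * n + 65) * Λ ^ 2 / R ^ 2 =
        64 * Λ ^ 2 / R ^ 2 + 8 * n * Λ ^ 2 / R ^ 2 + Λ ^ 2 / R ^ 2 := by ring
    linarith

theorem hasDerivAt_rpow_neg_quarter {t : ℝ} (ht : 0 < t) :
    HasDerivAt (fun s : ℝ => s ^ (-(1 / 4) : ℝ)) (-(1 / 4) * (t ^ (-(1 / 4) : ℝ)) ^ 5) t := by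
  refine (Real.hasDerivAt_rpow_const (p := (-(1 / 4) : ℝ)) (Or.inl ht.ne')).congr_deriv ?_
  rw [← Real.rpow_natCast, ← Real.rpow_mul ht.le]
  norm_num

/-- A subsolution vanishing initially and bounded by `exp (B t^(-1/4))` is at most `1` at the
centre of the ball for short times. -/
theorem IsHeatSubsolution.le_one_of_le_exp {n : ℕ}
    {w : ℝ → EuclideanSpace ℝ (Fin n) → ℝ} (hw : IsHeatSubsolution w)
    {x₀ : EuclideanSpace ℝ (Fin n)} {B : ℝ} (hB : 0 ≤ B)
    (hbound : ∀ t ∈ Ioo (0 : ℝ) 1, ∀ x ∈ closedBall x₀ 1,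
      w t x ≤ Real.exp (B * t ^ (-(1 / 4) : ℝ)))
    (hinit : ∀ ε > 0, ∃ δ > 0, ∀ t ∈ Ioo (0 : ℝ) δ, ∀ x ∈ closedBall x₀ 1, w t x ≤ ε)
    {t : ℝ} (ht : t ∈ Ioo (0 : ℝ) 1)
    (hsmall : 4 * (B / 2 + 2 * n + 4) ≤ t ^ (-(1 / 4) : ℝ)) : w t x₀ ≤ 1 := by
  refine le_of_forall_pos_le_add fun ε hε => ?_
  obtain ⟨δ, hδ, hinit⟩ := hinit ε hε
  set t₀ := min t (δ / 2) with ht₀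
  have h0 : 0 < t₀ := lt_min ht.1 (by linarith)
  set D : ℝ := B / 2 + 2 * n + 4 with hD
  have hy1 : ∀ r ∈ Icc t₀ t, 1 ≤ r ^ (-(1 / 4) : ℝ) := fun r hr =>
    Real.one_le_rpow_of_pos_of_le_one_of_nonpos (h0.trans_le hr.1) (hr.2.trans ht.2.le)
      (by norm_num)
  have key := hw.le_barrier (x₀ := x₀) (R := 1) (A := ε) h0 ht.2
    (α := fun r => (r ^ (-(1 / 4) : ℝ)) ^ 2)
    (α' := fun r => -(1 / 2) * (r ^ (-(1 / 4) : ℝ)) ^ 6)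
    (β := fun r => 4 * D * r ^ (-(1 / 4) : ℝ) - (r ^ (-(1 / 4) : ℝ)) ^ 2)
    (β' := fun r => (1 / 2) * (r ^ (-(1 / 4) : ℝ)) ^ 6 - D * (r ^ (-(1 / 4) : ℝ)) ^ 5)
    (fun r hr => by
      refine ((hasDerivAt_rpow_neg_quarter (h0.trans_le hr.1)).pow 2).congr_deriv ?_
      push_cast
      ring)
    (fun r hr => by
      have h := hasDerivAt_rpow_neg_quarter (h0.trans_le hr.1)
      refine ((h.const_mul (4 * D)).sub (h.pow 2)).congr_deriv ?_
      push_cast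
      ring)
    (fun y hy => hinit t₀ ⟨h0, by linarith [min_le_right t (δ / 2)]⟩ y hy)
    ?_ ?_ t ⟨min_le_left _ _, le_rfl⟩ x₀ (by simp)
  · refine key.trans ?_
    rw [add_comm]
    gcongr
    rw [Real.exp_le_one_iff]
    simp only [sub_self, norm_zero]
    nlinarith [hy1 t ⟨min_le_left _ _, le_rfl⟩]
  · intro r hr y hy
    refine (hbound r ⟨h0.trans_le hr.1, hr.2.trans_lt ht.2⟩ y
      (mem_closedBall_iff_norm.2 hy.le)).trans ?_
    refine le_add_of_nonneg_of_le hε.le (Real.exp_le_exp.2 ?_)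
    have h1 := hy1 r hr
    have h2 : B ≤ 4 * D := by
      have : (0 : ℝ) ≤ n := by positivity
      rw [hD]; linarith
    nlinarith
  · intro r hr y hy hlt
    have hr' : r ∈ Icc t₀ t := ⟨hr.1.le, hr.2⟩
    have h1 := hy1 r hr'
    have hb := hbound r ⟨h0.trans_le hr'.1, hr.2.trans_lt ht.2⟩ y (mem_closedBall_iff_norm.2 hy.le)
    set Y := r ^ (-(1 / 4) : ℝ) with hY
    set q := ‖y - x₀‖ ^ 2 with hq
    have hq1 : q ≤ 1 := by
      have : ‖y - x₀‖ ^ 2 ≤ 1 ^ 2 := by gcongr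
      simpa only [one_pow] using this
    have hlt2 : Real.exp (Y ^ 2 * q + (4 * D * Y - Y ^ 2)) < Real.exp (B * Y) := by linarith
    rw [Real.exp_lt_exp] at hlt2
    have h3 : 4 * D - B < Y * (1 - q) := by
      have : Y * (4 * D - B) < Y * (Y * (1 - q)) := by linarith
      exact lt_of_mul_lt_mul_left this (by linarith)
    have h4 : Y ^ 5 * (4 * D - B) < Y ^ 5 * (Y * (1 - q)) :=
      mul_lt_mul_of_pos_left h3 (by positivity)
    have h5 : Y ^ 4 ≤ Y ^ 5 := pow_le_pow_right₀ h1 (by norm_num)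
    have h6 : Y ^ 2 ≤ Y ^ 5 := pow_le_pow_right₀ h1 (by norm_num)
    have h7 : 4 * (Y ^ 2) ^ 2 * q ≤ 4 * Y ^ 5 := by
      have : Y ^ 4 * q ≤ Y ^ 4 * 1 := by gcongr
      nlinarith
    have h8 : 2 * n * Y ^ 2 ≤ 2 * n * Y ^ 5 := by gcongr
    have h9 : Y ^ 5 * D = Y ^ 5 * (B / 2) + 2 * n * Y ^ 5 + 4 * Y ^ 5 := by rw [hD]; ring
    nlinarith

/-- A subsolution vanishing initially and bounded by `exp m * t^(-N)` is bounded, uniformly in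
time, by the exponential of an affine function of `m`. -/
theorem IsHeatSubsolution.le_exp_of_le_rpow {n : ℕ}
    {w : ℝ → EuclideanSpace ℝ (Fin n) → ℝ} (hw : IsHeatSubsolution w)
    {x₀ : EuclideanSpace ℝ (Fin n)} {m N : ℝ} (hm : 0 ≤ m) (hN : 0 ≤ N)
    (hbound : ∀ t ∈ Ioo (0 : ℝ) 1, ∀ x ∈ closedBall x₀ 1, w t x ≤ Real.exp m * t ^ (-N))
    (hinit : ∀ ε > 0, ∃ δ > 0, ∀ t ∈ Ioo (0 : ℝ) δ, ∀ x ∈ closedBall x₀ 1, w t x ≤ ε)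
    {t : ℝ} (ht : t ∈ Ioo (0 : ℝ) 1) :
    w t x₀ ≤ Real.exp (m + 16 * N * (m / 2 + 2 * N + 2 * n + 4)) := by
  have hrpow : ∀ r ∈ Ioo (0 : ℝ) 1, r ^ (-N) ≤ Real.exp (4 * N * r ^ (-(1 / 4) : ℝ)) := by
    intro r hr
    have hy : 0 < r ^ (-(1 / 4) : ℝ) := Real.rpow_pos_of_pos hr.1 _
    have : r ^ (-N) = Real.exp (4 * N * Real.log (r ^ (-(1 / 4) : ℝ))) := by
      rw [Real.log_rpow hr.1, Real.rpow_def_of_pos hr.1]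
      congr 1
      ring
    rw [this]
    gcongr
    exact (Real.log_le_sub_one_of_pos hy).trans (by linarith)
  have hn : (0 : ℝ) ≤ n := by positivity
  by_cases hsmall : 4 * ((m + 4 * N) / 2 + 2 * n + 4) ≤ t ^ (-(1 / 4) : ℝ)
  · refine (hw.le_one_of_le_exp (B := m + 4 * N) (by positivity) ?_ hinit ht hsmall).trans ?_
    · intro r hr x hx
      have h1 : 1 ≤ r ^ (-(1 / 4) : ℝ) :=
        Real.one_le_rpow_of_pos_of_le_one_of_nonpos hr.1 hr.2.le (by norm_num)
      calc w r x ≤ Real.exp m * r ^ (-N) := hbound r hr x hx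
        _ ≤ Real.exp (m * r ^ (-(1 / 4) : ℝ)) * Real.exp (4 * N * r ^ (-(1 / 4) : ℝ)) := by
          gcongr
          · exact Real.rpow_nonneg hr.1.le _
          · nlinarith
          · exact hrpow r hr
        _ = _ := by rw [← Real.exp_add]; ring_nf
    · exact Real.one_le_exp (by positivity)
  · push Not at hsmall
    calc w t x₀ ≤ Real.exp m * t ^ (-N) := hbound t ht x₀ (by simp)
      _ ≤ Real.exp m * Real.exp (4 * N * (4 * ((m + 4 * N) / 2 + 2 * n + 4))) := by
        gcongr
        exact (hrpow t ht).trans (by gcongr)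
      _ = _ := by rw [← Real.exp_add]; ring_nf

/-- Täcklind's uniqueness argument: a subsolution that vanishes initially and is bounded by
`exp (Λ k)` on the ball of radius `2 ^ k`, where `∑ 4 ^ k / Λ k` diverges, is nonpositive. -/
theorem IsHeatSubsolution.nonpos_of_not_summable {n : ℕ}
    {w : ℝ → EuclideanSpace ℝ (Fin n) → ℝ} (hw : IsHeatSubsolution w)
    {Λ : ℕ → ℝ} (hΛ1 : ∀ k, 1 ≤ Λ k) (hΛk : ∀ k : ℕ, (k : ℝ) ≤ Λ k)
    (hbound : ∀ k, ∀ t ∈ Ioo (0 : ℝ) 1, ∀ x, ‖x‖ ≤ 2 ^ k → w t x ≤ Real.exp (Λ k))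
    (hinit : ∀ R, ∀ ε > 0, ∃ δ > 0, ∀ t ∈ Ioo (0 : ℝ) δ, ∀ x, ‖x‖ ≤ R → w t x ≤ ε)
    (hdiv : ¬ Summable fun k : ℕ => (4 : ℝ) ^ k / Λ k)
    {t : ℝ} (ht : t ∈ Ioo (0 : ℝ) 1) (x : EuclideanSpace ℝ (Fin n)) : w t x ≤ 0 := by
  have hc : (0 : ℝ) < 8 * n + 65 := by positivity
  have hΛ0 : ∀ k, 0 < Λ k := fun k => one_pos.trans_le (hΛ1 k)
  set d : ℕ → ℝ := fun k => 4 ^ k / Λ k / (8 * n + 65) with hd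
  have hd0 : ∀ k, 0 ≤ d k := fun k => by have := hΛ0 k; positivity
  have hexp : ∀ k : ℕ, Real.exp (-Λ k) ≤ (1 / 2) ^ k := by
    intro k
    have h2 : (2 : ℝ) ≤ Real.exp 1 := by linarith [Real.add_one_le_exp 1]
    calc Real.exp (-Λ k) ≤ Real.exp (-k) := by gcongr; exact hΛk k
      _ = (Real.exp 1)⁻¹ ^ k := by rw [inv_pow, ← Real.exp_nat_mul, mul_one, Real.exp_neg]
      _ ≤ (1 / 2) ^ k := by
        rw [one_div]
        gcongr
  have iter : ∀ K j : ℕ, ∀ s A : ℝ, 0 ≤ A → 0 < s → s ≤ t →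
      t - s ≤ ∑ i ∈ Finset.range j, d (i + K) →
      (∀ x, ‖x‖ ≤ 2 ^ (j + K) / 2 → w s x ≤ A) →
      ∀ x, ‖x‖ ≤ 2 ^ K / 2 → w t x ≤ A + 2 * (1 / 2) ^ K - 2 * (1 / 2) ^ (j + K) := by
    intro K j
    induction j with
    | zero =>
      intro s A hA hs hst hlen hA' x hx
      have : t = s := by
        simp at hlen
        linarith
      subst this
      simpa using hA' x (by simpa using hx)
    | succ j ih =>
      intro s A hA hs hst hlen hA' x hx
      rw [Finset.sum_range_succ] at hlen
      set s' := min t (s + d (j + K)) with hs'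
      have hss' : s ≤ s' := le_min hst (by linarith [hd0 (j + K)])
      have hstep := hw.le_add_exp_neg (R := 2 ^ (j + K)) hs hss'
        ((min_le_left _ _).trans_lt ht.2) (by positivity) hA (hΛ1 (j + K)) ?_
        (hbound (j + K)) ?_
      · have := ih s' (A + (1 / 2) ^ (j + K)) (by positivity) (hs.trans_le hss')
          (min_le_left _ _) ?_ (fun y hy => (hstep y hy).trans (by gcongr; exact hexp _)) x hx
        · refine this.trans (le_of_eq ?_)
          rw [show j + 1 + K = (j + K) + 1 by ring, pow_succ]
          ring
        · rcases min_choice t (s + d (j + K)) with h | h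
          · rw [hs', h, sub_self]
            exact Finset.sum_nonneg fun i _ => hd0 _
          · rw [hs', h]
            linarith
      · have h1 : s' - s ≤ d (j + K) := by linarith [min_le_right t (s + d (j + K))]
        have h2 : 0 < (8 * n + 65) * Λ (j + K) := mul_pos hc (hΛ0 _)
        calc (8 * n + 65) * Λ (j + K) * (s' - s) ≤ (8 * n + 65) * Λ (j + K) * d (j + K) := by
              gcongr
          _ = 4 ^ (j + K) := by
            have := (hΛ0 (j + K)).ne'
            rw [hd]
            field_simp
          _ = (2 ^ (j + K)) ^ 2 := by rw [← pow_mul, mul_comm, pow_mul]; norm_num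
      · intro y hy
        refine hA' y (hy.trans (le_of_eq ?_))
        rw [show j + 1 + K = (j + K) + 1 by ring, pow_succ]
        ring
  have hsmall : ∀ K : ℕ, ‖x‖ ≤ 2 ^ K / 2 → w t x ≤ 2 * (1 / 2) ^ K := by
    intro K hK
    refine le_of_forall_pos_le_add fun ε hε => ?_
    have hnot : ¬ Summable fun i => d (i + K) := by
      rw [summable_nat_add_iff K]
      intro h
      apply hdiv
      have := h.mul_right (8 * (n : ℝ) + 65)
      refine this.congr fun k => ?_
      rw [hd]
      field_simp
    have htend := (not_summable_iff_tendsto_nat_atTop_of_nonneg fun i => hd0 (i + K)).1 hnot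
    obtain ⟨j, hj⟩ := (htend.eventually_ge_atTop t).exists
    obtain ⟨δ, hδ, hδ'⟩ := hinit (2 ^ (j + K) / 2) ε hε
    have hs0 : 0 < min t (δ / 2) := lt_min ht.1 (by linarith)
    have := iter K j (min t (δ / 2)) ε hε.le hs0 (min_le_left _ _) (by linarith)
      (hδ' _ ⟨hs0, (min_le_right _ _).trans_lt (by linarith)⟩) x hK
    have h0 : (0 : ℝ) ≤ 2 * (1 / 2) ^ (j + K) := by positivity
    linarith
  have hlim : Tendsto (fun K : ℕ => 2 * (1 / 2 : ℝ) ^ K) atTop (nhds 0) := by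
    simpa using (tendsto_pow_atTop_nhds_zero_of_lt_one (r := (1 / 2 : ℝ)) (by norm_num)
      (by norm_num)).const_mul 2
  refine ge_of_tendsto hlim ?_
  have h2 : Tendsto (fun K : ℕ => (2 : ℝ) ^ K / 2) atTop atTop :=
    (tendsto_pow_atTop_atTop_of_one_lt (by norm_num)).atTop_div_const (by norm_num)
  filter_upwards [h2.eventually_ge_atTop ‖x‖] with K hK using hsmall K hK

theorem not_summable_div_affine {ℓ : ℕ → ℝ} (hℓ : ∀ k, 0 < ℓ k) {C₁ C₂ : ℝ} (hC₁ : 0 ≤ C₁)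
    (hC₂ : 0 ≤ C₂) (h : ¬ Summable fun k : ℕ => (4 : ℝ) ^ k / ℓ k) :
    ¬ Summable fun k : ℕ => (4 : ℝ) ^ k / (k + 1 + C₁ * ℓ k + C₂) := by
  intro hs
  apply h
  have hC : 0 < 2 + C₁ + C₂ := by positivity
  have hk : ∀ k : ℕ, (k : ℝ) ≤ 4 ^ k := fun k => by
    exact_mod_cast (Nat.lt_pow_self (by norm_num : 1 < 4)).le
  have h1 : ∀ k : ℕ, (1 : ℝ) ≤ 4 ^ k := fun k => one_le_pow₀ (by norm_num)
  refine Summable.of_norm_bounded_eventually_nat (hs.mul_left (2 + C₁ + C₂)) ?_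
  filter_upwards [hs.tendsto_atTop_zero.eventually_lt_const
    (show (0 : ℝ) < 1 / (2 + C₁ + C₂) by positivity)] with k hlt
  have hden : 0 < k + 1 + C₁ * ℓ k + C₂ := by have := hℓ k; positivity
  rw [div_lt_div_iff₀ hden hC] at hlt
  have hbig : (4 : ℝ) ^ k ≤ ℓ k := by
    by_contra! hcon
    have := mul_le_mul_of_nonneg_left hcon.le hC₁
    have := mul_le_mul_of_nonneg_left (h1 k) hC₂
    linarith [hk k, h1 k]
  rw [Real.norm_of_nonneg (by have := hℓ k; positivity), mul_div_assoc',
    div_le_div_iff₀ (hℓ k) hden, mul_comm (2 + C₁ + C₂), mul_assoc]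
  gcongr
  have := mul_le_mul_of_nonneg_left ((h1 k).trans hbig) hC₂
  linarith [hk k, h1 k]

/-- Dyadic form of the divergence of `∫ r / L r`. -/
theorem not_summable_four_pow_div {L : ℝ → ℝ} (hL_pos : ∀ r > (0 : ℝ), 0 < L r)
    (hL_mono : ∀ r s : ℝ, 0 < r → r ≤ s → L r ≤ L s)
    (hL_div : ∫⁻ r in Ioi (1 : ℝ), ENNReal.ofReal (r / L r) = ⊤) :
    ¬ Summable fun k : ℕ => (4 : ℝ) ^ k / L (2 ^ k) := by
  intro hs
  have hcover : Ioi (1 : ℝ) ⊆ ⋃ k : ℕ, Icc ((2 : ℝ) ^ k) (2 ^ (k + 1)) := by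
    intro r hr
    obtain ⟨k, h1, h2⟩ := exists_nat_pow_near (le_of_lt (mem_Ioi.1 hr)) (one_lt_two : (1 : ℝ) < 2)
    exact mem_iUnion.2 ⟨k, h1, h2.le⟩
  have hnonneg : ∀ k : ℕ, 0 ≤ (4 : ℝ) ^ k / L (2 ^ k) := fun k =>
    div_nonneg (by positivity) (hL_pos _ (by positivity)).le
  have hpiece : ∀ k : ℕ, ∫⁻ r in Icc ((2 : ℝ) ^ k) (2 ^ (k + 1)), ENNReal.ofReal (r / L r) ≤
      ENNReal.ofReal (2 * ((4 : ℝ) ^ k / L (2 ^ k))) := by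
    intro k
    have hp : (0 : ℝ) < 2 ^ k := by positivity
    calc ∫⁻ r in Icc ((2 : ℝ) ^ k) (2 ^ (k + 1)), ENNReal.ofReal (r / L r)
        ≤ ∫⁻ _ in Icc ((2 : ℝ) ^ k) (2 ^ (k + 1)), ENNReal.ofReal (2 ^ (k + 1) / L (2 ^ k)) := by
          refine setLIntegral_mono measurable_const fun r hr => ?_
          refine ENNReal.ofReal_le_ofReal ?_
          have := hL_pos _ hp
          have := hL_mono _ _ hp hr.1
          gcongr
          exact hr.2
      _ = ENNReal.ofReal (2 * ((4 : ℝ) ^ k / L (2 ^ k))) := by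
          rw [setLIntegral_const, Real.volume_Icc, ← ENNReal.ofReal_mul
            (div_nonneg (by positivity) (hL_pos _ hp).le)]
          congr 1
          rw [show (4 : ℝ) ^ k = 2 ^ k * 2 ^ k by rw [← mul_pow]; norm_num, pow_succ]
          ring
  have : ∫⁻ r in Ioi (1 : ℝ), ENNReal.ofReal (r / L r) < ⊤ := calc
    _ ≤ ∫⁻ r in ⋃ k : ℕ, Icc ((2 : ℝ) ^ k) (2 ^ (k + 1)), ENNReal.ofReal (r / L r) :=
      lintegral_mono_set hcover
    _ ≤ ∑' k : ℕ, ∫⁻ r in Icc ((2 : ℝ) ^ k) (2 ^ (k + 1)), ENNReal.ofReal (r / L r) :=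
      lintegral_iUnion_le _ _
    _ ≤ ∑' k : ℕ, ENNReal.ofReal (2 * ((4 : ℝ) ^ k / L (2 ^ k))) := ENNReal.tsum_le_tsum hpiece
    _ = ENNReal.ofReal (∑' k : ℕ, 2 * ((4 : ℝ) ^ k / L (2 ^ k))) :=
      (ENNReal.ofReal_tsum_of_nonneg (fun k => mul_nonneg two_pos.le (hnonneg k))
        (hs.mul_left 2)).symm
    _ < ⊤ := ENNReal.ofReal_lt_top
  exact this.ne hL_div

/-- The spatial Laplacian of a function of `(t, x)`. -/
noncomputable def spaceLap {n : ℕ} (f : ℝ × EuclideanSpace ℝ (Fin n) → ℝ)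
    (p : ℝ × EuclideanSpace ℝ (Fin n)) : ℝ :=
  ∑ i : Fin n, fderiv ℝ (fun q => fderiv ℝ f q (0, EuclideanSpace.single i (1 : ℝ))) p
    (0, EuclideanSpace.single i (1 : ℝ))

theorem isOpen_timeStrip {E : Type*} [TopologicalSpace E] :
    IsOpen (Ioo (0 : ℝ) 1 ×ˢ (univ : Set E)) := isOpen_Ioo.prod isOpen_univ

theorem ContDiffOn.fderiv_apply_of_isOpen {E F : Type*} [NormedAddCommGroup E] [NormedSpace ℝ E]
    [NormedAddCommGroup F] [NormedSpace ℝ F] {f : E → F} {s : Set E}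
    (hf : ContDiffOn ℝ (⊤ : ℕ∞) f s) (hs : IsOpen s) (v : E) :
    ContDiffOn ℝ (⊤ : ℕ∞) (fun p => fderiv ℝ f p v) s :=
  (hf.fderiv_of_isOpen hs (by simp)).clm_apply contDiffOn_const

theorem ContDiffOn.differentiableAt_of_isOpen {E F : Type*} [NormedAddCommGroup E]
    [NormedSpace ℝ E] [NormedAddCommGroup F] [NormedSpace ℝ F] {f : E → F} {s : Set E} {p : E}
    (hf : ContDiffOn ℝ (⊤ : ℕ∞) f s) (hs : IsOpen s) (hp : p ∈ s) : DifferentiableAt ℝ f p :=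
  (hf.contDiffAt (hs.mem_nhds hp)).differentiableAt (by simp)

theorem DifferentiableAt.hasDerivAt_fst {E : Type*} [NormedAddCommGroup E]
    [NormedSpace ℝ E] {f : ℝ × E → ℝ} {t : ℝ} {x : E} (hf : DifferentiableAt ℝ f (t, x)) :
    HasDerivAt (fun s => f (s, x)) (fderiv ℝ f (t, x) (1, 0)) t :=
  hf.hasFDerivAt.comp_hasDerivAt t ((hasDerivAt_id t).prodMk (hasDerivAt_const t x))

theorem DifferentiableAt.hasDerivAt_snd_line {E : Type*} [NormedAddCommGroup E]
    [NormedSpace ℝ E] {f : ℝ × E → ℝ} {t s : ℝ} {x y e : E}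
    (hf : DifferentiableAt ℝ f (t, x + s • e + y)) :
    HasDerivAt (fun s : ℝ => f (t, x + s • e + y)) (fderiv ℝ f (t, x + s • e + y) (0, e)) s := by
  have h : HasDerivAt (fun s : ℝ => (t, x + s • e + y)) (0, e) s := by
    have h1 := ((((hasDerivAt_id s).smul_const e).const_add x).add_const y)
    have h2 := (hasDerivAt_const s t).prodMk h1
    simpa using h2
  exact hf.hasFDerivAt.comp_hasDerivAt s h

theorem DifferentiableAt.fderiv_snd {E : Type*} [NormedAddCommGroup E]
    [NormedSpace ℝ E] {f : ℝ × E → ℝ} {t : ℝ} {x y e : E}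
    (hf : DifferentiableAt ℝ f (t, x + y)) :
    fderiv ℝ (fun z => f (t, x + z)) y e = fderiv ℝ f (t, x + y) (0, e) := by
  have h : HasFDerivAt (fun z : E => (t, x + z)) (ContinuousLinearMap.inr ℝ ℝ E) y := by
    have h2 := (hasFDerivAt_const (𝕜 := ℝ) t y).prodMk ((hasFDerivAt_id (𝕜 := ℝ) y).const_add x)
    convert h2 using 1 <;> rfl
  have h3 := (hf.hasFDerivAt.comp y h).fderiv
  have h4 : (f ∘ fun z : E => (t, x + z)) = fun z => f (t, x + z) := rfl
  rw [h4] at h3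
  rw [h3]
  simp

theorem heatLap_slice {n : ℕ} {f : ℝ × EuclideanSpace ℝ (Fin n) → ℝ}
    (hf : ContDiffOn ℝ (⊤ : ℕ∞) f (Ioo (0 : ℝ) 1 ×ˢ univ)) {t : ℝ} (ht : t ∈ Ioo (0 : ℝ) 1)
    (x y : EuclideanSpace ℝ (Fin n)) :
    heatLap (fun z => f (t, x + z)) y = spaceLap f (t, x + y) := by
  refine Finset.sum_congr rfl fun i _ => ?_
  have h1 : (fun z => fderiv ℝ (fun z => f (t, x + z)) z (EuclideanSpace.single i (1 : ℝ))) =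
      fun z => fderiv ℝ f (t, x + z) (0, EuclideanSpace.single i (1 : ℝ)) :=
    funext fun z => (hf.differentiableAt_of_isOpen isOpen_timeStrip
      (show (t, x + z) ∈ _ from ⟨ht, mem_univ _⟩)).fderiv_snd
  rw [h1]
  exact ((hf.fderiv_apply_of_isOpen isOpen_timeStrip _).differentiableAt_of_isOpen
    isOpen_timeStrip (show (t, x + y) ∈ _ from ⟨ht, mem_univ _⟩)).fderiv_snd

/-- Differentiation under an integral with compactly supported integrand. -/
theorem hasDerivAt_integral_of_compact_support {E : Type*} [NormedAddCommGroup E]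
    [MeasurableSpace E] [BorelSpace E] [SecondCountableTopology E] {μ : Measure E}
    [IsFiniteMeasureOnCompacts μ]
    {F F' : ℝ → E → ℝ} {I : Set ℝ} {k : Set E} {s₀ : ℝ} (hI : IsOpen I) (hs₀ : s₀ ∈ I)
    (hk : IsCompact k) (hF : ∀ s ∈ I, Continuous (F s))
    (hF' : ContinuousOn (fun p : ℝ × E => F' p.1 p.2) (I ×ˢ univ))
    (hderiv : ∀ s ∈ I, ∀ y, HasDerivAt (fun s => F s y) (F' s y) s)
    (hFk : ∀ s ∈ I, ∀ y, y ∉ k → F s y = 0) (hF'k : ∀ s ∈ I, ∀ y, y ∉ k → F' s y = 0) :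
    HasDerivAt (fun s => ∫ y, F s y ∂μ) (∫ y, F' s₀ y ∂μ) s₀ := by
  obtain ⟨ε, hε, hball⟩ := Metric.nhds_basis_closedBall.mem_iff.1 (hI.mem_nhds hs₀)
  obtain ⟨C, hC⟩ := ((isCompact_closedBall s₀ ε).prod hk).exists_bound_of_continuousOn
    (hF'.mono (prod_mono hball (subset_univ k)))
  have hF's : Continuous (F' s₀) := by
    rw [← continuousOn_univ]
    exact hF'.comp (f := fun y => (s₀, y)) (by fun_prop) fun y _ => ⟨hs₀, mem_univ y⟩
  refine (hasDerivAt_integral_of_dominated_loc_of_deriv_le (s := closedBall s₀ ε)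
    (bound := k.indicator fun _ => C) (closedBall_mem_nhds s₀ hε) ?_ ?_ ?_ ?_ ?_ ?_).2
  · filter_upwards [hI.mem_nhds hs₀] with s hs using (hF s hs).aestronglyMeasurable
  · exact (hF s₀ hs₀).integrable_of_hasCompactSupport (HasCompactSupport.intro hk (hFk s₀ hs₀))
  · exact hF's.aestronglyMeasurable
  · refine ae_of_all _ fun y s hs => ?_
    by_cases hy : y ∈ k
    · rw [indicator_of_mem hy]
      exact hC (s, y) ⟨hs, hy⟩
    · rw [indicator_of_notMem hy, hF'k s (hball hs) y hy, norm_zero]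
  · exact (integrable_indicator_iff hk.measurableSet).2 (integrableOn_const hk.measure_ne_top)
  · exact ae_of_all _ fun y s hs => hderiv s (hball hs) y

theorem integral_heatLap_mul {n : ℕ} {h φ : EuclideanSpace ℝ (Fin n) → ℝ}
    (hh : ContDiff ℝ (⊤ : ℕ∞) h) (hφ : ContDiff ℝ (⊤ : ℕ∞) φ) (hc : HasCompactSupport φ) :
    ∫ y, heatLap h y * φ y = ∫ y, h y * heatLap φ y := by
  have hdir : ∀ {g : EuclideanSpace ℝ (Fin n) → ℝ} (v : EuclideanSpace ℝ (Fin n)),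
      ContDiff ℝ (⊤ : ℕ∞) g → ContDiff ℝ (⊤ : ℕ∞) fun y => fderiv ℝ g y v := fun v hg =>
    (hg.fderiv_right (by simp)).clm_apply contDiff_const
  have hcdir : ∀ {g : EuclideanSpace ℝ (Fin n) → ℝ} (v : EuclideanSpace ℝ (Fin n)),
      HasCompactSupport g → HasCompactSupport fun y => fderiv ℝ g y v := fun v hg =>
    hg.fderiv_apply ℝ v
  have hint : ∀ {g k : EuclideanSpace ℝ (Fin n) → ℝ}, ContDiff ℝ (⊤ : ℕ∞) g →
      ContDiff ℝ (⊤ : ℕ∞) k → HasCompactSupport k → Integrable fun y => g y * k y :=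
    fun hg hk hkc => (hg.continuous.mul hk.continuous).integrable_of_hasCompactSupport
      hkc.mul_left
  have hparts : ∀ {g k : EuclideanSpace ℝ (Fin n) → ℝ} (v : EuclideanSpace ℝ (Fin n)),
      ContDiff ℝ (⊤ : ℕ∞) g → ContDiff ℝ (⊤ : ℕ∞) k → HasCompactSupport k →
      ∫ y, g y * fderiv ℝ k y v = -∫ y, fderiv ℝ g y v * k y := fun v hg hk hkc =>
    integral_mul_fderiv_eq_neg_fderiv_mul_of_integrable (hint (hdir v hg) hk hkc)
      (hint hg (hdir v hk) (hcdir v hkc)) (hint hg hk hkc)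
      (fun y _ => hg.differentiable (by simp) y) (fun y _ => hk.differentiable (by simp) y)
  simp only [heatLap, Finset.sum_mul, Finset.mul_sum]
  rw [integral_finsetSum _ fun i _ => hint (hdir _ (hdir _ hh)) hφ hc,
    integral_finsetSum _ fun i _ => hint hh (hdir _ (hdir _ hφ)) (hcdir _ (hcdir _ hc))]
  refine Finset.sum_congr rfl fun i _ => ?_
  rw [hparts _ hh (hdir _ hφ) (hcdir _ hc), hparts _ (hdir _ hh) hφ hc, neg_neg]

/-- The spatial mollification of `f` by `φ`. -/
noncomputable def spaceMollify {n : ℕ} (f : ℝ × EuclideanSpace ℝ (Fin n) → ℝ)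
    (φ : EuclideanSpace ℝ (Fin n) → ℝ) (t : ℝ) (x : EuclideanSpace ℝ (Fin n)) : ℝ :=
  ∫ y, f (t, x + y) * φ y

section Mollify

variable {n : ℕ} {f : ℝ × EuclideanSpace ℝ (Fin n) → ℝ} {φ : EuclideanSpace ℝ (Fin n) → ℝ}

theorem continuous_slice (hf : ContinuousOn f (Ioo (0 : ℝ) 1 ×ˢ univ)) {t : ℝ}
    (ht : t ∈ Ioo (0 : ℝ) 1) (x : EuclideanSpace ℝ (Fin n)) :
    Continuous fun y => f (t, x + y) := by
  rw [← continuousOn_univ]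
  exact hf.comp (f := fun y => (t, x + y)) (by fun_prop) fun y _ => ⟨ht, mem_univ _⟩

theorem integrable_slice_mul (hf : ContinuousOn f (Ioo (0 : ℝ) 1 ×ˢ univ)) (hφ : Continuous φ)
    (hc : HasCompactSupport φ) {t : ℝ} (ht : t ∈ Ioo (0 : ℝ) 1)
    (x : EuclideanSpace ℝ (Fin n)) : Integrable fun y => f (t, x + y) * φ y :=
  ((continuous_slice hf ht x).mul hφ).integrable_of_hasCompactSupport hc.mul_left

theorem continuousOn_spaceMollify (hf : ContinuousOn f (Ioo (0 : ℝ) 1 ×ˢ univ))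
    (hφ : Continuous φ) (hc : HasCompactSupport φ) :
    ContinuousOn (fun p : ℝ × EuclideanSpace ℝ (Fin n) => spaceMollify f φ p.1 p.2)
      (Ioo (0 : ℝ) 1 ×ˢ univ) := by
  refine continuousOn_integral_of_compact_support
    (f := fun (p : ℝ × EuclideanSpace ℝ (Fin n)) y => f (p.1, p.2 + y) * φ y) hc ?_ ?_
  · refine ContinuousOn.mul (hf.comp
      (f := fun q : (ℝ × EuclideanSpace ℝ (Fin n)) × EuclideanSpace ℝ (Fin n) =>
        (q.1.1, q.1.2 + q.2)) (by fun_prop) fun q hq => ⟨hq.1.1, mem_univ _⟩) (by fun_prop)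
  · intro p y _ hy
    simp [image_eq_zero_of_notMem_tsupport hy]

theorem hasDerivAt_spaceMollify_time (hf : ContDiffOn ℝ (⊤ : ℕ∞) f (Ioo (0 : ℝ) 1 ×ˢ univ))
    (hφ : Continuous φ) (hc : HasCompactSupport φ) {t : ℝ} (ht : t ∈ Ioo (0 : ℝ) 1)
    (x : EuclideanSpace ℝ (Fin n)) :
    HasDerivAt (fun s => spaceMollify f φ s x)
      (spaceMollify (fun p => fderiv ℝ f p (1, 0)) φ t x) t := by
  refine hasDerivAt_integral_of_compact_support (F := fun s y => f (s, x + y) * φ y)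
    (F' := fun s y => fderiv ℝ f (s, x + y) (1, 0) * φ y) isOpen_Ioo ht hc ?_ ?_ ?_ ?_ ?_
  · exact fun s hs => (continuous_slice hf.continuousOn hs x).mul hφ
  · refine ContinuousOn.mul ((hf.fderiv_apply_of_isOpen isOpen_timeStrip (1, 0)).continuousOn.comp
      (f := fun q : ℝ × EuclideanSpace ℝ (Fin n) => (q.1, x + q.2)) (by fun_prop)
      fun q hq => ⟨hq.1, mem_univ _⟩) (by fun_prop)
  · exact fun s hs y => (hf.differentiableAt_of_isOpen isOpen_timeStrip
      (show (s, x + y) ∈ _ from ⟨hs, mem_univ _⟩)).hasDerivAt_fst.mul_const _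
  all_goals
    intro s _ y hy
    simp [image_eq_zero_of_notMem_tsupport hy]

theorem hasDerivAt_spaceMollify_space (hf : ContDiffOn ℝ (⊤ : ℕ∞) f (Ioo (0 : ℝ) 1 ×ˢ univ))
    (hφ : Continuous φ) (hc : HasCompactSupport φ) {t : ℝ} (ht : t ∈ Ioo (0 : ℝ) 1)
    (x e : EuclideanSpace ℝ (Fin n)) (s : ℝ) :
    HasDerivAt (fun s : ℝ => spaceMollify f φ t (x + s • e))
      (spaceMollify (fun p => fderiv ℝ f p (0, e)) φ t (x + s • e)) s := by
  refine hasDerivAt_integral_of_compact_support (F := fun s y => f (t, x + s • e + y) * φ y)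
    (F' := fun s y => fderiv ℝ f (t, x + s • e + y) (0, e) * φ y) isOpen_univ (mem_univ s) hc
    ?_ ?_ ?_ ?_ ?_
  · exact fun s _ => (continuous_slice hf.continuousOn ht _).mul hφ
  · refine ContinuousOn.mul ((hf.fderiv_apply_of_isOpen isOpen_timeStrip (0, e)).continuousOn.comp
      (f := fun q : ℝ × EuclideanSpace ℝ (Fin n) => (t, x + q.1 • e + q.2)) (by fun_prop)
      fun q hq => ⟨ht, mem_univ _⟩) (by fun_prop)
  · exact fun s _ y => (hf.differentiableAt_of_isOpen isOpen_timeStrip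
      (show (t, x + s • e + y) ∈ _ from ⟨ht, mem_univ _⟩)).hasDerivAt_snd_line.mul_const _
  all_goals
    intro s _ y hy
    simp [image_eq_zero_of_notMem_tsupport hy]

theorem spaceMollify_mono {g : ℝ × EuclideanSpace ℝ (Fin n) → ℝ}
    (hf : ContinuousOn f (Ioo (0 : ℝ) 1 ×ˢ univ)) (hg : ContinuousOn g (Ioo (0 : ℝ) 1 ×ˢ univ))
    (hφ : Continuous φ) (hc : HasCompactSupport φ) (hφ0 : ∀ y, 0 ≤ φ y)
    {t : ℝ} (ht : t ∈ Ioo (0 : ℝ) 1) (hfg : ∀ y, f (t, y) ≤ g (t, y))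
    (x : EuclideanSpace ℝ (Fin n)) : spaceMollify f φ t x ≤ spaceMollify g φ t x :=
  integral_mono (integrable_slice_mul hf hφ hc ht x) (integrable_slice_mul hg hφ hc ht x)
    fun y => mul_le_mul_of_nonneg_right (hfg _) (hφ0 y)

theorem continuousOn_spaceLap (hf : ContDiffOn ℝ (⊤ : ℕ∞) f (Ioo (0 : ℝ) 1 ×ˢ univ)) :
    ContinuousOn (spaceLap f) (Ioo (0 : ℝ) 1 ×ˢ univ) :=
  continuousOn_finsetSum _ fun _ _ => ((hf.fderiv_apply_of_isOpen isOpen_timeStrip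
    _).fderiv_apply_of_isOpen isOpen_timeStrip _).continuousOn

theorem isHeatSubsolution_spaceMollify
    (hf : ContDiffOn ℝ (⊤ : ℕ∞) f (Ioo (0 : ℝ) 1 ×ˢ univ))
    (hsub : ∀ t ∈ Ioo (0 : ℝ) 1, ∀ x, fderiv ℝ f (t, x) (1, 0) ≤ spaceLap f (t, x))
    (hφ : Continuous φ) (hc : HasCompactSupport φ) (hφ0 : ∀ y, 0 ≤ φ y) :
    IsHeatSubsolution (spaceMollify f φ) := by
  refine ⟨continuousOn_spaceMollify hf.continuousOn hφ hc, fun t ht x => ?_⟩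
  have hd : ∀ v, ContDiffOn ℝ (⊤ : ℕ∞) (fun p => fderiv ℝ f p v) (Ioo (0 : ℝ) 1 ×ˢ univ) :=
    fun v => hf.fderiv_apply_of_isOpen isOpen_timeStrip v
  refine ⟨_, fun i s => spaceMollify (fun p => fderiv ℝ f p (0, EuclideanSpace.single i 1)) φ t
    (x + s • EuclideanSpace.single i 1), fun i => _,
    hasDerivAt_spaceMollify_time hf hφ hc ht x,
    fun i s => hasDerivAt_spaceMollify_space hf hφ hc ht x _ s,
    fun i => hasDerivAt_spaceMollify_space (hd _) hφ hc ht x _ 0, ?_⟩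
  refine (spaceMollify_mono (hd _).continuousOn (continuousOn_spaceLap hf) hφ hc hφ0 ht
    (hsub t ht) x).trans (le_of_eq ?_)
  simp only [spaceMollify, spaceLap, Finset.sum_mul, zero_smul, add_zero]
  exact integral_finsetSum _ fun i _ => integrable_slice_mul
    ((hd _).fderiv_apply_of_isOpen isOpen_timeStrip _).continuousOn hφ hc ht x

theorem spaceMollify_spaceLap (hf : ContDiffOn ℝ (⊤ : ℕ∞) f (Ioo (0 : ℝ) 1 ×ˢ univ))
    (hφ : ContDiff ℝ (⊤ : ℕ∞) φ) (hc : HasCompactSupport φ) {t : ℝ} (ht : t ∈ Ioo (0 : ℝ) 1)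
    (x : EuclideanSpace ℝ (Fin n)) :
    spaceMollify (spaceLap f) φ t x = spaceMollify f (heatLap φ) t x := by
  have hs : ContDiff ℝ (⊤ : ℕ∞) fun y => f (t, x + y) := by
    rw [← contDiffOn_univ]
    exact hf.comp (f := fun y => (t, x + y)) (by fun_prop) fun y _ => ⟨ht, mem_univ _⟩
  simp only [spaceMollify, ← heatLap_slice hf ht]
  exact integral_heatLap_mul hs hφ hc

end Mollify

/-- A smooth convex approximation of the positive part, vanishing exactly on `(-∞, 0]`. -/
noncomputable def smoothPosPart (s : ℝ) : ℝ := ∫ r in (0 : ℝ)..s, Real.smoothTransition r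

theorem hasDerivAt_smoothPosPart (s : ℝ) :
    HasDerivAt smoothPosPart (Real.smoothTransition s) s :=
  (Real.smoothTransition.continuous.integral_hasStrictDerivAt 0 s).hasDerivAt

theorem contDiff_smoothPosPart : ContDiff ℝ (⊤ : ℕ∞) smoothPosPart := by
  refine contDiff_infty_iff_deriv.2
    ⟨fun s => (hasDerivAt_smoothPosPart s).differentiableAt, ?_⟩
  rw [show deriv smoothPosPart = Real.smoothTransition from
    funext fun s => (hasDerivAt_smoothPosPart s).deriv]
  exact Real.smoothTransition.contDiff

theorem smoothPosPart_of_nonpos {s : ℝ} (hs : s ≤ 0) : smoothPosPart s = 0 := by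
  rw [smoothPosPart, intervalIntegral.integral_symm, neg_eq_zero]
  refine (intervalIntegral.integral_congr (g := fun _ => (0 : ℝ)) fun r hr => ?_).trans (by simp)
  rw [uIcc_of_le hs] at hr
  exact Real.smoothTransition.zero_of_nonpos hr.2

theorem smoothPosPart_nonneg (s : ℝ) : 0 ≤ smoothPosPart s := by
  rcases le_total s 0 with hs | hs
  · exact (smoothPosPart_of_nonpos hs).ge
  · exact intervalIntegral.integral_nonneg hs fun r _ => Real.smoothTransition.nonneg r

theorem smoothPosPart_pos {s : ℝ} (hs : 0 < s) : 0 < smoothPosPart s :=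
  intervalIntegral.intervalIntegral_pos_of_pos_on
    (Real.smoothTransition.continuous.intervalIntegrable _ _)
    (fun _ hr => Real.smoothTransition.pos_of_pos hr.1) hs

theorem smoothPosPart_le (s : ℝ) : smoothPosPart s ≤ max s 0 := by
  rcases le_total s 0 with hs | hs
  · rw [smoothPosPart_of_nonpos hs]
    exact le_max_right _ _
  · calc smoothPosPart s ≤ ∫ _ in (0 : ℝ)..s, (1 : ℝ) :=
        intervalIntegral.integral_mono_on hs
          (Real.smoothTransition.continuous.intervalIntegrable _ _) (by simp)
          fun r _ => Real.smoothTransition.le_one r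
      _ ≤ max s 0 := by simp

theorem fderiv_smoothPosPart_comp {E : Type*} [NormedAddCommGroup E] [NormedSpace ℝ E]
    {U : E → ℝ} {p : E} (hU : DifferentiableAt ℝ U p) (v : E) :
    fderiv ℝ (fun q => smoothPosPart (U q)) p v =
      Real.smoothTransition (U p) * fderiv ℝ U p v := by
  have h := ((hasDerivAt_smoothPosPart (U p)).comp_hasFDerivAt p hU.hasFDerivAt).fderiv
  have h' : (smoothPosPart ∘ U) = fun q => smoothPosPart (U q) := rfl
  rw [← h', h]
  simp

theorem smoothTransition_mul_spaceLap_le {n : ℕ} {U : ℝ × EuclideanSpace ℝ (Fin n) → ℝ}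
    (hU : ContDiffOn ℝ (⊤ : ℕ∞) U (Ioo (0 : ℝ) 1 ×ˢ univ)) {p : ℝ × EuclideanSpace ℝ (Fin n)}
    (hp : p ∈ Ioo (0 : ℝ) 1 ×ˢ univ) :
    Real.smoothTransition (U p) * spaceLap U p ≤ spaceLap (fun q => smoothPosPart (U q)) p := by
  rw [spaceLap, spaceLap, Finset.mul_sum]
  refine Finset.sum_le_sum fun i _ => ?_
  set e : ℝ × EuclideanSpace ℝ (Fin n) := (0, EuclideanSpace.single i (1 : ℝ))
  have hd := hU.differentiableAt_of_isOpen isOpen_timeStrip hp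
  have hdd := (hU.fderiv_apply_of_isOpen isOpen_timeStrip e).differentiableAt_of_isOpen
    isOpen_timeStrip hp
  have hT : DifferentiableAt ℝ Real.smoothTransition (U p) :=
    (Real.smoothTransition.contDiff (n := 1)).differentiable (by simp) _
  have hcongr : (fun q => fderiv ℝ (fun q => smoothPosPart (U q)) q e) =ᶠ[nhds p]
      fun q => Real.smoothTransition (U q) * fderiv ℝ U q e := by
    filter_upwards [isOpen_timeStrip.mem_nhds hp] with q hq
    exact fderiv_smoothPosPart_comp (hU.differentiableAt_of_isOpen isOpen_timeStrip hq) e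
  have hTU := hT.hasDerivAt.comp_hasFDerivAt p hd.hasFDerivAt
  have hprod := (hTU.mul hdd.hasFDerivAt).fderiv
  have h' : ((Real.smoothTransition ∘ U) * fun q => fderiv ℝ U q e) =
    fun q => Real.smoothTransition (U q) * fderiv ℝ U q e := rfl
  rw [h'] at hprod
  rw [hcongr.fderiv_eq, hprod]
  have h0 : 0 ≤ deriv Real.smoothTransition (U p) := Real.smoothTransition.monotone.deriv_nonneg
  simp only [Function.comp_apply, add_apply, smul_apply,
    smul_eq_mul]
  nlinarith [mul_nonneg h0 (sq_nonneg (fderiv ℝ U p e))]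

section Growth

variable {n : ℕ} {f : ℝ × EuclideanSpace ℝ (Fin n) → ℝ} {χ : EuclideanSpace ℝ (Fin n) → ℝ}

theorem spaceMollify_le_mul_of_le {g : ℝ × EuclideanSpace ℝ (Fin n) → ℝ}
    {ψ : EuclideanSpace ℝ (Fin n) → ℝ} {C : ℝ}
    (hf : ContinuousOn f (Ioo (0 : ℝ) 1 ×ˢ univ)) (hg : ContinuousOn g (Ioo (0 : ℝ) 1 ×ˢ univ))
    (hf0 : ∀ p, 0 ≤ f p) (hfg : ∀ p, f p ≤ g p) (hψ : Continuous ψ) (hψc : HasCompactSupport ψ)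
    (hχ : Continuous χ) (hχc : HasCompactSupport χ) (hψχ : ∀ y, |ψ y| ≤ C * χ y)
    {t : ℝ} (ht : t ∈ Ioo (0 : ℝ) 1) (x : EuclideanSpace ℝ (Fin n)) :
    spaceMollify f ψ t x ≤ C * spaceMollify g χ t x := by
  rw [spaceMollify, spaceMollify, ← integral_const_mul]
  refine integral_mono (integrable_slice_mul hf hψ hψc ht x)
    ((integrable_slice_mul hg hχ hχc ht x).const_mul C) fun y => ?_
  have h1 := (le_abs_self (ψ y)).trans (hψχ y)
  calc f (t, x + y) * ψ y ≤ f (t, x + y) * (C * χ y) := mul_le_mul_of_nonneg_left h1 (hf0 _)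
    _ ≤ g (t, x + y) * (C * χ y) :=
      mul_le_mul_of_nonneg_right (hfg _) ((abs_nonneg _).trans (hψχ y))
    _ = C * (g (t, x + y) * χ y) := by ring

theorem ofReal_spaceMollify_sq_le (hf : ContinuousOn f (Ioo (0 : ℝ) 1 ×ˢ univ))
    (hχ : Continuous χ) (hχc : HasCompactSupport χ) (hχ0 : ∀ y, 0 ≤ χ y) (hχ1 : ∀ y, χ y ≤ 1)
    (hχ2 : ∀ y, 2 ≤ ‖y‖ → χ y = 0) {t r : ℝ} (ht : t ∈ Ioo (0 : ℝ) 1)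
    {x : EuclideanSpace ℝ (Fin n)} (hr : ‖x‖ + 2 ≤ r) :
    ENNReal.ofReal (spaceMollify (fun p => f p ^ 2) χ t x) ≤
      ∫⁻ z in ball (0 : EuclideanSpace ℝ (Fin n)) r, ENNReal.ofReal (f (t, z) ^ 2) := by
  rw [spaceMollify, ofReal_integral_eq_lintegral_ofReal
    (integrable_slice_mul (hf.fun_pow 2) hχ hχc ht x)
    (ae_of_all _ fun y => mul_nonneg (sq_nonneg _) (hχ0 y)),
    ← lintegral_indicator measurableSet_ball,
    ← lintegral_add_left_eq_self ((ball 0 r).indicator fun z => ENNReal.ofReal (f (t, z) ^ 2)) x]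
  refine lintegral_mono fun y => ?_
  by_cases hy : 2 ≤ ‖y‖
  · simp [hχ2 y hy]
  · have hmem : x + y ∈ ball (0 : EuclideanSpace ℝ (Fin n)) r := by
      rw [mem_ball_zero_iff]
      linarith [norm_add_le x y]
    rw [indicator_of_mem hmem]
    exact ENNReal.ofReal_le_ofReal (mul_le_of_le_one_right (sq_nonneg _) (hχ1 y))

theorem integral_spaceMollify_sq_le (hf : ContinuousOn f (Ioo (0 : ℝ) 1 ×ˢ univ))
    (hχ : Continuous χ) (hχc : HasCompactSupport χ) (hχ0 : ∀ y, 0 ≤ χ y) (hχ1 : ∀ y, χ y ≤ 1)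
    (hχ2 : ∀ y, 2 ≤ ‖y‖ → χ y = 0) {a M t r : ℝ} (ha : 0 < a) (hM : 0 ≤ M)
    (ht : t ∈ Ioo (0 : ℝ) 1) {x : EuclideanSpace ℝ (Fin n)} (hr : ‖x‖ + 2 ≤ r)
    (hgrowth : ∫⁻ t in Ioc (0 : ℝ) 1, ENNReal.ofReal (t ^ a) *
      ∫⁻ z in ball (0 : EuclideanSpace ℝ (Fin n)) r, ENNReal.ofReal (f (t, z) ^ 2)
        ≤ ENNReal.ofReal M) :
    ∫ s in (t / 2)..t, spaceMollify (fun p => f p ^ 2) χ s x ≤ (t / 2) ^ (-a) * M := by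
  have ht2 : 0 < t / 2 := half_pos ht.1
  have hsub : Icc (t / 2) t ⊆ Ioo (0 : ℝ) 1 := fun s hs => ⟨ht2.trans_le hs.1, hs.2.trans_lt ht.2⟩
  have hcont : ContinuousOn (fun s => spaceMollify (fun p => f p ^ 2) χ s x) (Icc (t / 2) t) :=
    (continuousOn_spaceMollify (hf.fun_pow 2) hχ hχc).comp (f := fun s : ℝ => (s, x)) (by fun_prop)
      fun s hs => ⟨hsub hs, mem_univ _⟩
  have hnn : 0 ≤ (t / 2) ^ (-a) * M := mul_nonneg (Real.rpow_nonneg ht2.le _) hM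
  rw [← ENNReal.ofReal_le_ofReal_iff hnn, intervalIntegral.integral_of_le (by linarith),
    ofReal_integral_eq_lintegral_ofReal
      (hcont.integrableOn_Icc.mono_set Ioc_subset_Icc_self)
      (ae_of_all _ fun s => integral_nonneg fun y => mul_nonneg (sq_nonneg _) (hχ0 y)),
    ENNReal.ofReal_mul (Real.rpow_nonneg ht2.le _)]
  refine le_trans ?_ (mul_le_mul_right hgrowth _)
  rw [← lintegral_const_mul' _ _ ENNReal.ofReal_ne_top]
  refine le_trans (setLIntegral_mono' measurableSet_Ioc fun s hs => ?_)
    (lintegral_mono_set fun s hs => ⟨ht2.trans hs.1, hs.2.trans ht.2.le⟩)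
  have hs' := hsub (Ioc_subset_Icc_self hs)
  refine (ofReal_spaceMollify_sq_le hf hχ hχc hχ0 hχ1 hχ2 hs' hr).trans ?_
  rw [← mul_assoc, ← ENNReal.ofReal_mul (Real.rpow_nonneg ht2.le _)]
  refine le_mul_of_one_le_left zero_le ?_
  rw [ENNReal.one_le_ofReal, Real.rpow_neg ht2.le, ← div_eq_inv_mul,
    one_le_div (Real.rpow_pos_of_pos ht2 _)]
  exact Real.rpow_le_rpow ht2.le hs.1.le ha.le

theorem half_mul_spaceMollify_le {φ : EuclideanSpace ℝ (Fin n) → ℝ} {C : ℝ}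
    (hf : ContDiffOn ℝ (⊤ : ℕ∞) f (Ioo (0 : ℝ) 1 ×ˢ univ)) (hf0 : ∀ p, 0 ≤ f p)
    (hsub : ∀ t ∈ Ioo (0 : ℝ) 1, ∀ x, fderiv ℝ f (t, x) (1, 0) ≤ spaceLap f (t, x))
    (hφ : ContDiff ℝ (⊤ : ℕ∞) φ) (hφc : HasCompactSupport φ) (hφ0 : ∀ y, 0 ≤ φ y)
    (hC : 0 ≤ C) (hφχ : ∀ y, |φ y| ≤ C * χ y) (hLφχ : ∀ y, |heatLap φ y| ≤ C * χ y)
    (hLφ : Continuous (heatLap φ)) (hLφc : HasCompactSupport (heatLap φ))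
    (hχ : Continuous χ) (hχc : HasCompactSupport χ) (hχ0 : ∀ y, 0 ≤ χ y) {t : ℝ}
    (ht : t ∈ Ioo (0 : ℝ) 1) (x : EuclideanSpace ℝ (Fin n)) :
    t / 2 * spaceMollify f φ t x ≤ 2 * C * (t / 2 * (∫ y, χ y) +
      ∫ s in (t / 2)..t, spaceMollify (fun p => f p ^ 2) χ s x) := by
  have ht2 : 0 < t / 2 := half_pos ht.1
  have hI : Icc (t / 2) t ⊆ Ioo (0 : ℝ) 1 := fun s hs => ⟨ht2.trans_le hs.1, hs.2.trans_lt ht.2⟩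
  have hcont : ∀ {g : ℝ × EuclideanSpace ℝ (Fin n) → ℝ} {ψ : EuclideanSpace ℝ (Fin n) → ℝ},
      ContinuousOn g (Ioo (0 : ℝ) 1 ×ˢ univ) → Continuous ψ → HasCompactSupport ψ →
      ContinuousOn (fun s => spaceMollify g ψ s x) (Icc (t / 2) t) := fun hg hψ hψc =>
    (continuousOn_spaceMollify hg hψ hψc).comp (f := fun s : ℝ => (s, x)) (by fun_prop)
      fun s hs => ⟨hI hs, mem_univ _⟩
  have hg : ContinuousOn (fun p => 1 + f p ^ 2) (Ioo (0 : ℝ) 1 ×ˢ univ) :=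
    continuousOn_const.add (hf.continuousOn.fun_pow 2)
  have hfg : ∀ p, f p ≤ 1 + f p ^ 2 := fun p => by nlinarith [sq_nonneg (f p - 1)]
  have hG : ∀ s ∈ Ioo (0 : ℝ) 1, spaceMollify (fun p => 1 + f p ^ 2) χ s x =
      (∫ y, χ y) + spaceMollify (fun p => f p ^ 2) χ s x := fun s hs => by
    simp only [spaceMollify, add_mul, one_mul]
    exact integral_add (hχ.integrable_of_hasCompactSupport hχc)
      (integrable_slice_mul (hf.continuousOn.fun_pow 2) hχ hχc hs x)
  have key := intervalIntegral.sub_le_integral_of_hasDeriv_right_of_le (a := t / 2) (b := t)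
    (g := fun s => (s - t / 2) * spaceMollify f φ s x)
    (g' := fun s => 1 * spaceMollify f φ s x +
      (s - t / 2) * spaceMollify (fun p => fderiv ℝ f p (1, 0)) φ s x)
    (φ := fun s => 2 * C * ((∫ y, χ y) + spaceMollify (fun p => f p ^ 2) χ s x))
    (by linarith) ((by fun_prop : ContinuousOn (fun s : ℝ => s - t / 2) _).mul
      (hcont hf.continuousOn hφ.continuous hφc))
    (fun s hs => (((hasDerivAt_id s).sub_const (t / 2)).mul (hasDerivAt_spaceMollify_time hf
      hφ.continuous hφc (hI (Ioo_subset_Icc_self hs)) x)).hasDerivWithinAt)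
    (ContinuousOn.integrableOn_Icc (continuousOn_const.mul (continuousOn_const.add
      (hcont (hf.continuousOn.fun_pow 2) hχ hχc))))
    (fun s hs => by
      have hs1 := hI (Ioo_subset_Icc_self hs)
      have h1 := spaceMollify_le_mul_of_le hf.continuousOn hg hf0 hfg hφ.continuous hφc hχ hχc
        hφχ hs1 x
      have h2 := spaceMollify_le_mul_of_le hf.continuousOn hg hf0 hfg hLφ hLφc hχ hχc hLφχ hs1 x
      have h3 := spaceMollify_mono (hf.fderiv_apply_of_isOpen isOpen_timeStrip (1, 0)).continuousOn
        (continuousOn_spaceLap hf) hφ.continuous hφc hφ0 hs1 (hsub s hs1) x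
      rw [spaceMollify_spaceLap hf hφ hφc hs1] at h3
      have h4 : 0 ≤ C * spaceMollify (fun p => 1 + f p ^ 2) χ s x :=
        mul_nonneg hC (integral_nonneg fun y => mul_nonneg (by positivity) (hχ0 y))
      rw [← hG s hs1]
      have h5 : (s - t / 2) * spaceMollify (fun p => fderiv ℝ f p (1, 0)) φ s x ≤
          1 * (C * spaceMollify (fun p => 1 + f p ^ 2) χ s x) :=
        (mul_le_mul_of_nonneg_left (h3.trans h2) (sub_nonneg.2 hs.1.le)).trans
          (mul_le_mul_of_nonneg_right (by linarith [hs1.2]) h4)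
      linarith)
  rw [intervalIntegral.integral_const_mul, intervalIntegral.integral_add (by simp)
    ((hcont (hf.continuousOn.fun_pow 2) hχ hχc).intervalIntegrable_of_Icc (by linarith)),
    intervalIntegral.integral_const, smul_eq_mul] at key
  have e : t - t / 2 = t / 2 := by ring
  simpa [e] using key

end Growth

theorem heatLap_eq_zero_of_notMem_tsupport {n : ℕ} {g : EuclideanSpace ℝ (Fin n) → ℝ}
    {y : EuclideanSpace ℝ (Fin n)} (hy : y ∉ tsupport g) : heatLap g y = 0 := by
  refine Finset.sum_eq_zero fun i _ => ?_
  have h1 := tsupport_fderiv_apply_subset ℝ (f := g) (EuclideanSpace.single i (1 : ℝ))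
  have h2 := tsupport_fderiv_apply_subset ℝ
    (f := fun z => fderiv ℝ g z (EuclideanSpace.single i (1 : ℝ)))
    (EuclideanSpace.single i (1 : ℝ))
  have h3 := notMem_subset (h2.trans h1) hy
  exact image_eq_zero_of_notMem_tsupport
    (f := fun w => fderiv ℝ (fun z => fderiv ℝ g z (EuclideanSpace.single i (1 : ℝ))) w
      (EuclideanSpace.single i (1 : ℝ))) h3

theorem exists_mollifier_dominated (n : ℕ) :
    ∃ (φ χ : EuclideanSpace ℝ (Fin n) → ℝ) (C : ℝ), ContDiff ℝ (⊤ : ℕ∞) φ ∧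
      HasCompactSupport φ ∧ (∀ y, 0 ≤ φ y) ∧ 0 < φ 0 ∧ 0 ≤ C ∧ (∀ y, |φ y| ≤ C * χ y) ∧
      (∀ y, |heatLap φ y| ≤ C * χ y) ∧ Continuous (heatLap φ) ∧ HasCompactSupport (heatLap φ) ∧
      Continuous χ ∧ HasCompactSupport χ ∧ (∀ y, 0 ≤ χ y) ∧ (∀ y, χ y ≤ 1) ∧
      ∀ y, 2 ≤ ‖y‖ → χ y = 0 := by
  obtain ⟨φ, hφ1⟩ : ∃ φ : ContDiffBump (0 : EuclideanSpace ℝ (Fin n)), φ.rOut = 1 :=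
    ⟨⟨1 / 2, 1, by norm_num, by norm_num⟩, rfl⟩
  obtain ⟨χ, hχ1, hχ2⟩ : ∃ χ : ContDiffBump (0 : EuclideanSpace ℝ (Fin n)),
      χ.rIn = 1 ∧ χ.rOut = 2 := ⟨⟨1, 2, by norm_num, by norm_num⟩, rfl, rfl⟩
  have hφ : ContDiff ℝ (⊤ : ℕ∞) φ := φ.contDiff
  have hLφ : Continuous (heatLap φ) := by
    refine continuous_finsetSum _ fun i _ => ContDiff.continuous (n := (⊤ : ℕ∞)) (𝕜 := ℝ) ?_
    have h : ∀ {g : EuclideanSpace ℝ (Fin n) → ℝ} (v : EuclideanSpace ℝ (Fin n)),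
        ContDiff ℝ (⊤ : ℕ∞) g → ContDiff ℝ (⊤ : ℕ∞) fun y => fderiv ℝ g y v := fun v hg =>
      (hg.fderiv_right (by simp)).clm_apply contDiff_const
    exact h _ (h _ hφ)
  have hball : tsupport φ = closedBall 0 1 := hφ1 ▸ φ.tsupport_eq
  have hLzero : ∀ y, y ∉ tsupport φ → heatLap φ y = 0 := fun _ =>
    heatLap_eq_zero_of_notMem_tsupport
  have hLc : HasCompactSupport (heatLap φ) := HasCompactSupport.intro φ.hasCompactSupport hLzero
  obtain ⟨C₁, hC₁⟩ := φ.hasCompactSupport.exists_bound_of_continuous φ.continuous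
  obtain ⟨C₂, hC₂⟩ := hLc.exists_bound_of_continuous hLφ
  have hC0 : 0 ≤ max C₁ C₂ := ((norm_nonneg _).trans (hC₁ 0)).trans (le_max_left _ _)
  have hdom : ∀ ψ : EuclideanSpace ℝ (Fin n) → ℝ, (∀ y, |ψ y| ≤ max C₁ C₂) →
      (∀ y, y ∉ tsupport φ → ψ y = 0) → ∀ y, |ψ y| ≤ max C₁ C₂ * χ y := by
    intro ψ hψ hψ0 y
    by_cases hy : y ∈ tsupport φ
    · rw [χ.one_of_mem_closedBall (by rwa [hχ1, ← hball]), mul_one]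
      exact hψ y
    · rw [hψ0 y hy, abs_zero]
      exact mul_nonneg hC0 χ.nonneg
  refine ⟨φ, χ, max C₁ C₂, hφ, φ.hasCompactSupport, fun _ => φ.nonneg, ?_, hC0,
    hdom _ (fun y => (hC₁ y).trans (le_max_left _ _)) fun y => image_eq_zero_of_notMem_tsupport,
    hdom _ (fun y => (hC₂ y).trans (le_max_right _ _)) hLzero, hLφ, hLc, χ.continuous,
    χ.hasCompactSupport, fun _ => χ.nonneg, fun _ => χ.le_one, fun y hy => ?_⟩
  · exact φ.pos_of_mem_ball (mem_ball_self φ.rOut_pos)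
  · exact χ.zero_of_le_dist (by simpa [hχ2] using hy)

section Growth

variable {n : ℕ} {f : ℝ × EuclideanSpace ℝ (Fin n) → ℝ} {φ χ : EuclideanSpace ℝ (Fin n) → ℝ}
  {C : ℝ}

theorem exists_forall_spaceMollify_le_of_tendsto (hf : ContinuousOn f (Ioo (0 : ℝ) 1 ×ˢ univ))
    (hf0 : ∀ p, 0 ≤ f p)
    (hinit : ∀ R > (0 : ℝ), Tendsto (fun t => ∫⁻ x in ball (0 : EuclideanSpace ℝ (Fin n)) R,
      ENNReal.ofReal (f (t, x) ^ 2)) (nhdsWithin 0 (Ioi 0)) (nhds 0))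
    (hφ : Continuous φ) (hφc : HasCompactSupport φ) (hC : 0 ≤ C)
    (hφχ : ∀ y, |φ y| ≤ C * χ y) (hχ : Continuous χ) (hχc : HasCompactSupport χ)
    (hχ0 : ∀ y, 0 ≤ χ y) (hχ1 : ∀ y, χ y ≤ 1) (hχ2 : ∀ y, 2 ≤ ‖y‖ → χ y = 0) (R : ℝ) {ε : ℝ}
    (hε : 0 < ε) :
    ∃ δ > 0, ∀ t ∈ Ioo (0 : ℝ) δ, ∀ x, ‖x‖ ≤ R → spaceMollify f φ t x ≤ ε := by
  have hc0 : 0 ≤ ∫ y, χ y := integral_nonneg hχ0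
  set c := ∫ y, χ y
  set η := ε / (2 * (C * c + 1))
  have hη : 0 < η := by positivity
  set κ := ε * η / (2 * (C + 1))
  have hκ : 0 < κ := by positivity
  have hev := (hinit (max R 0 + 2) (by positivity)).eventually_lt_const
    (ENNReal.ofReal_pos.2 hκ)
  obtain ⟨δ, hδ, hδ'⟩ := mem_nhdsGT_iff_exists_Ioo_subset.1 hev
  refine ⟨min δ 1, lt_min hδ one_pos, fun t ht x hx => ?_⟩
  have ht1 : t ∈ Ioo (0 : ℝ) 1 := ⟨ht.1, ht.2.trans_le (min_le_right _ _)⟩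
  have hV : spaceMollify (fun p => f p ^ 2) χ t x ≤ κ := by
    rw [← ENNReal.ofReal_le_ofReal_iff hκ.le]
    exact (ofReal_spaceMollify_sq_le hf hχ hχc hχ0 hχ1 hχ2 ht1
      (add_le_add_left (hx.trans (le_max_left R 0)) 2)).trans
        (hδ' ⟨ht.1, ht.2.trans_le (min_le_left _ _)⟩ : _ < _).le
  have hg : ContinuousOn (fun p => η + η⁻¹ * f p ^ 2) (Ioo (0 : ℝ) 1 ×ˢ univ) :=
    continuousOn_const.add (continuousOn_const.mul (hf.fun_pow 2))
  have hfg : ∀ p, f p ≤ η + η⁻¹ * f p ^ 2 := fun p => by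
    have h1 : η + η⁻¹ * f p ^ 2 - f p = η⁻¹ * ((η - f p / 2) ^ 2 + 3 / 4 * f p ^ 2) := by
      field_simp
      ring
    have h2 : 0 ≤ η⁻¹ * ((η - f p / 2) ^ 2 + 3 / 4 * f p ^ 2) := by positivity
    linarith
  have hG : spaceMollify (fun p => η + η⁻¹ * f p ^ 2) χ t x =
      η * c + η⁻¹ * spaceMollify (fun p => f p ^ 2) χ t x := by
    simp only [spaceMollify, add_mul, mul_assoc, c]
    rw [integral_add ((hχ.integrable_of_hasCompactSupport hχc).const_mul η)
      ((integrable_slice_mul (hf.fun_pow 2) hχ hχc ht1 x).const_mul _),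
      integral_const_mul, integral_const_mul]
  refine (spaceMollify_le_mul_of_le hf hg hf0 hfg hφ hφc hχ hχc hφχ ht1 x).trans ?_
  rw [hG]
  have h1 : C * (η⁻¹ * spaceMollify (fun p => f p ^ 2) χ t x) ≤ ε / 2 := by
    calc C * (η⁻¹ * spaceMollify (fun p => f p ^ 2) χ t x) ≤ C * (η⁻¹ * κ) := by gcongr
      _ = ε / 2 * (C / (C + 1)) := by
        simp only [κ]
        field_simp
      _ ≤ ε / 2 * 1 := by
        gcongr
        rw [div_le_one (by positivity)]
        linarith
      _ = ε / 2 := mul_one _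
  have h2 : C * (η * c) ≤ ε / 2 := by
    calc C * (η * c) = ε / 2 * (C * c / (C * c + 1)) := by
          simp only [η]
          field_simp
      _ ≤ ε / 2 * 1 := by
        gcongr
        rw [div_le_one (by positivity)]
        linarith
      _ = ε / 2 := mul_one _
  linarith

theorem exists_spaceMollify_le_exp_mul_rpow {a : ℝ} {L : ℝ → ℝ} (ha : 0 < a)
    (hL_pos : ∀ r > (0 : ℝ), 0 < L r)
    (hf : ContDiffOn ℝ (⊤ : ℕ∞) f (Ioo (0 : ℝ) 1 ×ˢ univ)) (hf0 : ∀ p, 0 ≤ f p)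
    (hsub : ∀ t ∈ Ioo (0 : ℝ) 1, ∀ x, fderiv ℝ f (t, x) (1, 0) ≤ spaceLap f (t, x))
    (hgrowth : ∀ r > (0 : ℝ), ∫⁻ t in Ioc (0 : ℝ) 1, ENNReal.ofReal (t ^ a) *
      ∫⁻ z in ball (0 : EuclideanSpace ℝ (Fin n)) r, ENNReal.ofReal (f (t, z) ^ 2)
        ≤ ENNReal.ofReal (Real.exp (L r)))
    (hφ : ContDiff ℝ (⊤ : ℕ∞) φ) (hφc : HasCompactSupport φ) (hφ0 : ∀ y, 0 ≤ φ y)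
    (hC : 0 ≤ C) (hφχ : ∀ y, |φ y| ≤ C * χ y) (hLφχ : ∀ y, |heatLap φ y| ≤ C * χ y)
    (hLφ : Continuous (heatLap φ)) (hLφc : HasCompactSupport (heatLap φ))
    (hχ : Continuous χ) (hχc : HasCompactSupport χ) (hχ0 : ∀ y, 0 ≤ χ y) (hχ1 : ∀ y, χ y ≤ 1)
    (hχ2 : ∀ y, 2 ≤ ‖y‖ → χ y = 0) :
    ∃ c₀ ≥ (0 : ℝ), ∀ r x, ‖x‖ + 2 ≤ r → ∀ t ∈ Ioo (0 : ℝ) 1,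
      spaceMollify f φ t x ≤ Real.exp (L r + c₀) * t ^ (-(a + 1)) := by
  have hc0 : 0 ≤ ∫ y, χ y := integral_nonneg hχ0
  set c := ∫ y, χ y
  set K := 2 * C * (c + 2 * 2 ^ a)
  refine ⟨Real.log (max 1 K), Real.log_nonneg (le_max_left _ _), fun r x hr t ht => ?_⟩
  have hr0 : 0 < r := by linarith [norm_nonneg x]
  have ht2 : 0 < t / 2 := half_pos ht.1
  have h1 := half_mul_spaceMollify_le hf hf0 hsub hφ hφc hφ0 hC hφχ hLφχ hLφ hLφc hχ hχc hχ0 ht x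
  have h2 := integral_spaceMollify_sq_le hf.continuousOn hχ hχc hχ0 hχ1 hχ2 ha
    (Real.exp_pos (L r)).le ht hr (hgrowth r hr0)
  have hE : 1 ≤ Real.exp (L r) := Real.one_le_exp (hL_pos r hr0).le
  have hT : 1 ≤ t ^ (-(a + 1)) :=
    Real.one_le_rpow_of_pos_of_le_one_of_nonpos ht.1 ht.2.le (by linarith)
  have hpow : (t / 2) ^ (-a) = t / 2 * (2 * 2 ^ a * t ^ (-(a + 1))) := by
    rw [Real.div_rpow ht.1.le (by norm_num), Real.rpow_neg (by norm_num : (0 : ℝ) ≤ 2),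
      show -a = -(a + 1) + 1 by ring, Real.rpow_add_one ht.1.ne', div_inv_eq_mul]
    ring
  have hP : 0 ≤ Real.exp (L r) * t ^ (-(a + 1)) := by positivity
  have h3 : spaceMollify f φ t x ≤ K * (Real.exp (L r) * t ^ (-(a + 1))) := by
    refine le_of_mul_le_mul_left (h1.trans ?_) ht2
    calc 2 * C * (t / 2 * c + ∫ s in (t / 2)..t, spaceMollify (fun p => f p ^ 2) χ s x)
        ≤ 2 * C * (t / 2 * (c * (Real.exp (L r) * t ^ (-(a + 1)))) +
          t / 2 * (2 * 2 ^ a * t ^ (-(a + 1))) * Real.exp (L r)) := by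
          rw [hpow] at h2
          have h5 : c ≤ c * (Real.exp (L r) * t ^ (-(a + 1))) :=
            le_mul_of_one_le_right hc0 (one_le_mul_of_one_le_of_one_le hE hT)
          gcongr
      _ = t / 2 * (K * (Real.exp (L r) * t ^ (-(a + 1)))) := by
          simp only [K]
          ring
  rw [Real.exp_add, Real.exp_log (lt_max_of_lt_left one_pos)]
  calc spaceMollify f φ t x ≤ max 1 K * (Real.exp (L r) * t ^ (-(a + 1))) :=
      h3.trans (mul_le_mul_of_nonneg_right (le_max_right _ _) hP)
    _ = _ := by ring

end Growth

theorem not_summable_four_pow_div_shift {L : ℝ → ℝ} (j : ℕ)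
    (h : ¬Summable fun k : ℕ => (4 : ℝ) ^ k / L (2 ^ k)) :
    ¬Summable fun k : ℕ => (4 : ℝ) ^ k / L (2 ^ (k + j)) := by
  refine fun hs => h ((summable_nat_add_iff j).1 ((hs.mul_left ((4 : ℝ) ^ j)).congr fun k => ?_))
  rw [pow_add (4 : ℝ) k j]
  ring

theorem eq_zero_of_heat_subsolution_of_nonneg {n : ℕ} {f : ℝ × EuclideanSpace ℝ (Fin n) → ℝ}
    {a : ℝ} {L : ℝ → ℝ} (ha : 0 < a) (hL_pos : ∀ r > (0 : ℝ), 0 < L r)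
    (hL_div : ¬Summable fun k : ℕ => (4 : ℝ) ^ k / L (2 ^ k))
    (hf : ContDiffOn ℝ (⊤ : ℕ∞) f (Ioo (0 : ℝ) 1 ×ˢ univ)) (hf0 : ∀ p, 0 ≤ f p)
    (hsub : ∀ t ∈ Ioo (0 : ℝ) 1, ∀ x, fderiv ℝ f (t, x) (1, 0) ≤ spaceLap f (t, x))
    (hinit : ∀ R > (0 : ℝ), Tendsto (fun t => ∫⁻ x in ball (0 : EuclideanSpace ℝ (Fin n)) R,
      ENNReal.ofReal (f (t, x) ^ 2)) (nhdsWithin 0 (Ioi 0)) (nhds 0))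
    (hgrowth : ∀ r > (0 : ℝ), ∫⁻ t in Ioc (0 : ℝ) 1, ENNReal.ofReal (t ^ a) *
      ∫⁻ z in ball (0 : EuclideanSpace ℝ (Fin n)) r, ENNReal.ofReal (f (t, z) ^ 2)
        ≤ ENNReal.ofReal (Real.exp (L r))) {t : ℝ} (ht : t ∈ Ioo (0 : ℝ) 1)
    (x : EuclideanSpace ℝ (Fin n)) : f (t, x) = 0 := by
  obtain ⟨φ, χ, C, hφ, hφc, hφ0, hφpos, hC, hφχ, hLφχ, hLφ, hLφc, hχ, hχc, hχ0, hχ1, hχ2⟩ :=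
    exists_mollifier_dominated n
  obtain ⟨c₀, hc₀, hW⟩ := exists_spaceMollify_le_exp_mul_rpow ha hL_pos hf hf0 hsub hgrowth hφ
    hφc hφ0 hC hφχ hLφχ hLφ hLφc hχ hχc hχ0 hχ1 hχ2
  have hWinit := fun R (ε : ℝ) (hε : 0 < ε) => exists_forall_spaceMollify_le_of_tendsto
    hf.continuousOn hf0 hinit hφ.continuous hφc hC hφχ hχ hχc hχ0 hχ1 hχ2 R hε
  have hsubW := isHeatSubsolution_spaceMollify hf hsub hφ.continuous hφc hφ0
  set ℓ : ℕ → ℝ := fun k => L (2 ^ (k + 3))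
  have hℓ : ∀ k, 0 < ℓ k := fun k => hL_pos _ (by positivity)
  set C₁ : ℝ := 1 + 8 * (a + 1)
  set C₂ : ℝ := C₁ * c₀ + 16 * (a + 1) * (2 * (a + 1) + 2 * n + 4)
  have hC₁ : 0 ≤ C₁ := by positivity
  have hC₂ : 0 ≤ C₂ := by positivity
  have hnn : ∀ k, 0 ≤ C₁ * ℓ k + C₂ := fun k => add_nonneg (mul_nonneg hC₁ (hℓ k).le) hC₂
  have hnonpos : spaceMollify f φ t x ≤ 0 := by
    refine hsubW.nonpos_of_not_summable (Λ := fun k => k + 1 + C₁ * ℓ k + C₂)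
      (fun k => by linarith [hnn k, k.cast_nonneg (α := ℝ)]) (fun k => by linarith [hnn k])
      (fun k s hs y hy => ?_) hWinit (not_summable_div_affine hℓ hC₁ hC₂
        (not_summable_four_pow_div_shift 3 hL_div)) ht x
    refine (hsubW.le_exp_of_le_rpow (m := ℓ k + c₀) (N := a + 1) (by linarith [hℓ k])
      (by positivity) (fun τ hτ z hz => hW _ z ?_ τ hτ) (fun ε hε => ?_) hs).trans ?_
    · have h1 : (1 : ℝ) ≤ 2 ^ k := one_le_pow₀ (by norm_num)
      rw [mem_closedBall_iff_norm] at hz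
      have h2 := norm_le_norm_add_norm_sub' z y
      rw [pow_add]
      linarith
    · obtain ⟨δ, hδ, h⟩ := hWinit (‖y‖ + 1) ε hε
      refine ⟨δ, hδ, fun τ hτ z hz => h τ hτ z ?_⟩
      rw [mem_closedBall_iff_norm] at hz
      linarith [norm_le_norm_add_norm_sub' z y]
    · refine Real.exp_le_exp.2 ?_
      have h1 : ℓ k + c₀ + 16 * (a + 1) * ((ℓ k + c₀) / 2 + 2 * (a + 1) + 2 * n + 4) =
          C₁ * ℓ k + C₂ := by
        simp only [C₁, C₂]
        ring
      rw [h1]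
      linarith [k.cast_nonneg (α := ℝ)]
  by_contra hne
  refine hnonpos.not_gt (((continuous_slice hf.continuousOn ht x).mul
    hφ.continuous).integral_pos_of_hasCompactSupport_nonneg_nonzero hφc.mul_left
      (fun y => mul_nonneg (hf0 _) (hφ0 y)) (x := 0) ?_)
  simpa using ⟨hne, hφpos.ne'⟩

/-- **Maximum-principle form of Theorem 1 (Euclidean case).** If `u` is a smooth
subsolution of the heat equation on `ℝⁿ × (0,1]` whose positive part `u₊` tends to
`0` in `L²_loc` as `t → 0⁺` and satisfies the time-weighted `L²` growth bound
`∫₀¹ tᵃ ∫_{B(0,r)} u₊² ≤ e^{L(r)}` with `∫₁^∞ r / L(r) dr = ∞`, then `u ≤ 0`. -/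
theorem heat_maximum_principle_time_weighted_L2 {n : ℕ}
    (u : ℝ → EuclideanSpace ℝ (Fin n) → ℝ)
    (hu_smooth : ContDiffOn ℝ (⊤ : ℕ∞)
      (fun p : ℝ × EuclideanSpace ℝ (Fin n) => u p.1 p.2) (Set.Ioc (0:ℝ) 1 ×ˢ Set.univ))
    (hu_subsol : ∀ t ∈ Set.Ioc (0:ℝ) 1, ∀ x, deriv (fun s => u s x) t ≤ heatLap (u t) x)
    (hu_init : ∀ R > (0:ℝ),
      Tendsto (fun t => ∫⁻ x in ball (0 : EuclideanSpace ℝ (Fin n)) R,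
        ENNReal.ofReal ((max (u t x) 0) ^ 2)) (nhdsWithin 0 (Set.Ioi 0)) (nhds 0))
    (a : ℝ) (ha : 0 < a)
    (L : ℝ → ℝ)
    (hL_pos : ∀ r > (0:ℝ), 0 < L r)
    (hL_mono : ∀ r s : ℝ, 0 < r → r ≤ s → L r ≤ L s)
    (hL_div : ∫⁻ r in Set.Ioi (1:ℝ), ENNReal.ofReal (r / L r) = ⊤)
    (hu_growth : ∀ r > (0:ℝ),
      ∫⁻ t in Set.Ioc (0:ℝ) 1, ENNReal.ofReal (t ^ a) *
        ∫⁻ x in ball (0 : EuclideanSpace ℝ (Fin n)) r,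
          ENNReal.ofReal ((max (u t x) 0) ^ 2)
      ≤ ENNReal.ofReal (Real.exp (L r))) :
    ∀ t ∈ Set.Ioc (0:ℝ) 1, ∀ x, u t x ≤ 0 := by
  have hsub : Ioo (0 : ℝ) 1 ×ˢ (univ : Set (EuclideanSpace ℝ (Fin n))) ⊆ Ioc 0 1 ×ˢ univ :=
    prod_mono Ioo_subset_Ioc_self subset_rfl
  set U : ℝ × EuclideanSpace ℝ (Fin n) → ℝ := fun p => u p.1 p.2
  have hU : ContDiffOn ℝ (⊤ : ℕ∞) U (Ioo (0 : ℝ) 1 ×ˢ univ) := hu_smooth.mono hsub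
  have hsq : ∀ p, ENNReal.ofReal (smoothPosPart (U p) ^ 2) ≤
      ENNReal.ofReal (max (u p.1 p.2) 0 ^ 2) := fun p =>
    ENNReal.ofReal_le_ofReal
      (pow_le_pow_left₀ (smoothPosPart_nonneg _) (smoothPosPart_le _) 2)
  have hzero : ∀ t ∈ Ioo (0 : ℝ) 1, ∀ x, smoothPosPart (U (t, x)) = 0 := by
    intro t ht x
    refine eq_zero_of_heat_subsolution_of_nonneg (f := fun p => smoothPosPart (U p)) ha hL_pos
      (not_summable_four_pow_div hL_pos hL_mono hL_div) (contDiff_smoothPosPart.comp_contDiffOn hU)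
      (fun p => smoothPosPart_nonneg _) (fun s hs y => ?_) (fun R hR => ?_) (fun r hr => ?_) ht x
    · have hp : (s, y) ∈ Ioo (0 : ℝ) 1 ×ˢ (univ : Set (EuclideanSpace ℝ (Fin n))) :=
        ⟨hs, mem_univ y⟩
      have hd := hU.differentiableAt_of_isOpen isOpen_timeStrip hp
      have h1 := hu_subsol s (Ioo_subset_Ioc_self hs) y
      have h2 : heatLap (u s) y = spaceLap U (s, y) := by
        simpa [U] using heatLap_slice hU hs 0 y
      rw [hd.hasDerivAt_fst.deriv, h2] at h1
      rw [fderiv_smoothPosPart_comp hd]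
      exact (mul_le_mul_of_nonneg_left h1 (Real.smoothTransition.nonneg _)).trans
        (smoothTransition_mul_spaceLap_le hU hp)
    · exact tendsto_of_tendsto_of_tendsto_of_le_of_le tendsto_const_nhds (hu_init R hR)
        (fun _ => zero_le) fun s => lintegral_mono fun y => hsq (s, y)
    · exact (lintegral_mono fun s =>
        mul_le_mul_right (lintegral_mono fun y => hsq (s, y)) _).trans (hu_growth r hr)
  have hnonpos : ∀ t ∈ Ioo (0 : ℝ) 1, ∀ x, u t x ≤ 0 := fun t ht x => by
    by_contra! h
    exact (smoothPosPart_pos h).ne' (hzero t ht x)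
  intro t ht x
  rcases ht.2.lt_or_eq with h | rfl
  · exact hnonpos t ⟨ht.1, h⟩ x
  · have hcont : ContinuousOn (fun s => u s x) (Ioc (0 : ℝ) 1) :=
      hu_smooth.continuousOn.comp (f := fun s : ℝ => (s, x)) (by fun_prop)
        fun s hs => ⟨hs, mem_univ _⟩
    have htend : Tendsto (fun s => u s x) (nhdsWithin 1 (Iio 1)) (nhds (u 1 x)) := by
      rw [← nhdsWithin_Ioo_eq_nhdsLT one_pos]
      exact (hcont 1 ht).mono_left (nhdsWithin_mono 1 Ioo_subset_Ioc_self)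
    refine le_of_tendsto htend ?_
    filter_upwards [Ioo_mem_nhdsLT one_pos] with s hs using hnonpos s hs x
end

section
/- Let u₁, u₂ be two smooth solutions of the heat equation ∂ₜ u = Δ u on ℝⁿ × (0,1] with the same initial data in the sense that ∫_{B(0,R)} (u₁ − u₂)(x,t)² dx → 0 as t → 0⁺ for every R > 0. If there exist a > 0 and a positive nondecreasing function L with ∫₁^∞ r/L(r) dr = ∞ such that ∫₀¹ tᵃ ∫_{B(0,r)} (u₁ − u₂)(x,t)² dx dt ≤ e^{L(r)} for all r > 0, then u₁ ≡ u₂ on ℝⁿ × (0,1]. -/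
open MeasureTheory Filter Set Metric

theorem integral_mul_second_fderiv_le {E : Type*} [NormedAddCommGroup E] [NormedSpace ℝ E]
    [FiniteDimensional ℝ E] [MeasurableSpace E] [BorelSpace E] (μ : Measure E)
    [μ.IsAddHaarMeasure] {g φ : E → ℝ} (hg : ContDiff ℝ 2 g) (hφ : ContDiff ℝ 2 φ)
    (hc : HasCompactSupport φ) (hφ0 : ∀ x, 0 ≤ φ x) (e : E) :
    ∫ x, 2 * g x * fderiv ℝ (fun y => fderiv ℝ g y e) x e * φ x ∂μ
      ≤ ∫ x, g x ^ 2 * fderiv ℝ (fun y => fderiv ℝ φ y e) x e ∂μ := by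
  have key : ∀ h : E → ℝ, ContDiff ℝ 2 h → ContDiff ℝ 1 (fun y => fderiv ℝ h y e) := fun h hh =>
    (hh.fderiv_right (m := 1) le_rfl).clm_apply contDiff_const
  have key0 : ∀ h : E → ℝ, ContDiff ℝ 1 h → Continuous (fun y => fderiv ℝ h y e) := fun h hh =>
    (hh.continuous_fderiv one_ne_zero).clm_apply continuous_const
  have hg1 := key g hg
  have hφ1 := key φ hφ
  have hP : ContDiff ℝ 2 (fun x => g x ^ 2) := hg.pow 2
  have hP1 := key _ hP
  have hgd : ∀ x, HasFDerivAt g (fderiv ℝ g x) x := fun x =>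
    (hg.differentiable two_ne_zero x).hasFDerivAt
  have hPd : (fun x => fderiv ℝ (fun x => g x ^ 2) x e) = fun x => 2 * g x * fderiv ℝ g x e := by
    ext x
    rw [((hgd x).pow 2).fderiv]
    simp
  have hPdd : ∀ x, fderiv ℝ (fun y => fderiv ℝ (fun x => g x ^ 2) y e) x e
      = 2 * (fderiv ℝ g x e) ^ 2 + 2 * g x * fderiv ℝ (fun y => fderiv ℝ g y e) x e := by
    intro x
    have := ((hgd x).const_mul 2).mul (hg1.differentiable one_ne_zero x).hasFDerivAt
    rw [hPd, HasFDerivAt.fderiv (f := fun x => 2 * g x * fderiv ℝ g x e) this]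
    simp
    ring
  have hcd : HasCompactSupport (fun y => fderiv ℝ φ y e) := hc.fderiv_apply (𝕜 := ℝ) e
  have hcdd : HasCompactSupport (fun x => fderiv ℝ (fun y => fderiv ℝ φ y e) x e) :=
    hcd.fderiv_apply (𝕜 := ℝ) e
  have hint : ∀ p q : E → ℝ, Continuous p → Continuous q → HasCompactSupport q →
      Integrable (fun x => p x * q x) μ := fun p q hp hq hs =>
    (hp.mul hq).integrable_of_hasCompactSupport hs.mul_left
  have c1 := key0 _ hP1
  have c2 := key0 _ hφ1
  have i1 : ∫ x, fderiv ℝ (fun y => fderiv ℝ (fun x => g x ^ 2) y e) x e * φ x ∂μ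
      = - ∫ x, fderiv ℝ (fun x => g x ^ 2) x e * fderiv ℝ φ x e ∂μ := by
    rw [integral_mul_fderiv_eq_neg_fderiv_mul_of_integrable
      (hint _ _ c1 hφ.continuous hc) (hint _ _ hP1.continuous hφ1.continuous hcd)
      (hint _ _ hP1.continuous hφ.continuous hc)
      (fun x _ => hP1.differentiable one_ne_zero x) (fun x _ => hφ.differentiable two_ne_zero x),
      neg_neg]
  have i2 : ∫ x, g x ^ 2 * fderiv ℝ (fun y => fderiv ℝ φ y e) x e ∂μ
      = - ∫ x, fderiv ℝ (fun x => g x ^ 2) x e * fderiv ℝ φ x e ∂μ :=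
    integral_mul_fderiv_eq_neg_fderiv_mul_of_integrable
      (hint _ _ hP1.continuous hφ1.continuous hcd) (hint _ _ hP.continuous c2 hcdd)
      (hint _ _ hP.continuous hφ1.continuous hcd)
      (fun x _ => hP.differentiable two_ne_zero x) (fun x _ => hφ1.differentiable one_ne_zero x)
  rw [i2, ← i1]
  refine integral_mono (hint _ _ ((continuous_const.mul hg.continuous).mul (key0 _ hg1))
    hφ.continuous hc) (hint _ _ c1 hφ.continuous hc) fun x => ?_
  simp only [hPdd]
  nlinarith [mul_nonneg (sq_nonneg (fderiv ℝ g x e)) (hφ0 x)]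

theorem contDiff_two_of_hasDerivAt {f f₁ f₂ : ℝ → ℝ} (h₁ : ∀ q, HasDerivAt f (f₁ q) q)
    (h₂ : ∀ q, HasDerivAt f₁ (f₂ q) q) (hc : Continuous f₂) : ContDiff ℝ 2 f := by
  have e1 : deriv f = f₁ := funext fun q => (h₁ q).deriv
  have e2 : deriv f₁ = f₂ := funext fun q => (h₂ q).deriv
  have : ContDiff ℝ 1 f₁ := contDiff_one_iff_deriv.2
    ⟨fun q => (h₂ q).differentiableAt, e2 ▸ hc⟩
  rw [show (2 : WithTop ℕ∞) = 1 + 1 by norm_num, contDiff_succ_iff_deriv]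
  exact ⟨fun q => (h₁ q).differentiableAt, by simp, e1 ▸ this⟩

theorem second_fderiv_radial {n : ℕ} {f f₁ f₂ : ℝ → ℝ} (h₁ : ∀ q, HasDerivAt f (f₁ q) q)
    (h₂ : ∀ q, HasDerivAt f₁ (f₂ q) q) (x : EuclideanSpace ℝ (Fin n)) (i : Fin n) :
    fderiv ℝ (fun y => fderiv ℝ (fun z : EuclideanSpace ℝ (Fin n) => f (‖z‖ ^ 2)) y
        (EuclideanSpace.single i (1 : ℝ))) x (EuclideanSpace.single i (1 : ℝ))
      = 4 * x i ^ 2 * f₂ (‖x‖ ^ 2) + 2 * f₁ (‖x‖ ^ 2) := by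
  have hq : ∀ y : EuclideanSpace ℝ (Fin n), HasFDerivAt (fun z : EuclideanSpace ℝ (Fin n) =>
      ‖z‖ ^ 2) (2 • innerSL ℝ y) y := fun y => (hasStrictFDerivAt_norm_sq y).hasFDerivAt
  have e1 : (fun y => fderiv ℝ (fun z : EuclideanSpace ℝ (Fin n) => f (‖z‖ ^ 2)) y
      (EuclideanSpace.single i (1 : ℝ))) = fun y => f₁ (‖y‖ ^ 2) * (2 * y i) := by
    ext y
    rw [HasFDerivAt.fderiv (f := fun z : EuclideanSpace ℝ (Fin n) => f (‖z‖ ^ 2))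
      ((h₁ _).comp_hasFDerivAt y (hq y))]
    simp [EuclideanSpace.inner_single_right]
  have hi : HasFDerivAt (fun y : EuclideanSpace ℝ (Fin n) => 2 * y i)
      ((2 : ℝ) • (EuclideanSpace.proj i : EuclideanSpace ℝ (Fin n) →L[ℝ] ℝ)) x :=
    ((EuclideanSpace.proj i : EuclideanSpace ℝ (Fin n) →L[ℝ] ℝ).hasFDerivAt).const_mul 2
  rw [e1, HasFDerivAt.fderiv (f := fun y : EuclideanSpace ℝ (Fin n) => f₁ (‖y‖ ^ 2) * (2 * y i))
    (((h₂ _).comp_hasFDerivAt x (hq x)).mul hi)]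
  simp [EuclideanSpace.inner_single_right]
  ring

theorem integral_mul_heatLap_mul_radial_le {n : ℕ} {g : EuclideanSpace ℝ (Fin n) → ℝ}
    (hg : ContDiff ℝ 2 g) {f f₁ f₂ : ℝ → ℝ} (h₁ : ∀ q, HasDerivAt f (f₁ q) q)
    (h₂ : ∀ q, HasDerivAt f₁ (f₂ q) q) (hf₂ : Continuous f₂) {R : ℝ}
    (hR : ∀ q, R ^ 2 ≤ q → f q = 0) (hR2 : ∀ q, R ^ 2 ≤ q → f₂ q = 0)
    (hf0 : ∀ q, 0 ≤ f q) (hf1 : ∀ q, f₁ q ≤ 0) :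
    ∫ x, 2 * g x * heatLap g x * f (‖x‖ ^ 2)
      ≤ ∫ x, g x ^ 2 * (4 * ‖x‖ ^ 2 * f₂ (‖x‖ ^ 2)) := by
  have hsupp : ∀ h : EuclideanSpace ℝ (Fin n) → ℝ, (∀ x, R ^ 2 ≤ ‖x‖ ^ 2 → h x = 0) →
      HasCompactSupport h := fun h hh =>
    HasCompactSupport.intro (isCompact_closedBall (0 : EuclideanSpace ℝ (Fin n)) |R|)
      fun x hx => hh x (by
        rw [mem_closedBall_zero_iff, not_le] at hx
        exact (sq_lt_sq.2 (hx.trans_le (le_abs_self _))).le)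
  have hφ : ContDiff ℝ 2 (fun z : EuclideanSpace ℝ (Fin n) => f (‖z‖ ^ 2)) :=
    (contDiff_two_of_hasDerivAt h₁ h₂ hf₂).comp (contDiff_norm_sq ℝ)
  have hc : HasCompactSupport (fun z : EuclideanSpace ℝ (Fin n) => f (‖z‖ ^ 2)) :=
    hsupp _ fun x hx => hR _ hx
  have key := fun i : Fin n => integral_mul_second_fderiv_le volume hg hφ hc (fun x => hf0 _)
    (EuclideanSpace.single i (1 : ℝ))
  simp only [second_fderiv_radial h₁ h₂] at key
  have cD : ∀ (h : EuclideanSpace ℝ (Fin n) → ℝ) (e : EuclideanSpace ℝ (Fin n)),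
      ContDiff ℝ 2 h → Continuous (fun x => fderiv ℝ (fun y => fderiv ℝ h y e) x e) :=
    fun h e hh => (((hh.fderiv_right (m := 1) le_rfl).clm_apply
      contDiff_const).continuous_fderiv one_ne_zero).clm_apply continuous_const
  have hf₁c : Continuous f₁ := continuous_iff_continuousAt.2 fun q => (h₂ q).continuousAt
  have cg := hg.continuous
  have cφ := hφ.continuous
  have hf₁0 : ∀ q, R ^ 2 ≤ q → f₁ q = 0 := by
    intro q hq
    have : IsLocalMin f q := Filter.Eventually.of_forall fun y => by rw [hR q hq]; exact hf0 y
    exact this.hasDerivAt_eq_zero (h₁ q)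
  calc ∫ x, 2 * g x * heatLap g x * f (‖x‖ ^ 2)
      = ∑ i : Fin n, ∫ x, 2 * g x * fderiv ℝ (fun y => fderiv ℝ g y
          (EuclideanSpace.single i (1 : ℝ))) x (EuclideanSpace.single i (1 : ℝ))
          * f (‖x‖ ^ 2) := by
        rw [← integral_finsetSum]
        · refine integral_congr_ae (Filter.Eventually.of_forall fun x => ?_)
          simp only [heatLap, Finset.mul_sum, Finset.sum_mul]
        · intro i _
          exact (((continuous_const.mul cg).mul (cD g _ hg)).mul
            cφ).integrable_of_hasCompactSupport hc.mul_left
    _ ≤ ∑ i : Fin n, ∫ x, g x ^ 2 * (4 * x i ^ 2 * f₂ (‖x‖ ^ 2) + 2 * f₁ (‖x‖ ^ 2)) :=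
        Finset.sum_le_sum fun i _ => key i
    _ = ∫ x, ∑ i : Fin n, g x ^ 2 * (4 * x i ^ 2 * f₂ (‖x‖ ^ 2) + 2 * f₁ (‖x‖ ^ 2)) := by
        rw [integral_finsetSum]
        intro i _
        refine Continuous.integrable_of_hasCompactSupport (by fun_prop) (hsupp _ fun x hx => ?_)
        simp [hR2 _ hx, hf₁0 _ hx]
    _ ≤ _ := by
        refine integral_mono (Continuous.integrable_of_hasCompactSupport (by fun_prop)
          (hsupp _ fun x hx => ?_)) (Continuous.integrable_of_hasCompactSupport (by fun_prop)
          (hsupp _ fun x hx => ?_)) fun x => ?_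
        · simp [hR2 _ hx, hf₁0 _ hx]
        · simp [hR2 _ hx]
        · simp only
          rw [← Finset.mul_sum, Finset.sum_add_distrib, ← Finset.sum_mul, ← Finset.mul_sum,
            ← EuclideanSpace.real_norm_sq_eq]
          refine mul_le_mul_of_nonneg_left ?_ (sq_nonneg _)
          simp only [Finset.sum_const, nsmul_eq_mul]
          nlinarith [mul_nonneg (Nat.cast_nonneg (α := ℝ) (Finset.univ : Finset (Fin n)).card)
            (neg_nonneg.2 (hf1 (‖x‖ ^ 2)))]

theorem continuous_slice_s3 {E : Type*} [NormedAddCommGroup E] {U : Set ℝ} {G : ℝ → E → ℝ}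
    (hG : ContinuousOn (fun p : ℝ × E => G p.1 p.2) (U ×ˢ univ)) {t : ℝ} (ht : t ∈ U) :
    Continuous (G t) :=
  hG.comp_continuous (f := fun x : E => (t, x)) (by fun_prop) fun _ => ⟨ht, mem_univ _⟩

section Parametric

variable {E : Type*} [NormedAddCommGroup E] [ProperSpace E]

theorem exists_nhds_bound_on_closedBall {U : Set ℝ} (hU : IsOpen U) {G : ℝ → E → ℝ}
    (hG : ContinuousOn (fun p : ℝ × E => G p.1 p.2) (U ×ˢ univ)) {t : ℝ} (ht : t ∈ U) (R : ℝ) :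
    ∃ V ∈ nhds t, V ⊆ U ∧ ∃ M, ∀ s ∈ V, ∀ x ∈ closedBall (0 : E) R, ‖G s x‖ ≤ M := by
  obtain ⟨δ, hδ, hsub⟩ := Metric.nhds_basis_closedBall.mem_iff.1 (hU.mem_nhds ht)
  obtain ⟨M, hM⟩ := ((isCompact_closedBall t δ).prod
    (isCompact_closedBall (0 : E) R)).exists_bound_of_continuousOn
      (hG.mono (prod_mono hsub (subset_univ _)))
  exact ⟨_, closedBall_mem_nhds t hδ, hsub, M, fun s hs x hx => hM (s, x) ⟨hs, hx⟩⟩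

variable [MeasurableSpace E] [BorelSpace E] {μ : Measure E} [IsFiniteMeasureOnCompacts μ]

theorem continuousOn_setIntegral_ball {U : Set ℝ} (hU : IsOpen U) {G : ℝ → E → ℝ}
    (hG : ContinuousOn (fun p : ℝ × E => G p.1 p.2) (U ×ˢ univ)) (R : ℝ) :
    ContinuousOn (fun t => ∫ x in ball (0 : E) R, G t x ∂μ) U := by
  intro t ht
  obtain ⟨V, hV, hVU, M, hM⟩ := exists_nhds_bound_on_closedBall hU hG ht R
  refine (continuousAt_of_dominated (bound := fun _ => M) ?_ ?_ ?_ ?_).continuousWithinAt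
  · filter_upwards [hU.mem_nhds ht] with s hs
    exact (continuous_slice_s3 hG hs).aestronglyMeasurable
  · filter_upwards [hV] with s hs
    filter_upwards [ae_restrict_mem measurableSet_ball] with x hx
    exact hM s hs x (ball_subset_closedBall hx)
  · exact integrableOn_const (measure_ball_lt_top.ne)
  · refine Eventually.of_forall fun x => ?_
    exact ContinuousAt.comp (f := fun s : ℝ => (s, x))
      (hG.continuousAt ((hU.prod isOpen_univ).mem_nhds ⟨ht, mem_univ x⟩)) (by fun_prop)

theorem hasDerivAt_integral_of_support_subset_closedBall {U : Set ℝ} (hU : IsOpen U)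
    {G G' : ℝ → E → ℝ}
    (hG : ContinuousOn (fun p : ℝ × E => G p.1 p.2) (U ×ˢ univ))
    (hG' : ContinuousOn (fun p : ℝ × E => G' p.1 p.2) (U ×ˢ univ))
    (hd : ∀ t ∈ U, ∀ x, HasDerivAt (fun s => G s x) (G' t x) t) {R : ℝ}
    (h0 : ∀ t ∈ U, ∀ x ∉ closedBall (0 : E) R, G t x = 0)
    (h0' : ∀ t ∈ U, ∀ x ∉ closedBall (0 : E) R, G' t x = 0) {t : ℝ} (ht : t ∈ U) :
    Integrable (G' t) μ ∧ HasDerivAt (fun s => ∫ x, G s x ∂μ) (∫ x, G' t x ∂μ) t := by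
  obtain ⟨V, hV, hVU, M, hM⟩ := exists_nhds_bound_on_closedBall hU hG' ht R
  refine hasDerivAt_integral_of_dominated_loc_of_deriv_le
    (bound := (closedBall (0 : E) R).indicator fun _ => M) hV ?_ ?_ ?_ ?_ ?_ ?_
  · filter_upwards [hU.mem_nhds ht] with s hs
    exact (continuous_slice_s3 hG hs).aestronglyMeasurable
  · exact (continuous_slice_s3 hG ht).integrable_of_hasCompactSupport
      (HasCompactSupport.intro (isCompact_closedBall 0 R) (h0 t ht))
  · exact (continuous_slice_s3 hG' ht).aestronglyMeasurable
  · refine Eventually.of_forall fun x s hs => ?_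
    by_cases hx : x ∈ closedBall (0 : E) R
    · rw [indicator_of_mem hx]
      exact hM s hs x hx
    · rw [indicator_of_notMem hx, h0' s (hVU hs) x hx, norm_zero]
  · exact (integrable_indicator_iff measurableSet_closedBall).2
      (integrableOn_const measure_closedBall_lt_top.ne)
  · exact Eventually.of_forall fun x s hs => hd s (hVU hs) x

end Parametric

/-- Classical solutions of the heat equation on `(0,1) × ℝⁿ`, with the regularity used in energy
estimates. -/
structure IsHeatSolution {n : ℕ} (u : ℝ → EuclideanSpace ℝ (Fin n) → ℝ) : Prop where
  continuousOn : ContinuousOn (fun p : ℝ × EuclideanSpace ℝ (Fin n) => u p.1 p.2)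
    (Ioo (0 : ℝ) 1 ×ˢ univ)
  contDiff : ∀ t ∈ Ioo (0 : ℝ) 1, ContDiff ℝ 2 (u t)
  hasDerivAt : ∀ t ∈ Ioo (0 : ℝ) 1, ∀ x, HasDerivAt (fun s => u s x) (heatLap (u t) x) t
  continuousOn_heatLap : ContinuousOn
    (fun p : ℝ × EuclideanSpace ℝ (Fin n) => heatLap (u p.1) p.2) (Ioo (0 : ℝ) 1 ×ˢ univ)

/-- The local energy `∫_{B(0,r)} u(x,t)² dx`. -/
noncomputable def localEnergy {n : ℕ} (u : ℝ → EuclideanSpace ℝ (Fin n) → ℝ) (r t : ℝ) : ℝ :=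
  ∫ x in ball (0 : EuclideanSpace ℝ (Fin n)) r, u t x ^ 2

/-- Radial weights `F t ‖x‖²` supported in a ball and nonincreasing in the radius, together with
their derivatives `F₁`, `F₂` in the squared radius and `Ft` in time. -/
structure IsEnergyWeight (F F₁ F₂ Ft : ℝ → ℝ → ℝ) (β R : ℝ) : Prop where
  hasDerivAt_fst : ∀ t ∈ Ioo 0 β, ∀ q, HasDerivAt (F t) (F₁ t q) q
  hasDerivAt_snd : ∀ t ∈ Ioo 0 β, ∀ q, HasDerivAt (F₁ t) (F₂ t q) q
  continuous_snd : ∀ t ∈ Ioo 0 β, Continuous (F₂ t)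
  hasDerivAt_time : ∀ t ∈ Ioo 0 β, ∀ q, HasDerivAt (fun t => F t q) (Ft t q) t
  continuousOn : ContinuousOn (fun p : ℝ × ℝ => F p.1 p.2) (Ioo 0 β ×ˢ univ)
  continuousOn_time : ContinuousOn (fun p : ℝ × ℝ => Ft p.1 p.2) (Ioo 0 β ×ˢ univ)
  eq_zero : ∀ t ∈ Ioo 0 β, ∀ q, R ^ 2 ≤ q → F t q = 0
  snd_eq_zero : ∀ t ∈ Ioo 0 β, ∀ q, R ^ 2 ≤ q → F₂ t q = 0
  time_eq_zero : ∀ t ∈ Ioo 0 β, ∀ q, R ^ 2 ≤ q → Ft t q = 0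
  nonneg : ∀ t ∈ Ioo 0 β, ∀ q, 0 ≤ F t q
  fst_nonpos : ∀ t ∈ Ioo 0 β, ∀ q, F₁ t q ≤ 0

namespace IsHeatSolution

variable {n : ℕ} {u : ℝ → EuclideanSpace ℝ (Fin n) → ℝ}

theorem continuous (hu : IsHeatSolution u) {t : ℝ} (ht : t ∈ Ioo (0 : ℝ) 1) : Continuous (u t) :=
  (hu.contDiff t ht).continuous

theorem integrableOn_sq (hu : IsHeatSolution u) {t : ℝ} (ht : t ∈ Ioo (0 : ℝ) 1) (r : ℝ) :
    IntegrableOn (fun x => u t x ^ 2) (ball 0 r) :=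
  (((hu.continuous ht).pow 2).continuousOn.integrableOn_compact
    (isCompact_closedBall 0 r)).mono_set ball_subset_closedBall

theorem continuousOn_localEnergy (hu : IsHeatSolution u) (r : ℝ) :
    ContinuousOn (localEnergy u r) (Ioo 0 1) :=
  continuousOn_setIntegral_ball isOpen_Ioo (G := fun t x => u t x ^ 2) (hu.continuousOn.pow 2) r

theorem localEnergy_mono (hu : IsHeatSolution u) {t : ℝ} (ht : t ∈ Ioo (0 : ℝ) 1) {r R : ℝ}
    (h : r ≤ R) : localEnergy u r t ≤ localEnergy u R t :=
  setIntegral_mono_set (hu.integrableOn_sq ht R) (Eventually.of_forall fun _ => sq_nonneg _)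
    (ball_subset_ball h).eventuallyLE

theorem weighted_energy_le (hu : IsHeatSolution u) {F F₁ F₂ Ft : ℝ → ℝ → ℝ} {s T β R K : ℝ}
    (hs : 0 < s) (hsT : s < T) (hTβ : T < β) (hβ : β ≤ 1) (hR : 0 < R)
    (hW : IsEnergyWeight F F₁ F₂ Ft β R)
    (hK : ∀ t ∈ Ioo s T, ∀ q, 0 ≤ q → q < R ^ 2 → Ft t q + 4 * q * F₂ t q ≤ K) :
    ∫ x, u T x ^ 2 * F T (‖x‖ ^ 2) ≤
      (∫ x, u s x ^ 2 * F s (‖x‖ ^ 2)) + K * ∫ t in s..T, localEnergy u R t := by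
  obtain ⟨h₁, h₂, hF₂, ht, hF, hFt, hF0, hF20, hFt0, hpos, hanti⟩ := hW
  have hsub : Ioo 0 β ⊆ Ioo (0 : ℝ) 1 := Ioo_subset_Ioo_right hβ
  have hcomp : ∀ H : ℝ → ℝ → ℝ, ContinuousOn (fun p : ℝ × ℝ => H p.1 p.2) (Ioo 0 β ×ˢ univ) →
      ContinuousOn (fun p : ℝ × EuclideanSpace ℝ (Fin n) => H p.1 (‖p.2‖ ^ 2))
        (Ioo 0 β ×ˢ univ) := fun H hH =>
    hH.comp (f := fun p : ℝ × EuclideanSpace ℝ (Fin n) => (p.1, ‖p.2‖ ^ 2)) (by fun_prop)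
      fun p hp => ⟨hp.1, mem_univ _⟩
  have hFc := hcomp F hF
  have hFtc := hcomp Ft hFt
  have huc := hu.continuousOn.mono (prod_mono hsub (subset_univ univ))
  have hlc := hu.continuousOn_heatLap.mono (prod_mono hsub (subset_univ univ))
  have houter : ∀ x ∉ closedBall (0 : EuclideanSpace ℝ (Fin n)) R, R ^ 2 ≤ ‖x‖ ^ 2 := by
    intro x hx
    rw [mem_closedBall_zero_iff, not_le] at hx
    exact pow_le_pow_left₀ hR.le hx.le 2
  have hd := fun t ht' => hasDerivAt_integral_of_support_subset_closedBall
    (μ := (volume : Measure (EuclideanSpace ℝ (Fin n)))) isOpen_Ioo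
    (G := fun t x => u t x ^ 2 * F t (‖x‖ ^ 2))
    (G' := fun t x => 2 * u t x * heatLap (u t) x * F t (‖x‖ ^ 2) + u t x ^ 2 * Ft t (‖x‖ ^ 2))
    ((huc.pow 2).mul hFc)
    ((((continuousOn_const.mul huc).mul hlc).mul hFc).add ((huc.pow 2).mul hFtc))
    (fun t ht' x => by
      refine HasDerivAt.congr_deriv
        (((hu.hasDerivAt t (hsub ht') x).pow 2).mul (ht t ht' (‖x‖ ^ 2))) ?_
      simp) (R := R)
    (fun t ht' x hx => by simp [hF0 t ht' _ (houter x hx)])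
    (fun t ht' x hx => by simp [hF0 t ht' _ (houter x hx), hFt0 t ht' _ (houter x hx)])
    (t := t) ht'
  have hIcc : Icc s T ⊆ Ioo 0 β := fun t h => ⟨hs.trans_le h.1, h.2.trans_lt hTβ⟩
  have hJ : ContinuousOn (localEnergy u R) (Icc s T) :=
    (hu.continuousOn_localEnergy R).mono (hIcc.trans hsub)
  have main := intervalIntegral.sub_le_integral_of_hasDeriv_right_of_le
    (g := fun t => ∫ x, u t x ^ 2 * F t (‖x‖ ^ 2)) (φ := fun t => K * localEnergy u R t) hsT.le
    (fun t h => (hd t (hIcc h)).2.continuousAt.continuousWithinAt)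
    (fun t h => (hd t (hIcc (Ioo_subset_Icc_self h))).2.hasDerivWithinAt)
    (continuousOn_const.mul hJ).integrableOn_Icc ?_
  · rw [intervalIntegral.integral_const_mul] at main
    linarith
  intro t h
  have htβ := hIcc (Ioo_subset_Icc_self h)
  have hut := hu.continuous (hsub htβ)
  have hF2t := hF₂ t htβ
  have cFt : Continuous fun x : EuclideanSpace ℝ (Fin n) => Ft t (‖x‖ ^ 2) :=
    continuous_slice_s3 (G := fun t (x : EuclideanSpace ℝ (Fin n)) => Ft t (‖x‖ ^ 2)) hFtc htβ
  have cF : Continuous fun x : EuclideanSpace ℝ (Fin n) => F t (‖x‖ ^ 2) :=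
    continuous_slice_s3 (G := fun t (x : EuclideanSpace ℝ (Fin n)) => F t (‖x‖ ^ 2)) hFc htβ
  have clap : Continuous (heatLap (u t)) := continuous_slice_s3 (G := fun t x => heatLap (u t) x) hlc htβ
  have hint : ∀ f : EuclideanSpace ℝ (Fin n) → ℝ, Continuous f →
      (∀ x, R ^ 2 ≤ ‖x‖ ^ 2 → f x = 0) → Integrable f := fun f hf hf0 =>
    hf.integrable_of_hasCompactSupport (HasCompactSupport.intro (isCompact_closedBall 0 R)
      fun x hx => hf0 x (houter x hx))
  have i1 : Integrable fun x : EuclideanSpace ℝ (Fin n) =>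
      2 * u t x * heatLap (u t) x * F t (‖x‖ ^ 2) :=
    hint _ (((continuous_const.mul hut).mul clap).mul cF) fun x hx => by simp [hF0 t htβ _ hx]
  have i2 : Integrable fun x : EuclideanSpace ℝ (Fin n) => u t x ^ 2 * Ft t (‖x‖ ^ 2) :=
    hint _ ((hut.pow 2).mul cFt) fun x hx => by simp [hFt0 t htβ _ hx]
  have i3 : Integrable fun x : EuclideanSpace ℝ (Fin n) =>
      u t x ^ 2 * (4 * ‖x‖ ^ 2 * F₂ t (‖x‖ ^ 2)) :=
    hint _ (by fun_prop) fun x hx => by simp [hF20 t htβ _ hx]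
  rw [integral_add i1 i2]
  calc _ ≤ (∫ x, u t x ^ 2 * (4 * ‖x‖ ^ 2 * F₂ t (‖x‖ ^ 2)))
        + ∫ x, u t x ^ 2 * Ft t (‖x‖ ^ 2) :=
        add_le_add_left (integral_mul_heatLap_mul_radial_le (hu.contDiff t (hsub htβ)) (h₁ t htβ)
          (h₂ t htβ) hF2t (hF0 t htβ) (hF20 t htβ) (hpos t htβ) (hanti t htβ)) _
    _ = ∫ x, (u t x ^ 2 * (4 * ‖x‖ ^ 2 * F₂ t (‖x‖ ^ 2)) + u t x ^ 2 * Ft t (‖x‖ ^ 2)) :=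
        (integral_add i3 i2).symm
    _ ≤ ∫ x, (ball (0 : EuclideanSpace ℝ (Fin n)) R).indicator (fun x => K * u t x ^ 2) x := by
        refine integral_mono (i3.add i2) ((integrable_indicator_iff measurableSet_ball).2
          ((hu.integrableOn_sq (hsub htβ) R).const_mul K)) fun x => ?_
        by_cases hx : ‖x‖ < R
        · simp only [indicator_of_mem (mem_ball_zero_iff.2 hx)]
          nlinarith [mul_le_mul_of_nonneg_left (hK t h (‖x‖ ^ 2) (sq_nonneg _)
            (pow_lt_pow_left₀ hx (norm_nonneg _) two_ne_zero)) (sq_nonneg (u t x))]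
        · have hx' : R ^ 2 ≤ ‖x‖ ^ 2 := pow_le_pow_left₀ hR.le (not_lt.1 hx) 2
          have hxb : x ∉ ball (0 : EuclideanSpace ℝ (Fin n)) R := by simpa using not_lt.1 hx
          simp [hF20 t htβ _ hx', hFt0 t htβ _ hx', hxb]
    _ = K * localEnergy u R t := by
        rw [integral_indicator measurableSet_ball, integral_const_mul, localEnergy]

theorem localEnergy_le_of_weight (hu : IsHeatSolution u) {F F₁ F₂ Ft : ℝ → ℝ → ℝ}
    {s T β r R K : ℝ} (hs : 0 < s) (hsT : s < T) (hTβ : T < β) (hβ : β ≤ 1) (hR : 0 < R)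
    (hW : IsEnergyWeight F F₁ F₂ Ft β R)
    (hK : ∀ t ∈ Ioo s T, ∀ q, 0 ≤ q → q < R ^ 2 → Ft t q + 4 * q * F₂ t q ≤ K)
    (hone : ∀ q < r ^ 2, 1 ≤ F T q) (hle : ∀ q, F s q ≤ 1) :
    localEnergy u r T ≤ localEnergy u R s + K * ∫ t in s..T, localEnergy u R t := by
  have hint : ∀ t ∈ Ioo 0 β, Integrable fun x => u t x ^ 2 * F t (‖x‖ ^ 2) := by
    intro t ht
    have hc : Continuous (F t) := continuous_slice_s3 hW.continuousOn ht
    have hut := hu.continuous (Ioo_subset_Ioo_right hβ ht)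
    refine ((hut.pow 2).mul (hc.comp (continuous_norm.pow 2))).integrable_of_hasCompactSupport
      (HasCompactSupport.intro (isCompact_closedBall 0 R) fun x hx => ?_)
    rw [mem_closedBall_zero_iff, not_le] at hx
    simp [hW.eq_zero t ht _ (pow_le_pow_left₀ hR.le hx.le 2)]
  have hTm : T ∈ Ioo 0 β := ⟨hs.trans hsT, hTβ⟩
  have hsm : s ∈ Ioo 0 β := ⟨hs, hsT.trans hTβ⟩
  have h1 : localEnergy u r T ≤ ∫ x, u T x ^ 2 * F T (‖x‖ ^ 2) := by
    rw [localEnergy, ← integral_indicator measurableSet_ball]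
    refine integral_mono ((integrable_indicator_iff measurableSet_ball).2
      (hu.integrableOn_sq (Ioo_subset_Ioo_right hβ hTm) r)) (hint T hTm) fun x => ?_
    by_cases hx : ‖x‖ < r
    · simp only [indicator_of_mem (mem_ball_zero_iff.2 hx)]
      exact le_mul_of_one_le_right (sq_nonneg _)
        (hone _ (pow_lt_pow_left₀ hx (norm_nonneg _) two_ne_zero))
    · rw [indicator_of_notMem (by simpa using hx)]
      exact mul_nonneg (sq_nonneg _) (hW.nonneg T hTm _)
  have h2 : ∫ x, u s x ^ 2 * F s (‖x‖ ^ 2) ≤ localEnergy u R s := by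
    rw [localEnergy, ← integral_indicator measurableSet_ball]
    refine integral_mono (hint s hsm) ((integrable_indicator_iff measurableSet_ball).2
      (hu.integrableOn_sq (Ioo_subset_Ioo_right hβ hsm) R)) fun x => ?_
    by_cases hx : ‖x‖ < R
    · simp only [indicator_of_mem (mem_ball_zero_iff.2 hx)]
      exact mul_le_of_le_one_right (sq_nonneg _) (hle _)
    · rw [indicator_of_notMem (by simpa using hx)]
      simp [hW.eq_zero s hsm _ (pow_le_pow_left₀ hR.le (not_lt.1 hx) 2)]
  linarith [hu.weighted_energy_le hs hsT hTβ hβ hR hW hK]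

end IsHeatSolution

theorem hasDerivAt_max_zero_pow (n : ℕ) (x : ℝ) :
    HasDerivAt (fun x : ℝ => max x 0 ^ (n + 2)) ((n + 2) * max x 0 ^ (n + 1)) x := by
  rcases lt_trichotomy x 0 with hx | rfl | hx
  · have : (fun x : ℝ => max x 0 ^ (n + 2)) =ᶠ[nhds x] fun _ => 0 := by
      filter_upwards [eventually_lt_nhds hx] with y hy
      simp [max_eq_right hy.le]
    simpa [max_eq_right hx.le] using (hasDerivAt_const x (0 : ℝ)).congr_of_eventuallyEq this
  · simp only [max_self, ne_eq, Nat.add_eq_zero_iff, one_ne_zero, and_false, not_false_eq_true,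
      zero_pow, mul_zero]
    have h2 : HasDerivAt (fun y : ℝ => y ^ (n + 2)) 0 0 := by
      simpa using hasDerivAt_pow (n + 2) (0 : ℝ)
    rw [hasDerivAt_iff_isLittleO] at h2 ⊢
    refine Asymptotics.IsBigO.trans_isLittleO
      (Asymptotics.IsBigO.of_bound' (Eventually.of_forall fun y => ?_)) h2
    simp only [max_self, ne_eq, Nat.add_eq_zero_iff, and_false, not_false_eq_true,
      zero_pow, sub_zero, smul_zero, norm_pow, OfNat.ofNat_ne_zero]
    refine pow_le_pow_left₀ (norm_nonneg _) ?_ _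
    rw [Real.norm_of_nonneg (le_max_right y 0), Real.norm_eq_abs]
    exact max_le (le_abs_self y) (abs_nonneg y)
  · have : (fun x : ℝ => max x 0 ^ (n + 2)) =ᶠ[nhds x] fun x => x ^ (n + 2) := by
      filter_upwards [eventually_gt_nhds hx] with y hy
      simp [max_eq_left hy.le]
    simpa [max_eq_left hx.le] using (hasDerivAt_pow (n + 2) x).congr_of_eventuallyEq this

/-- A nonincreasing `C²` cutoff on the line, equal to `1` on `(-∞, 0]` and to `0` on `[1, ∞)`. -/
noncomputable def cutoff (x : ℝ) : ℝ := max (1 - max x 0 ^ 3) 0 ^ 3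

/-- The derivative of `cutoff`. -/
noncomputable def cutoffDeriv (x : ℝ) : ℝ := -9 * (max (1 - max x 0 ^ 3) 0 ^ 2 * max x 0 ^ 2)

/-- The second derivative of `cutoff`. -/
noncomputable def cutoffDeriv₂ (x : ℝ) : ℝ :=
  54 * (max (1 - max x 0 ^ 3) 0 * max x 0 ^ 4) - 18 * (max (1 - max x 0 ^ 3) 0 ^ 2 * max x 0)

theorem hasDerivAt_cutoff (x : ℝ) : HasDerivAt cutoff (cutoffDeriv x) x := by
  have h1 := (hasDerivAt_max_zero_pow 1 x).const_sub 1
  have h2 := (hasDerivAt_max_zero_pow 1 (1 - max x 0 ^ 3)).comp x h1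
  refine h2.congr_deriv ?_
  simp only [cutoffDeriv]
  push_cast
  ring

theorem hasDerivAt_cutoffDeriv (x : ℝ) : HasDerivAt cutoffDeriv (cutoffDeriv₂ x) x := by
  have h1 := (hasDerivAt_max_zero_pow 1 x).const_sub 1
  have h2 := (hasDerivAt_max_zero_pow 0 (1 - max x 0 ^ 3)).comp x h1
  refine ((h2.mul (hasDerivAt_max_zero_pow 0 x)).const_mul (-9)).congr_deriv ?_
  simp only [cutoffDeriv₂, Function.comp]
  push_cast
  ring

theorem continuous_cutoffDeriv₂ : Continuous cutoffDeriv₂ := by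
  unfold cutoffDeriv₂
  fun_prop

theorem cutoff_nonneg (x : ℝ) : 0 ≤ cutoff x := pow_nonneg (le_max_right _ _) _

theorem cutoff_le_one (x : ℝ) : cutoff x ≤ 1 :=
  pow_le_one₀ (le_max_right _ _)
    (max_le (by linarith [pow_nonneg (le_max_right x 0) 3]) zero_le_one)

theorem cutoff_of_nonpos {x : ℝ} (hx : x ≤ 0) : cutoff x = 1 := by simp [cutoff, hx]

theorem max_one_sub_cube_of_one_le {x : ℝ} (hx : 1 ≤ x) : max (1 - max x 0 ^ 3) 0 = 0 :=
  max_eq_right (by linarith [one_le_pow₀ (n := 3) (hx.trans (le_max_left x 0))])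

theorem cutoff_of_one_le {x : ℝ} (hx : 1 ≤ x) : cutoff x = 0 := by
  simp [cutoff, max_one_sub_cube_of_one_le hx]

theorem cutoffDeriv_of_one_le {x : ℝ} (hx : 1 ≤ x) : cutoffDeriv x = 0 := by
  simp [cutoffDeriv, max_one_sub_cube_of_one_le hx]

theorem cutoffDeriv₂_of_one_le {x : ℝ} (hx : 1 ≤ x) : cutoffDeriv₂ x = 0 := by
  simp [cutoffDeriv₂, max_one_sub_cube_of_one_le hx]

theorem cutoffDeriv_of_nonpos {x : ℝ} (hx : x ≤ 0) : cutoffDeriv x = 0 := by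
  simp [cutoffDeriv, hx]

theorem cutoffDeriv₂_of_nonpos {x : ℝ} (hx : x ≤ 0) : cutoffDeriv₂ x = 0 := by
  simp [cutoffDeriv₂, hx]

theorem cutoffDeriv_nonpos (x : ℝ) : cutoffDeriv x ≤ 0 := by
  have : 0 ≤ max (1 - max x 0 ^ 3) 0 ^ 2 * max x 0 ^ 2 := by positivity
  unfold cutoffDeriv
  linarith

theorem neg_cutoffDeriv_le (x : ℝ) : -cutoffDeriv x ≤ 9 := by
  rcases le_total 1 x with hx | hx
  · simp [cutoffDeriv_of_one_le hx]
  have hw0 := le_max_right x 0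
  have hw : max x 0 ≤ 1 := max_le hx zero_le_one
  have hv : max (1 - max x 0 ^ 3) 0 ≤ 1 := max_le (by linarith [pow_nonneg hw0 3]) zero_le_one
  have := mul_le_one₀ (pow_le_one₀ (n := 2) (le_max_right _ _) hv) (by positivity)
    (pow_le_one₀ (n := 2) hw0 hw)
  unfold cutoffDeriv
  linarith

theorem cutoffDeriv₂_le (x : ℝ) : cutoffDeriv₂ x ≤ 54 := by
  rcases le_total 1 x with hx | hx
  · simp [cutoffDeriv₂_of_one_le hx]
  have hw0 := le_max_right x 0
  have hw : max x 0 ≤ 1 := max_le hx zero_le_one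
  have hv : max (1 - max x 0 ^ 3) 0 ≤ 1 := max_le (by linarith [pow_nonneg hw0 3]) zero_le_one
  have h1 := mul_le_one₀ hv (by positivity) (pow_le_one₀ (n := 4) hw0 hw)
  have h2 : 0 ≤ max (1 - max x 0 ^ 3) 0 ^ 2 * max x 0 := by positivity
  unfold cutoffDeriv₂
  linarith

/-- The cutoff `cutoff (p - 2)` damped by the Gaussian-type factor `exp (-X (p - 1)₊³)`. -/
noncomputable def damped (X p : ℝ) : ℝ := cutoff (p - 2) * Real.exp (-(X * max (p - 1) 0 ^ 3))

/-- The derivative of `damped X`. -/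
noncomputable def dampedDeriv (X p : ℝ) : ℝ :=
  (cutoffDeriv (p - 2) - cutoff (p - 2) * (3 * X * max (p - 1) 0 ^ 2))
    * Real.exp (-(X * max (p - 1) 0 ^ 3))

/-- The second derivative of `damped X`. -/
noncomputable def dampedDeriv₂ (X p : ℝ) : ℝ :=
  (cutoffDeriv₂ (p - 2) - 2 * cutoffDeriv (p - 2) * (3 * X * max (p - 1) 0 ^ 2)
    + cutoff (p - 2) * ((3 * X * max (p - 1) 0 ^ 2) ^ 2 - 6 * X * max (p - 1) 0))
    * Real.exp (-(X * max (p - 1) 0 ^ 3))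

theorem hasDerivAt_exp_damping (X p : ℝ) :
    HasDerivAt (fun p => Real.exp (-(X * max (p - 1) 0 ^ 3)))
      (Real.exp (-(X * max (p - 1) 0 ^ 3)) * -(X * (3 * max (p - 1) 0 ^ 2))) p := by
  have h := ((((hasDerivAt_max_zero_pow 1 (p - 1)).comp_sub_const p 1).const_mul X).neg).exp
  refine h.congr_deriv ?_
  norm_num

theorem hasDerivAt_damped (X p : ℝ) : HasDerivAt (damped X) (dampedDeriv X p) p := by
  refine (((hasDerivAt_cutoff (p - 2)).comp_sub_const p 2).mul
    (hasDerivAt_exp_damping X p)).congr_deriv ?_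
  simp only [dampedDeriv]
  ring

theorem hasDerivAt_dampedDeriv (X p : ℝ) :
    HasDerivAt (dampedDeriv X) (dampedDeriv₂ X p) p := by
  have h1 := (hasDerivAt_cutoff (p - 2)).comp_sub_const p 2
  have h2 := (hasDerivAt_cutoffDeriv (p - 2)).comp_sub_const p 2
  have h3 := ((hasDerivAt_max_zero_pow 0 (p - 1)).comp_sub_const p 1).const_mul (3 * X)
  refine ((h2.sub (h1.mul h3)).mul (hasDerivAt_exp_damping X p)).congr_deriv ?_
  simp only [dampedDeriv₂, Pi.sub_apply, Pi.mul_apply]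
  norm_num
  ring

theorem continuous_cutoff : Continuous cutoff :=
  continuous_iff_continuousAt.2 fun x => (hasDerivAt_cutoff x).continuousAt

theorem continuous_cutoffDeriv : Continuous cutoffDeriv :=
  continuous_iff_continuousAt.2 fun x => (hasDerivAt_cutoffDeriv x).continuousAt

theorem continuous_dampedDeriv₂ (X : ℝ) : Continuous (dampedDeriv₂ X) := by
  have h0 := continuous_cutoff
  have h1 := continuous_cutoffDeriv
  have h2 := continuous_cutoffDeriv₂
  unfold dampedDeriv₂
  fun_prop

theorem damped_error_le {X p : ℝ} (hX : 0 < X) (hp : 0 ≤ p) :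
    -(216 * max (p - 1) 0 ^ 3 * X ^ 2 * damped X p) + 4 * p * dampedDeriv₂ X p
      ≤ 5184 * Real.exp (-(X / 2)) := by
  rcases le_total 3 p with h3 | h3
  · have h : 1 ≤ p - 2 := by linarith
    simp only [damped, dampedDeriv₂, cutoff_of_one_le (x := p - 2) h,
      cutoffDeriv_of_one_le (x := p - 2) h, cutoffDeriv₂_of_one_le (x := p - 2) h]
    simp only [mul_zero, zero_mul, sub_zero, add_zero, neg_zero]
    positivity
  have hw0 := le_max_right (p - 1) 0
  have hw2 : max (p - 1) 0 ≤ 2 := max_le (by linarith) (by norm_num)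
  set w := max (p - 1) 0 with hw
  have he := Real.exp_pos (-(X * w ^ 3))
  have hc := cutoff_nonneg (p - 2)
  have hmain : -(216 * w ^ 3 * X ^ 2) + 4 * p * ((3 * X * w ^ 2) ^ 2 - 6 * X * w) ≤ 0 := by
    have h1 : p * w ≤ 3 * 2 := mul_le_mul h3 hw2 hw0 (by norm_num)
    have h2 : 0 ≤ X ^ 2 * w ^ 3 * (6 - p * w) := mul_nonneg (by positivity) (by linarith)
    have h3' : 0 ≤ p * X * w := by positivity
    nlinarith
  have hsplit : -(216 * w ^ 3 * X ^ 2 * damped X p) + 4 * p * dampedDeriv₂ X p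
      = 4 * p * ((cutoffDeriv₂ (p - 2) - 2 * cutoffDeriv (p - 2) * (3 * X * w ^ 2))
          * Real.exp (-(X * w ^ 3)))
        + cutoff (p - 2) * Real.exp (-(X * w ^ 3))
          * (-(216 * w ^ 3 * X ^ 2) + 4 * p * ((3 * X * w ^ 2) ^ 2 - 6 * X * w)) := by
    simp only [damped, dampedDeriv₂, ← hw]
    ring
  have hneg : cutoff (p - 2) * Real.exp (-(X * w ^ 3))
      * (-(216 * w ^ 3 * X ^ 2) + 4 * p * ((3 * X * w ^ 2) ^ 2 - 6 * X * w)) ≤ 0 :=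
    mul_nonpos_of_nonneg_of_nonpos (by positivity) hmain
  suffices 4 * p * ((cutoffDeriv₂ (p - 2) - 2 * cutoffDeriv (p - 2) * (3 * X * w ^ 2))
      * Real.exp (-(X * w ^ 3))) ≤ 5184 * Real.exp (-(X / 2)) by linarith
  rcases le_total p 2 with h2 | h2
  · have h : p - 2 ≤ 0 := by linarith
    simp only [cutoffDeriv_of_nonpos (x := p - 2) h, cutoffDeriv₂_of_nonpos (x := p - 2) h]
    simp only [mul_zero, zero_mul, sub_zero]
    positivity
  have hw1 : 1 ≤ w := (by linarith : (1 : ℝ) ≤ p - 1).trans (le_max_left _ _)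
  have hexp : Real.exp (-(X * w ^ 3)) ≤ Real.exp (-X) :=
    Real.exp_le_exp.2 (by nlinarith [one_le_pow₀ (n := 3) hw1])
  have hw4 : w ^ 2 ≤ 4 := by nlinarith
  have hb : cutoffDeriv₂ (p - 2) - 2 * cutoffDeriv (p - 2) * (3 * X * w ^ 2)
      ≤ 432 * Real.exp (X / 2) := by
    have h1 := cutoffDeriv₂_le (p - 2)
    have h3' : -cutoffDeriv (p - 2) * (X * w ^ 2) ≤ 9 * (X * 4) :=
      mul_le_mul (neg_cutoffDeriv_le _) (mul_le_mul_of_nonneg_left hw4 hX.le) (by positivity)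
        (by norm_num)
    have h4 := Real.add_one_le_exp (X / 2)
    nlinarith
  calc _ ≤ 4 * p * (432 * Real.exp (X / 2) * Real.exp (-X)) := by
        refine mul_le_mul_of_nonneg_left ?_ (by positivity)
        exact mul_le_mul hb hexp he.le (by positivity)
    _ = 1728 * p * Real.exp (-(X / 2)) := by
        rw [mul_assoc 432, ← Real.exp_add]
        ring_nf
    _ ≤ _ := mul_le_mul_of_nonneg_right (by linarith) (Real.exp_pos _).le

theorem isEnergyWeight_cutoff {β r R : ℝ} (hr : 0 ≤ r) (hrR : r < R) :
    IsEnergyWeight (fun _ q => cutoff ((q - r ^ 2) / (R ^ 2 - r ^ 2)))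
      (fun _ q => cutoffDeriv ((q - r ^ 2) / (R ^ 2 - r ^ 2)) / (R ^ 2 - r ^ 2))
      (fun _ q => cutoffDeriv₂ ((q - r ^ 2) / (R ^ 2 - r ^ 2)) / (R ^ 2 - r ^ 2) ^ 2)
      (fun _ _ => 0) β R := by
  have hD : 0 < R ^ 2 - r ^ 2 := sub_pos.2 (pow_lt_pow_left₀ hrR hr two_ne_zero)
  set D := R ^ 2 - r ^ 2 with hDdef
  have hlin : ∀ q, HasDerivAt (fun q => (q - r ^ 2) / D) (1 / D) q := fun q =>
    ((hasDerivAt_id q).sub_const _).div_const D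
  have hone : ∀ q, R ^ 2 ≤ q → 1 ≤ (q - r ^ 2) / D := fun q hq => by
    rw [le_div_iff₀ hD]
    linarith
  refine ⟨fun t _ q => ?_, fun t _ q => ?_, fun t _ => ?_, fun t _ q => hasDerivAt_const t _, ?_,
    continuousOn_const, fun t _ q hq => cutoff_of_one_le (hone q hq),
    fun t _ q hq => by simp [cutoffDeriv₂_of_one_le (hone q hq)], fun _ _ _ _ => rfl,
    fun _ _ _ => cutoff_nonneg _,
    fun _ _ _ => div_nonpos_of_nonpos_of_nonneg (cutoffDeriv_nonpos _) hD.le⟩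
  · exact ((hasDerivAt_cutoff _).comp q (hlin q)).congr_deriv (by ring)
  · exact (((hasDerivAt_cutoffDeriv _).comp q (hlin q)).div_const D).congr_deriv (by ring_nf)
  · exact (continuous_cutoffDeriv₂.comp (by fun_prop)).div_const _
  · exact (continuous_cutoff.comp (by fun_prop)).continuousOn

theorem isEnergyWeight_damped {β σ r : ℝ} (hr : 0 < r) (hβ : β ≤ σ) :
    IsEnergyWeight (fun t q => damped (r ^ 2 / 216 / (σ - t)) (q / r ^ 2))
      (fun t q => dampedDeriv (r ^ 2 / 216 / (σ - t)) (q / r ^ 2) / r ^ 2)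
      (fun t q => dampedDeriv₂ (r ^ 2 / 216 / (σ - t)) (q / r ^ 2) / (r ^ 2) ^ 2)
      (fun t q => -(216 / r ^ 2 * max (q / r ^ 2 - 1) 0 ^ 3 * (r ^ 2 / 216 / (σ - t)) ^ 2
        * damped (r ^ 2 / 216 / (σ - t)) (q / r ^ 2))) β (2 * r) := by
  have hr2 : 0 < r ^ 2 := by positivity
  have hlin : ∀ q, HasDerivAt (fun q => q / r ^ 2) (1 / r ^ 2) q := fun q =>
    (hasDerivAt_id q).div_const _
  have hone : ∀ q, (2 * r) ^ 2 ≤ q → 1 ≤ q / r ^ 2 - 2 := fun q hq => by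
    have : 3 ≤ q / r ^ 2 := by
      rw [le_div_iff₀ hr2]
      nlinarith
    linarith
  have hτ : ∀ t ∈ Ioo 0 β, 0 < σ - t := fun t ht => by linarith [ht.2]
  have hcX : ContinuousOn (fun p : ℝ × ℝ => r ^ 2 / 216 / (σ - p.1)) (Ioo 0 β ×ˢ univ) :=
    continuousOn_const.div (by fun_prop) fun p hp => (hτ p.1 hp.1).ne'
  have hcF : ContinuousOn (fun p : ℝ × ℝ => damped (r ^ 2 / 216 / (σ - p.1)) (p.2 / r ^ 2))
      (Ioo 0 β ×ˢ univ) := by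
    unfold damped
    refine ContinuousOn.mul (continuous_cutoff.comp (by fun_prop)).continuousOn
      (Real.continuous_exp.comp_continuousOn (hcX.mul (Continuous.continuousOn ?_)).neg)
    fun_prop
  refine ⟨fun t _ q => ?_, fun t _ q => ?_, fun t _ => ?_, fun t ht q => ?_, hcF, ?_,
    fun t _ q hq => by simp [damped, cutoff_of_one_le (hone q hq)],
    fun t _ q hq => by simp [dampedDeriv₂, cutoff_of_one_le (hone q hq),
      cutoffDeriv_of_one_le (hone q hq), cutoffDeriv₂_of_one_le (hone q hq)],
    fun t _ q hq => by simp [damped, cutoff_of_one_le (hone q hq)],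
    fun t _ q => mul_nonneg (cutoff_nonneg _) (Real.exp_pos _).le, fun t ht q => ?_⟩
  · exact ((hasDerivAt_damped _ _).comp q (hlin q)).congr_deriv (by ring)
  · exact (((hasDerivAt_dampedDeriv _ _).comp q (hlin q)).div_const _).congr_deriv (by ring)
  · exact ((continuous_dampedDeriv₂ _).comp (by fun_prop)).div_const _
  · have hX : HasDerivAt (fun t => r ^ 2 / 216 / (σ - t)) (r ^ 2 / 216 / (σ - t) ^ 2) t := by
      refine (((hasDerivAt_id t).const_sub σ).inv (hτ t ht).ne' |>.const_mul
        (r ^ 2 / 216)).congr_deriv ?_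
      simp only [id]
      ring
    refine ((hX.mul_const (max (q / r ^ 2 - 1) 0 ^ 3)).neg.exp.const_mul
      (cutoff (q / r ^ 2 - 2))).congr_deriv ?_
    have := (hτ t ht).ne'
    simp only [damped, Pi.neg_apply]
    field_simp
  · exact (((continuousOn_const.mul (by fun_prop)).mul (hcX.pow 2)).mul hcF).neg
  · refine div_nonpos_of_nonpos_of_nonneg (mul_nonpos_of_nonpos_of_nonneg ?_
      (Real.exp_pos _).le) hr2.le
    have h1 := cutoffDeriv_nonpos (q / r ^ 2 - 2)
    have h2 : 0 ≤ r ^ 2 / 216 / (σ - t) := div_nonneg (by positivity) (hτ t ht).le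
    have h3 := mul_nonneg (cutoff_nonneg (q / r ^ 2 - 2))
      (mul_nonneg (mul_nonneg zero_le_three h2) (sq_nonneg (max (q / r ^ 2 - 1) 0)))
    linarith

namespace IsHeatSolution

variable {n : ℕ} {u : ℝ → EuclideanSpace ℝ (Fin n) → ℝ}

theorem localEnergy_nonneg (r t : ℝ) : 0 ≤ localEnergy u r t :=
  integral_nonneg fun _ => sq_nonneg _

theorem localEnergy_le_add_integral (hu : IsHeatSolution u) {r R s T : ℝ} (hr : 0 ≤ r)
    (hrR : r < R) (hs : 0 < s) (hsT : s < T) (hT : T < 1) :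
    localEnergy u r T ≤
      localEnergy u R s + 216 / (R - r) ^ 2 * ∫ t in s..T, localEnergy u R t := by
  have hD : 0 < R ^ 2 - r ^ 2 := sub_pos.2 (pow_lt_pow_left₀ hrR hr two_ne_zero)
  have hd : 0 < R - r := sub_pos.2 hrR
  refine hu.localEnergy_le_of_weight hs hsT hT le_rfl (hr.trans_lt hrR)
    (isEnergyWeight_cutoff hr hrR) (fun t _ q hq hqR => ?_) (fun q hq => ?_)
    fun q => cutoff_le_one _
  · have h1 := cutoffDeriv₂_le ((q - r ^ 2) / (R ^ 2 - r ^ 2))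
    calc _ = 4 * q * cutoffDeriv₂ ((q - r ^ 2) / (R ^ 2 - r ^ 2)) / (R ^ 2 - r ^ 2) ^ 2 := by ring
      _ ≤ 4 * R ^ 2 * 54 / (R ^ 2 - r ^ 2) ^ 2 := by
        refine div_le_div_of_nonneg_right ?_ (by positivity)
        calc _ ≤ 4 * q * 54 := mul_le_mul_of_nonneg_left h1 (by positivity)
          _ ≤ _ := by linarith
      _ ≤ 216 / (R - r) ^ 2 := by
        rw [div_le_div_iff₀ (by positivity) (by positivity)]
        have : R ^ 2 * (R - r) ^ 2 ≤ (R ^ 2 - r ^ 2) ^ 2 := by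
          rw [← mul_pow]
          refine pow_le_pow_left₀ (mul_nonneg (hr.trans hrR.le) hd.le) ?_ 2
          nlinarith
        linarith
  · refine (cutoff_of_nonpos ?_).ge
    exact div_nonpos_of_nonpos_of_nonneg (by linarith) hD.le

theorem localEnergy_le_add_exp_mul_integral (hu : IsHeatSolution u) {r s T ε : ℝ} (hr : 0 < r)
    (hs : 0 < s) (hsT : s < T) (hT : T < 1) (hε : T - s ≤ ε) :
    localEnergy u r T ≤ localEnergy u (2 * r) s
      + 5184 / r ^ 2 * Real.exp (-(r ^ 2 / (864 * ε))) * ∫ t in s..T, localEnergy u (2 * r) t := by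
  have hε0 : 0 < ε := (sub_pos.2 hsT).trans_le hε
  have hr2 : 0 < r ^ 2 := by positivity
  refine hu.localEnergy_le_of_weight (β := min 1 (T + ε)) hs hsT
    (lt_min hT (by linarith)) (min_le_left _ _) (by positivity)
    (isEnergyWeight_damped hr (min_le_right _ _)) (fun t ht q hq _ => ?_) (fun q hq => ?_)
    fun q => ?_
  · have hτ : 0 < T + ε - t := by linarith [ht.2]
    have hX : 0 < r ^ 2 / 216 / (T + ε - t) := by positivity
    have hXl : r ^ 2 / (864 * ε) ≤ r ^ 2 / 216 / (T + ε - t) / 2 := by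
      rw [div_div, div_div]
      refine div_le_div_of_nonneg_left hr2.le (by positivity) ?_
      linarith [ht.1]
    have h := damped_error_le hX (div_nonneg hq hr2.le)
    set X := r ^ 2 / 216 / (T + ε - t)
    set p := q / r ^ 2 with hp
    calc _ = (-(216 * max (p - 1) 0 ^ 3 * X ^ 2 * damped X p) + 4 * p * dampedDeriv₂ X p)
          / r ^ 2 := by
          rw [hp]
          field_simp
      _ ≤ 5184 * Real.exp (-(X / 2)) / r ^ 2 := div_le_div_of_nonneg_right h hr2.le
      _ ≤ 5184 * Real.exp (-(r ^ 2 / (864 * ε))) / r ^ 2 := by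
          refine div_le_div_of_nonneg_right (mul_le_mul_of_nonneg_left
            (Real.exp_le_exp.2 (neg_le_neg hXl)) (by norm_num)) hr2.le
      _ = _ := by ring
  · have hp : q / r ^ 2 - 1 ≤ 0 := by
      rw [sub_nonpos, div_le_one hr2]
      exact hq.le
    simp [damped, cutoff_of_nonpos (x := q / r ^ 2 - 2) (by linarith), max_eq_right hp]
  · refine mul_le_one₀ (cutoff_le_one _) (Real.exp_pos _).le (Real.exp_le_one_iff.2 ?_)
    have hτ : 0 < T + ε - s := by linarith
    have : 0 ≤ max (q / r ^ 2 - 1) 0 := le_max_right _ _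
    exact neg_nonpos.2 (by positivity)

end IsHeatSolution

theorem intervalIntegral_le_of_weighted_le {J : ℝ → ℝ} (hJ : ContinuousOn J (Ioo 0 1))
    (hJ0 : ∀ t, 0 ≤ J t) {a B M ε s T : ℝ} (ha : 0 ≤ a) (hB : ∀ t ∈ Ioo (0 : ℝ) 1, J t ≤ B)
    (hs : 0 < s) (hsT : s < T) (hT : T < 1) (hM : ∫ t in s..T, t ^ a * J t ≤ M) (hε : 0 < ε) :
    ∫ t in s..T, J t ≤ ε * B + ε ^ (-a) * M := by
  have hsub : Icc s T ⊆ Ioo (0 : ℝ) 1 := fun t h => ⟨hs.trans_le h.1, h.2.trans_lt hT⟩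
  have hB0 : 0 ≤ B := (hJ0 (1 / 2)).trans (hB _ (by norm_num))
  have hJc : ContinuousOn J (uIcc s T) := by
    rw [uIcc_of_le hsT.le]
    exact hJ.mono hsub
  have hwc : ContinuousOn (fun t => t ^ a * J t) (uIcc s T) := by
    refine ContinuousOn.mul (continuousOn_id.rpow_const fun t _ => Or.inr ha) hJc
  have hind : Integrable ((Ioc 0 ε).indicator fun _ : ℝ => B) :=
    (integrable_indicator_iff measurableSet_Ioc).2 (integrableOn_const measure_Ioc_lt_top.ne)
  have hmono : ∫ t in s..T, J t ≤
      ∫ t in s..T, ((Ioc 0 ε).indicator (fun _ : ℝ => B) t + ε ^ (-a) * (t ^ a * J t)) := by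
    refine intervalIntegral.integral_mono_on hsT.le hJc.intervalIntegrable
      (hind.intervalIntegrable.add (hwc.intervalIntegrable.const_mul _)) fun t ht => ?_
    have ht0 := (hsub ht).1
    have hw : 0 ≤ ε ^ (-a) * (t ^ a * J t) :=
      mul_nonneg (Real.rpow_nonneg hε.le _) (mul_nonneg (Real.rpow_nonneg ht0.le _) (hJ0 t))
    by_cases h : t ≤ ε
    · rw [indicator_of_mem (show t ∈ Ioc 0 ε from ⟨ht0, h⟩)]
      linarith [hB t (hsub ht)]
    · rw [indicator_of_notMem fun h' => h h'.2, zero_add, ← mul_assoc]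
      refine le_mul_of_one_le_left (hJ0 t) ?_
      rw [Real.rpow_neg hε.le, ← div_eq_inv_mul, one_le_div (Real.rpow_pos_of_pos hε _)]
      exact Real.rpow_le_rpow hε.le (not_le.1 h).le ha
  refine hmono.trans ?_
  rw [intervalIntegral.integral_add hind.intervalIntegrable
    (hwc.intervalIntegrable.const_mul _), intervalIntegral.integral_const_mul]
  refine add_le_add ?_ (mul_le_mul_of_nonneg_left hM (Real.rpow_nonneg hε.le _))
  rw [intervalIntegral.integral_of_le hsT.le]
  refine (setIntegral_le_integral hind (Eventually.of_forall fun t =>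
    indicator_nonneg (fun _ _ => hB0) t)).trans ?_
  rw [integral_indicator measurableSet_Ioc]
  simp [hε.le]

namespace IsHeatSolution

variable {n : ℕ} {u : ℝ → EuclideanSpace ℝ (Fin n) → ℝ}

theorem localEnergy_le_mul_of_bound (hu : IsHeatSolution u)
    (h0 : ∀ R > 0, Tendsto (localEnergy u R) (nhdsWithin 0 (Ioi 0)) (nhds 0))
    {a B M ε r R : ℝ} (ha : 0 ≤ a) (hr : 0 ≤ r) (hrR : r < R) (hε : 0 < ε)
    (hM : ∀ s T, 0 < s → s < T → T < 1 → ∫ t in s..T, t ^ a * localEnergy u R t ≤ M)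
    (hB : ∀ t ∈ Ioo (0 : ℝ) 1, localEnergy u R t ≤ B) {T : ℝ} (hT : T ∈ Ioo (0 : ℝ) 1) :
    localEnergy u r T ≤ 216 / (R - r) ^ 2 * (ε * B + ε ^ (-a) * M) := by
  have hlim : Tendsto (fun s => localEnergy u R s + 216 / (R - r) ^ 2 * (ε * B + ε ^ (-a) * M))
      (nhdsWithin 0 (Ioi 0)) (nhds (0 + 216 / (R - r) ^ 2 * (ε * B + ε ^ (-a) * M))) :=
    (h0 R (hr.trans_lt hrR)).add_const _
  rw [zero_add] at hlim
  refine ge_of_tendsto hlim ?_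
  filter_upwards [Ioo_mem_nhdsGT hT.1] with s hs
  refine (hu.localEnergy_le_add_integral hr hrR hs.1 hs.2 hT.2).trans ?_
  gcongr
  exact intervalIntegral_le_of_weighted_le (hu.continuousOn_localEnergy R)
    (localEnergy_nonneg R) ha hB hs.1 hs.2 hT.2 (hM s T hs.1 hs.2 hT.2) hε

/-- A time-weighted `L²` bound on a ball controls the energy on a smaller ball uniformly in time,
provided the initial datum vanishes. -/
theorem localEnergy_le_of_weighted_bound (hu : IsHeatSolution u)
    (h0 : ∀ R > 0, Tendsto (localEnergy u R) (nhdsWithin 0 (Ioi 0)) (nhds 0))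
    (hbdd : ∀ R, ∃ B, ∀ t ∈ Ioo (0 : ℝ) 1, localEnergy u R t ≤ B)
    {a M r : ℝ} (ha : 0 ≤ a) (hr : 1 ≤ r) (hM0 : 0 ≤ M)
    (hM : ∀ R ∈ Ioc 0 (2 * r), ∀ s T, 0 < s → s < T → T < 1 →
      ∫ t in s..T, t ^ a * localEnergy u R t ≤ M) {t : ℝ} (ht : t ∈ Ioo (0 : ℝ) 1) :
    localEnergy u r t ≤ 2 * ((864 : ℝ) ^ (1 + a) * (2 * (4 : ℝ) ^ (1 + a)) ^ a * M) := by
  set μ : ℝ := (4 : ℝ) ^ (1 + a) with hμ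
  have hμ1 : 1 ≤ μ := Real.one_le_rpow (by norm_num) (by linarith)
  set G : ℝ := (864 : ℝ) ^ (1 + a) * (2 * μ) ^ a * M with hG
  have hG0 : 0 ≤ G := by positivity
  set ρ : ℕ → ℝ := fun k => r * (2 - (1 / 2) ^ k) with hρ
  have hpow : ∀ k : ℕ, (1 / 2 : ℝ) ^ k ≤ 1 := fun k => pow_le_one₀ (by norm_num) (by norm_num)
  have hpow0 : ∀ k : ℕ, 0 < (1 / 2 : ℝ) ^ k := fun k => by positivity
  have hρ0 : ∀ k, 0 < ρ k := fun k => mul_pos (by linarith) (by linarith [hpow k])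
  have hρ2 : ∀ k, ρ k ≤ 2 * r := fun k => by
    simp only [hρ]
    nlinarith [hpow0 k]
  have hdiff : ∀ k, ρ (k + 1) - ρ k = r * (1 / 2) ^ (k + 1) := fun k => by
    simp only [hρ]
    ring
  have hstep : ∀ (k : ℕ) (B : ℝ), (∀ t ∈ Ioo (0 : ℝ) 1, localEnergy u (ρ (k + 1)) t ≤ B) →
      ∀ t ∈ Ioo (0 : ℝ) 1, localEnergy u (ρ k) t ≤ B / (2 * μ) + G * μ ^ k := by
    intro k B hB t ht
    have hB0 : 0 ≤ B := (localEnergy_nonneg _ _).trans (hB t ht)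
    set K : ℝ := 864 * 4 ^ k with hK
    have hK0 : 0 < K := by positivity
    have hε : 0 < (2 * μ * K)⁻¹ := by positivity
    have hlt : ρ k < ρ (k + 1) := by
      have : 0 < r * (1 / 2) ^ (k + 1) := by positivity
      linarith [hdiff k]
    have h := hu.localEnergy_le_mul_of_bound h0 ha (hρ0 k).le hlt hε
      (hM _ ⟨hρ0 _, hρ2 _⟩) hB ht
    have hKle : 216 / (ρ (k + 1) - ρ k) ^ 2 ≤ K := by
      rw [hdiff, div_le_iff₀ (by positivity), hK]
      have h1 : (4 : ℝ) ^ k * ((1 / 2) ^ (k + 1)) ^ 2 = 1 / 4 := by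
        rw [← pow_mul, add_mul, pow_add, mul_comm k 2, pow_mul, ← mul_assoc, ← mul_pow]
        norm_num
      have h2 : 1 ≤ r ^ 2 := one_le_pow₀ hr
      calc (216 : ℝ) ≤ 216 * r ^ 2 := by linarith
        _ = 864 * ((4 : ℝ) ^ k * ((1 / 2) ^ (k + 1)) ^ 2) * r ^ 2 := by rw [h1]; ring
        _ = _ := by ring
    have hε' : ((2 * μ * K)⁻¹) ^ (-a) = (2 * μ) ^ a * K ^ a := by
      rw [Real.rpow_neg hε.le, Real.inv_rpow (by positivity), inv_inv,
        Real.mul_rpow (by positivity) hK0.le]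
    have hKa : K * K ^ a = (864 : ℝ) ^ (1 + a) * μ ^ k := by
      rw [hμ, ← Real.rpow_natCast ((4 : ℝ) ^ (1 + a)) k, ← Real.rpow_mul (by norm_num),
        mul_comm (1 + a), Real.rpow_mul (by norm_num), Real.rpow_natCast,
        ← Real.mul_rpow (by norm_num) (by positivity), ← hK, Real.rpow_add hK0, Real.rpow_one]
    calc localEnergy u (ρ k) t
        ≤ 216 / (ρ (k + 1) - ρ k) ^ 2 * ((2 * μ * K)⁻¹ * B + (2 * μ * K)⁻¹ ^ (-a) * M) := h
      _ ≤ K * ((2 * μ * K)⁻¹ * B + (2 * μ * K)⁻¹ ^ (-a) * M) :=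
          mul_le_mul_of_nonneg_right hKle (by positivity)
      _ = B / (2 * μ) + K * K ^ a * (2 * μ) ^ a * M := by
          rw [hε']
          field_simp
      _ = B / (2 * μ) + G * μ ^ k := by
          rw [hKa, hG]
          ring
  have hiter : ∀ (m k : ℕ) (B : ℝ), (∀ t ∈ Ioo (0 : ℝ) 1, localEnergy u (ρ (k + m)) t ≤ B) →
      ∀ t ∈ Ioo (0 : ℝ) 1, localEnergy u (ρ k) t ≤ B / (2 * μ) ^ m + 2 * G * μ ^ k := by
    intro m
    induction m with
    | zero =>
      intro k B hB t ht
      have : 0 ≤ 2 * G * μ ^ k := by positivity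
      simpa using (hB t ht).trans (by linarith)
    | succ m ih =>
      intro k B hB t ht
      have h1 := ih (k + 1) B (by rwa [add_assoc, add_comm 1 m])
      refine (hstep k _ h1 t ht).trans (le_of_eq ?_)
      field_simp
      ring
  obtain ⟨B, hB⟩ := hbdd (2 * r)
  have hm : ∀ m : ℕ, localEnergy u r t ≤ B * ((2 * μ)⁻¹) ^ m + 2 * G := by
    intro m
    have := hiter m 0 B (fun t ht => (hu.localEnergy_mono ht (hρ2 _)).trans (hB t ht)) t ht
    have hr0 : ρ 0 = r := by
      simp only [hρ]
      norm_num
    rwa [hr0, pow_zero, mul_one, div_eq_mul_inv, ← inv_pow] at this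
  have hlim : Tendsto (fun m : ℕ => B * ((2 * μ)⁻¹) ^ m + 2 * G) atTop
      (nhds (B * 0 + 2 * G)) :=
    ((tendsto_pow_atTop_nhds_zero_of_lt_one (by positivity)
      (inv_lt_one_of_one_lt₀ (by linarith))).const_mul B).add_const _
  rw [mul_zero, zero_add] at hlim
  exact ge_of_tendsto' hlim hm

theorem localEnergy_le_add_of_sub_le (hu : IsHeatSolution u) {r s T H : ℝ} (hr : 0 < r)
    (hH : 0 < H) (hS : ∀ t ∈ Ioo (0 : ℝ) 1, localEnergy u (2 * r) t ≤ Real.exp H)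
    (hs : 0 < s) (hsT : s < T) (hT : T < 1) (hε : T - s ≤ r ^ 2 / (864 * H)) :
    localEnergy u r T ≤ localEnergy u (2 * r) s + 5184 / r ^ 2 := by
  refine (hu.localEnergy_le_add_exp_mul_integral hr hs hsT hT hε).trans ?_
  have hr2 : 0 < r ^ 2 := by positivity
  have he : r ^ 2 / (864 * (r ^ 2 / (864 * H))) = H := by field_simp
  have hsub : Icc s T ⊆ Ioo (0 : ℝ) 1 := fun t h => ⟨hs.trans_le h.1, h.2.trans_lt hT⟩
  have hint : ∫ t in s..T, localEnergy u (2 * r) t ≤ Real.exp H := by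
    have hc : ContinuousOn (localEnergy u (2 * r)) (uIcc s T) := by
      rw [uIcc_of_le hsT.le]
      exact (hu.continuousOn_localEnergy _).mono hsub
    calc ∫ t in s..T, localEnergy u (2 * r) t ≤ ∫ _ in s..T, Real.exp H :=
          intervalIntegral.integral_mono_on hsT.le hc.intervalIntegrable
            intervalIntegrable_const fun t ht => hS t (hsub ht)
      _ = (T - s) * Real.exp H := by simp
      _ ≤ 1 * Real.exp H := mul_le_mul_of_nonneg_right (by linarith) (Real.exp_pos _).le
      _ = _ := one_mul _
  rw [he]
  refine add_le_add le_rfl ?_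
  calc _ ≤ 5184 / r ^ 2 * Real.exp (-H) * Real.exp H :=
        mul_le_mul_of_nonneg_left hint (by positivity)
    _ = _ := by rw [mul_assoc, ← Real.exp_add]; simp

theorem localEnergy_le_div_sq (hu : IsHeatSolution u)
    (h0 : ∀ R > 0, Tendsto (localEnergy u R) (nhdsWithin 0 (Ioi 0)) (nhds 0))
    {H : ℝ → ℝ} (hH : ∀ r, 1 ≤ r → 0 < H r)
    (hS : ∀ r, 1 ≤ r → ∀ t ∈ Ioo (0 : ℝ) 1, localEnergy u (2 * r) t ≤ Real.exp (H r)) (k : ℕ) :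
    ∀ r, 1 ≤ r → ∀ T ∈ Ioo (0 : ℝ) 1,
      T ≤ ∑ j ∈ Finset.range k, (2 ^ j * r) ^ 2 / (864 * H (2 ^ j * r)) →
      localEnergy u r T ≤ 6912 / r ^ 2 := by
  induction k with
  | zero =>
    intro r _ T hT hle
    simp only [Finset.range_zero, Finset.sum_empty] at hle
    exact absurd hT.1 (not_lt.2 hle)
  | succ k ih =>
    intro r hr T hT hle
    have hr0 : 0 < r := by linarith
    rw [Finset.sum_range_succ'] at hle
    simp only [pow_zero, one_mul] at hle
    by_cases hcase : T ≤ r ^ 2 / (864 * H r)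
    · have hlim : Tendsto (fun s => localEnergy u (2 * r) s + 5184 / r ^ 2)
          (nhdsWithin 0 (Ioi 0)) (nhds (0 + 5184 / r ^ 2)) := (h0 _ (by positivity)).add_const _
      rw [zero_add] at hlim
      refine (ge_of_tendsto (b := localEnergy u r T) hlim ?_).trans
        (div_le_div_of_nonneg_right (by norm_num) (sq_nonneg r))
      filter_upwards [Ioo_mem_nhdsGT hT.1] with s hs
      exact hu.localEnergy_le_add_of_sub_le hr0 (hH r hr) (hS r hr) hs.1 hs.2 hT.2
        (by linarith [hs.1])
    · rw [not_le] at hcase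
      set ε := r ^ 2 / (864 * H r) with hε
      have hε0 : 0 < ε := div_pos (by positivity) (mul_pos (by norm_num) (hH r hr))
      have h1 := hu.localEnergy_le_add_of_sub_le (s := T - ε) hr0 (hH r hr) (hS r hr)
        (by linarith) (by linarith) hT.2 (by linarith)
      have h2 := ih (2 * r) (by linarith) (T - ε) ⟨by linarith, by linarith [hT.2]⟩ (by
        simp only [pow_succ, mul_assoc] at hle ⊢
        linarith)
      calc _ ≤ 6912 / (2 * r) ^ 2 + 5184 / r ^ 2 := by linarith
        _ = _ := by
          field_simp
          norm_num

end IsHeatSolution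

/-- Divergence of `∫₁^∞ r / L(r) dr` for nondecreasing `L` forces divergence of the corresponding
dyadic sums. -/
theorem exists_le_sum_dyadic_of_lintegral_eq_top {L : ℝ → ℝ} (hL_pos : ∀ r > (0 : ℝ), 0 < L r)
    (hL_mono : ∀ r s : ℝ, 0 < r → r ≤ s → L r ≤ L s)
    (hL_div : ∫⁻ r in Ioi (1 : ℝ), ENNReal.ofReal (r / L r) = ⊤) {l r : ℝ} (hl : 0 ≤ l)
    (hr : 1 ≤ r) (C : ℝ) :
    ∃ k : ℕ, C ≤ ∑ j ∈ Finset.range k, (2 ^ j * r) ^ 2 / (864 * (L (4 * (2 ^ j * r)) + l)) := by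
  by_contra! hcon
  set N : ℕ → ℝ := fun j => 4 * (2 ^ j * r) with hN
  set f : ℕ → ℝ := fun j => (2 ^ j * r) ^ 2 / (864 * (L (N j) + l)) with hf
  have hr0 : 0 < r := by linarith
  have hN0 : ∀ j, 0 < N j := fun j => by positivity
  have hN1 : ∀ j, 1 ≤ N j := fun j => by
    have : (1 : ℝ) ≤ 2 ^ j := one_le_pow₀ (by norm_num)
    simp only [hN]
    nlinarith
  have hNs : ∀ j, N (j + 1) = 2 * N j := fun j => by
    simp only [hN, pow_succ]
    ring
  have hL1 : 0 < L 1 := hL_pos 1 one_pos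
  have hLN : ∀ j, L 1 ≤ L (N j) := fun j => hL_mono _ _ one_pos (hN1 j)
  have hf0 : ∀ j, 0 ≤ f j := fun j =>
    div_nonneg (sq_nonneg _) (by linarith [hLN j])
  set A : ℝ := 864 * 32 * (1 + l / L 1) with hA
  have hA0 : 0 ≤ A := by positivity
  have hpiece : ∀ x y : ℝ, 0 < x → x ≤ y →
      ∫⁻ s in Icc x y, ENNReal.ofReal (s / L s) ≤ ENNReal.ofReal (y * (y - x) / L x) := by
    intro x y hx hxy
    calc ∫⁻ s in Icc x y, ENNReal.ofReal (s / L s)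
        ≤ ∫⁻ _ in Icc x y, ENNReal.ofReal (y / L x) := by
          refine setLIntegral_mono measurable_const fun s hs => ENNReal.ofReal_le_ofReal ?_
          exact div_le_div₀ (by linarith) hs.2 (hL_pos x hx) (hL_mono _ _ hx hs.1)
      _ = ENNReal.ofReal (y * (y - x) / L x) := by
          rw [setLIntegral_const, Real.volume_Icc, ← ENNReal.ofReal_mul
            (div_nonneg (by linarith) (hL_pos x hx).le)]
          ring_nf
  have hterm : ∀ j, ∫⁻ s in Icc (N j) (N (j + 1)), ENNReal.ofReal (s / L s)
      ≤ ENNReal.ofReal (A * f j) := by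
    intro j
    refine (hpiece _ _ (hN0 j) (by linarith [hNs j, hN0 j])).trans (ENNReal.ofReal_le_ofReal ?_)
    have h1 : N (j + 1) * (N (j + 1) - N j) = 32 * (2 ^ j * r) ^ 2 := by
      rw [hNs]
      simp only [hN]
      ring
    have h2 : 0 < L (N j) := hL_pos _ (hN0 j)
    have h3 : L (N j) + l ≤ (1 + l / L 1) * L (N j) := by
      have : l / L 1 * L 1 ≤ l / L 1 * L (N j) :=
        mul_le_mul_of_nonneg_left (hLN j) (by positivity)
      rw [div_mul_cancel₀ _ hL1.ne'] at this
      linarith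
    have h4 : A * f j = 32 * (2 ^ j * r) ^ 2 * (1 + l / L 1) / (L (N j) + l) := by
      simp only [hA, hf]
      field_simp
    rw [h1, h4, div_le_div_iff₀ h2 (by linarith), mul_assoc (32 * (2 ^ j * r) ^ 2)]
    exact mul_le_mul_of_nonneg_left h3 (by positivity)
  have hcover : Ioi (1 : ℝ) ⊆ Icc 1 (N 0) ∪ ⋃ j, Icc (N j) (N (j + 1)) := by
    intro x hx
    rcases le_total x (N 0) with h | h
    · exact Or.inl ⟨le_of_lt hx, h⟩
    · have h4 : N 0 = 4 * r := by simp [hN]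
      obtain ⟨j, hj1, hj2⟩ := exists_nat_pow_near (x := x / (4 * r)) (y := (2 : ℝ))
        (by rwa [le_div_iff₀ (by positivity), one_mul, ← h4]) (by norm_num)
      rw [le_div_iff₀ (by positivity)] at hj1
      rw [div_lt_iff₀ (by positivity)] at hj2
      refine Or.inr (mem_iUnion.2 ⟨j, ?_, ?_⟩)
      · simp only [hN]
        linarith
      · simp only [hN]
        linarith
  have hsum : ∑' j, ENNReal.ofReal (A * f j) ≤ ENNReal.ofReal (A * C) := by
    refine ENNReal.tsum_le_of_sum_range_le fun k => ?_
    rw [← ENNReal.ofReal_sum_of_nonneg fun j _ => mul_nonneg hA0 (hf0 j), ← Finset.mul_sum]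
    exact ENNReal.ofReal_le_ofReal (mul_le_mul_of_nonneg_left (hcon k).le hA0)
  have hfin : ∫⁻ r in Ioi (1 : ℝ), ENNReal.ofReal (r / L r) < ⊤ :=
    calc ∫⁻ r in Ioi (1 : ℝ), ENNReal.ofReal (r / L r)
        ≤ ∫⁻ r in Icc 1 (N 0) ∪ ⋃ j, Icc (N j) (N (j + 1)), ENNReal.ofReal (r / L r) :=
          lintegral_mono_set hcover
      _ ≤ (∫⁻ r in Icc 1 (N 0), ENNReal.ofReal (r / L r))
          + ∫⁻ r in ⋃ j, Icc (N j) (N (j + 1)), ENNReal.ofReal (r / L r) :=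
          lintegral_union_le _ _ _
      _ ≤ ENNReal.ofReal (N 0 * (N 0 - 1) / L 1) + ENNReal.ofReal (A * C) :=
          add_le_add (hpiece _ _ one_pos (hN1 0))
            ((lintegral_iUnion_le _ _).trans ((ENNReal.tsum_le_tsum hterm).trans hsum))
      _ < ⊤ := ENNReal.add_lt_top.2 ⟨ENNReal.ofReal_lt_top, ENNReal.ofReal_lt_top⟩
  exact hfin.ne hL_div

namespace IsHeatSolution

variable {n : ℕ} {u : ℝ → EuclideanSpace ℝ (Fin n) → ℝ}

theorem eqOn_zero_of_localEnergy_eq_zero (hu : IsHeatSolution u) {t : ℝ} (ht : t ∈ Ioo (0 : ℝ) 1)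
    {r : ℝ} (h : localEnergy u r t = 0) : EqOn (u t) 0 (ball 0 r) := by
  refine Measure.eqOn_open_of_ae_eq (μ := volume) ?_ isOpen_ball (hu.continuous ht).continuousOn
    continuousOn_const
  have := (setIntegral_eq_zero_iff_of_nonneg_ae (Eventually.of_forall fun _ => sq_nonneg _)
    (hu.integrableOn_sq ht r)).1 h
  filter_upwards [this] with x hx
  simpa using hx

/-- Vanishing theorem: a heat solution with zero initial data whose time-weighted `L²` growth is
at most `e^{L(r)}`, with `∫₁^∞ r / L(r) dr = ∞`, is identically zero. -/
theorem eq_zero_of_weighted_growth (hu : IsHeatSolution u)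
    (h0 : ∀ R > 0, Tendsto (localEnergy u R) (nhdsWithin 0 (Ioi 0)) (nhds 0))
    (hbdd : ∀ R, ∃ B, ∀ t ∈ Ioo (0 : ℝ) 1, localEnergy u R t ≤ B)
    {a : ℝ} (ha : 0 ≤ a) {L : ℝ → ℝ} (hL_pos : ∀ r > (0 : ℝ), 0 < L r)
    (hL_mono : ∀ r s : ℝ, 0 < r → r ≤ s → L r ≤ L s)
    (hL_div : ∫⁻ r in Ioi (1 : ℝ), ENNReal.ofReal (r / L r) = ⊤)
    (hgrowth : ∀ R > 0, ∀ s T, 0 < s → s < T → T < 1 →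
      ∫ t in s..T, t ^ a * localEnergy u R t ≤ Real.exp (L R)) :
    ∀ t ∈ Ioo (0 : ℝ) 1, ∀ x, u t x = 0 := by
  set c : ℝ := 2 * ((864 : ℝ) ^ (1 + a) * (2 * (4 : ℝ) ^ (1 + a)) ^ a) with hc
  have hc1 : 1 ≤ c := by
    have h1 : (1 : ℝ) ≤ 864 ^ (1 + a) := Real.one_le_rpow (by norm_num) (by linarith)
    have h2 : (1 : ℝ) ≤ 4 ^ (1 + a) := Real.one_le_rpow (by norm_num) (by linarith)
    have h3 : (1 : ℝ) ≤ (2 * (4 : ℝ) ^ (1 + a)) ^ a := Real.one_le_rpow (by linarith) ha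
    nlinarith [one_le_mul_of_one_le_of_one_le h1 h3]
  have hl : 0 ≤ Real.log c := Real.log_nonneg hc1
  have hS : ∀ r, 1 ≤ r → ∀ t ∈ Ioo (0 : ℝ) 1,
      localEnergy u (2 * r) t ≤ Real.exp (L (4 * r) + Real.log c) := by
    intro r hr t ht
    refine (hu.localEnergy_le_of_weighted_bound h0 hbdd ha (by linarith) (Real.exp_pos (L (4 * r))).le
      (fun R hR s T h0s hsT hT => (hgrowth R hR.1 s T h0s hsT hT).trans
        (Real.exp_le_exp.2 (hL_mono _ _ hR.1 (hR.2.trans (by linarith))))) ht).trans_eq ?_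
    rw [Real.exp_add, Real.exp_log (by linarith), hc]
    ring
  have hdecay : ∀ r, 1 ≤ r → ∀ t ∈ Ioo (0 : ℝ) 1, localEnergy u r t ≤ 6912 / r ^ 2 := by
    intro r hr t ht
    obtain ⟨k, hk⟩ := exists_le_sum_dyadic_of_lintegral_eq_top hL_pos hL_mono hL_div hl hr 1
    exact hu.localEnergy_le_div_sq h0 (H := fun r => L (4 * r) + Real.log c)
      (fun r hr => by linarith [hL_pos (4 * r) (by linarith)]) hS k r hr t ht
      (ht.2.le.trans hk)
  intro t ht x
  have hzero : localEnergy u (‖x‖ + 1) t = 0 := by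
    refine le_antisymm ?_ (localEnergy_nonneg _ _)
    have hlim : Tendsto (fun r : ℝ => 6912 / r ^ 2) atTop (nhds 0) :=
      tendsto_const_nhds.div_atTop (tendsto_pow_atTop two_ne_zero)
    refine ge_of_tendsto hlim ?_
    filter_upwards [eventually_ge_atTop 1, eventually_ge_atTop (‖x‖ + 1)] with r h1 h2
    exact (hu.localEnergy_mono ht h2).trans (hdecay r h1 t ht)
  exact hu.eqOn_zero_of_localEnergy_eq_zero ht hzero (by simp)

end IsHeatSolution

theorem heatLap_sub {n : ℕ} {f g : EuclideanSpace ℝ (Fin n) → ℝ} (hf : ContDiff ℝ 2 f)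
    (hg : ContDiff ℝ 2 g) (x : EuclideanSpace ℝ (Fin n)) :
    heatLap (fun y => f y - g y) x = heatLap f x - heatLap g x := by
  have key : ∀ h : EuclideanSpace ℝ (Fin n) → ℝ, ContDiff ℝ 2 h → ∀ e,
      Differentiable ℝ (fun y => fderiv ℝ h y e) := fun h hh e =>
    ((hh.fderiv_right (m := 1) le_rfl).clm_apply contDiff_const).differentiable one_ne_zero
  simp only [heatLap, ← Finset.sum_sub_distrib]
  refine Finset.sum_congr rfl fun i _ => ?_
  have h1 : ∀ e, (fun y => fderiv ℝ (fun y => f y - g y) y e)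
      = fun y => fderiv ℝ f y e - fderiv ℝ g y e := fun e => by
    ext y
    rw [fderiv_fun_sub (hf.differentiable two_ne_zero y) (hg.differentiable two_ne_zero y)]
    rfl
  rw [h1, fderiv_fun_sub (key f hf _ x) (key g hg _ x)]
  rfl

namespace IsHeatSolution

variable {n : ℕ} {u v : ℝ → EuclideanSpace ℝ (Fin n) → ℝ}

theorem sub (hu : IsHeatSolution u) (hv : IsHeatSolution v) :
    IsHeatSolution (fun t x => u t x - v t x) where
  continuousOn := hu.continuousOn.sub hv.continuousOn
  contDiff t ht := (hu.contDiff t ht).sub (hv.contDiff t ht)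
  hasDerivAt t ht x := by
    rw [heatLap_sub (hu.contDiff t ht) (hv.contDiff t ht)]
    exact (hu.hasDerivAt t ht x).sub (hv.hasDerivAt t ht x)
  continuousOn_heatLap := by
    refine (hu.continuousOn_heatLap.sub hv.continuousOn_heatLap).congr fun p hp => ?_
    exact heatLap_sub (hu.contDiff _ hp.1) (hv.contDiff _ hp.1) _

theorem of_contDiffOn (hs : ContDiffOn ℝ 2
      (fun p : ℝ × EuclideanSpace ℝ (Fin n) => u p.1 p.2) (Ioo (0 : ℝ) 1 ×ˢ univ))
    (heq : ∀ t ∈ Ioo (0 : ℝ) 1, ∀ x, deriv (fun s => u s x) t = heatLap (u t) x) :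
    IsHeatSolution u := by
  have hopen : IsOpen (Ioo (0 : ℝ) 1 ×ˢ (univ : Set (EuclideanSpace ℝ (Fin n)))) :=
    isOpen_Ioo.prod isOpen_univ
  have hat : ∀ t ∈ Ioo (0 : ℝ) 1, ∀ x, ContDiffAt ℝ 2
      (fun p : ℝ × EuclideanSpace ℝ (Fin n) => u p.1 p.2) (t, x) := fun t ht x =>
    hs.contDiffAt (hopen.mem_nhds ⟨ht, mem_univ x⟩)
  have hd : ∀ t ∈ Ioo (0 : ℝ) 1, ∀ x, HasDerivAt (fun s => u s x)
      (fderiv ℝ (fun p : ℝ × EuclideanSpace ℝ (Fin n) => u p.1 p.2) (t, x) (1, 0)) t :=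
    fun t ht x => HasFDerivAt.comp_hasDerivAt (f := fun s => (s, x)) t
      ((hat t ht x).differentiableAt two_ne_zero).hasFDerivAt
      ((hasDerivAt_id t).prodMk (hasDerivAt_const t x))
  refine ⟨hs.continuousOn, fun t ht => contDiff_iff_contDiffAt.2 fun x => ?_, fun t ht x => ?_, ?_⟩
  · exact ContDiffAt.comp (f := fun y => (t, y)) x (hat t ht x)
      (contDiffAt_const.prodMk contDiffAt_id)
  · rw [← heq t ht x]
    exact (hd t ht x).differentiableAt.hasDerivAt
  · refine ((hs.continuousOn_fderiv_of_isOpen hopen one_le_two).clm_apply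
      (continuousOn_const (c := ((1 : ℝ), (0 : EuclideanSpace ℝ (Fin n)))))).congr fun p hp => ?_
    exact (heq p.1 hp.1 p.2).symm.trans (hd p.1 hp.1 p.2).deriv

theorem lintegral_sq_eq_ofReal_localEnergy (hu : IsHeatSolution u) {t : ℝ}
    (ht : t ∈ Ioo (0 : ℝ) 1) (r : ℝ) :
    ∫⁻ x in ball (0 : EuclideanSpace ℝ (Fin n)) r, ENNReal.ofReal (u t x ^ 2)
      = ENNReal.ofReal (localEnergy u r t) :=
  (ofReal_integral_eq_lintegral_ofReal (hu.integrableOn_sq ht r)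
    (Eventually.of_forall fun _ => sq_nonneg _)).symm

theorem tendsto_localEnergy (hu : IsHeatSolution u) {r : ℝ}
    (h : Tendsto (fun t => ∫⁻ x in ball (0 : EuclideanSpace ℝ (Fin n)) r,
      ENNReal.ofReal (u t x ^ 2)) (nhdsWithin 0 (Ioi 0)) (nhds 0)) :
    Tendsto (localEnergy u r) (nhdsWithin 0 (Ioi 0)) (nhds 0) := by
  have := (ENNReal.tendsto_toReal ENNReal.zero_ne_top).comp h
  rw [ENNReal.toReal_zero] at this
  refine this.congr' ?_
  filter_upwards [Ioo_mem_nhdsGT one_pos] with t ht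
  simp [hu.lintegral_sq_eq_ofReal_localEnergy ht r, localEnergy_nonneg]

theorem exists_localEnergy_le
    (hc : ContinuousOn (fun p : ℝ × EuclideanSpace ℝ (Fin n) => u p.1 p.2) (Ioc 0 1 ×ˢ univ))
    {r : ℝ} (h0 : Tendsto (localEnergy u r) (nhdsWithin 0 (Ioi 0)) (nhds 0)) :
    ∃ B, ∀ t ∈ Ioo (0 : ℝ) 1, localEnergy u r t ≤ B := by
  obtain ⟨δ, hδ, hδE⟩ := mem_nhdsGT_iff_exists_Ioo_subset.1
    (h0.eventually (gt_mem_nhds (zero_lt_one' ℝ)))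
  obtain ⟨K, hK⟩ := (isCompact_Icc.prod (isCompact_closedBall 0 r)).exists_bound_of_continuousOn
    (hc.mono (prod_mono (fun t ht => ⟨lt_of_lt_of_le hδ ht.1, ht.2⟩) (subset_univ _)))
  refine ⟨max 1 (K ^ 2 * volume.real (ball (0 : EuclideanSpace ℝ (Fin n)) r)), fun t ht => ?_⟩
  rcases lt_or_ge t δ with h | h
  · exact (le_of_lt (hδE ⟨ht.1, h⟩)).trans (le_max_left _ _)
  · refine le_trans ?_ (le_max_right _ _)
    refine (le_abs_self _).trans (norm_setIntegral_le_of_norm_le_const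
      (f := fun x => u t x ^ 2) measure_ball_lt_top fun x hx => ?_)
    rw [norm_pow]
    exact pow_le_pow_left₀ (norm_nonneg _) (hK (t, x) ⟨⟨h, ht.2.le⟩, ball_subset_closedBall hx⟩) 2

theorem integral_rpow_mul_localEnergy_le (hu : IsHeatSolution u) {a r M : ℝ}
    (h : ∫⁻ t in Ioc (0 : ℝ) 1, ENNReal.ofReal (t ^ a) *
      ∫⁻ x in ball (0 : EuclideanSpace ℝ (Fin n)) r, ENNReal.ofReal (u t x ^ 2)
      ≤ ENNReal.ofReal M) (hM : 0 ≤ M) {s T : ℝ} (hs : 0 < s) (hsT : s < T) (hT : T < 1) :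
    ∫ t in s..T, t ^ a * localEnergy u r t ≤ M := by
  have hmem : ∀ t ∈ Ioc s T, t ∈ Ioo (0 : ℝ) 1 := fun t ht =>
    ⟨hs.trans ht.1, ht.2.trans_lt hT⟩
  have hnn : ∀ t ∈ Ioc s T, 0 ≤ t ^ a * localEnergy u r t := fun t ht =>
    mul_nonneg (Real.rpow_nonneg (hmem t ht).1.le _) (localEnergy_nonneg _ _)
  have hcont : ContinuousOn (fun t => t ^ a * localEnergy u r t) (Ioc s T) :=
    (continuousOn_id.rpow_const fun t ht => Or.inl (hmem t ht).1.ne').mul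
      ((hu.continuousOn_localEnergy r).mono hmem)
  rw [intervalIntegral.integral_of_le hsT.le, integral_eq_lintegral_of_nonneg_ae
    ((ae_restrict_iff' measurableSet_Ioc).2 (Eventually.of_forall hnn))
    (hcont.aestronglyMeasurable measurableSet_Ioc)]
  refine ENNReal.toReal_le_of_le_ofReal hM (le_trans ?_ h)
  refine le_trans (le_of_eq ?_) (lintegral_mono_set (Ioc_subset_Ioc hs.le hT.le))
  refine setLIntegral_congr_fun measurableSet_Ioc fun t ht => ?_
  simp only [hu.lintegral_sq_eq_ofReal_localEnergy (hmem t ht) r]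
  exact ENNReal.ofReal_mul (Real.rpow_nonneg (hmem t ht).1.le _)

end IsHeatSolution

/-- **Uniqueness form of Theorem 1 (Euclidean case).** Two smooth solutions of the
heat equation on `ℝⁿ × (0,1]` with the same initial data in the sense of `L²_loc`,
whose difference satisfies the time-weighted `L²` growth bound
`∫₀¹ tᵃ ∫_{B(0,r)} (u₁ - u₂)² ≤ e^{L(r)}` with `∫₁^∞ r / L(r) dr = ∞`, coincide. -/
theorem heat_equation_uniqueness_time_weighted_L2 {n : ℕ}
    (u₁ u₂ : ℝ → EuclideanSpace ℝ (Fin n) → ℝ)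
    (hu₁_smooth : ContDiffOn ℝ (⊤ : ℕ∞)
      (fun p : ℝ × EuclideanSpace ℝ (Fin n) => u₁ p.1 p.2) (Set.Ioc (0:ℝ) 1 ×ˢ Set.univ))
    (hu₂_smooth : ContDiffOn ℝ (⊤ : ℕ∞)
      (fun p : ℝ × EuclideanSpace ℝ (Fin n) => u₂ p.1 p.2) (Set.Ioc (0:ℝ) 1 ×ˢ Set.univ))
    (hu₁_sol : ∀ t ∈ Set.Ioc (0:ℝ) 1, ∀ x, deriv (fun s => u₁ s x) t = heatLap (u₁ t) x)
    (hu₂_sol : ∀ t ∈ Set.Ioc (0:ℝ) 1, ∀ x, deriv (fun s => u₂ s x) t = heatLap (u₂ t) x)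
    (h_init : ∀ R > (0:ℝ),
      Tendsto (fun t => ∫⁻ x in ball (0 : EuclideanSpace ℝ (Fin n)) R,
        ENNReal.ofReal ((u₁ t x - u₂ t x) ^ 2)) (nhdsWithin 0 (Set.Ioi 0)) (nhds 0))
    (a : ℝ) (ha : 0 < a)
    (L : ℝ → ℝ)
    (hL_pos : ∀ r > (0:ℝ), 0 < L r)
    (hL_mono : ∀ r s : ℝ, 0 < r → r ≤ s → L r ≤ L s)
    (hL_div : ∫⁻ r in Set.Ioi (1:ℝ), ENNReal.ofReal (r / L r) = ⊤)
    (h_growth : ∀ r > (0:ℝ),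
      ∫⁻ t in Set.Ioc (0:ℝ) 1, ENNReal.ofReal (t ^ a) *
        ∫⁻ x in ball (0 : EuclideanSpace ℝ (Fin n)) r,
          ENNReal.ofReal ((u₁ t x - u₂ t x) ^ 2)
      ≤ ENNReal.ofReal (Real.exp (L r))) :
    ∀ t ∈ Set.Ioc (0:ℝ) 1, ∀ x, u₁ t x = u₂ t x := by
  have hsub : Ioo (0 : ℝ) 1 ×ˢ (univ : Set (EuclideanSpace ℝ (Fin n))) ⊆ Ioc 0 1 ×ˢ univ :=
    prod_mono Ioo_subset_Ioc_self subset_rfl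
  have h2 : (2 : WithTop ℕ∞) ≤ ((⊤ : ℕ∞) : WithTop ℕ∞) :=
    WithTop.coe_le_coe.2 (le_top : (2 : ℕ∞) ≤ ⊤)
  have hu : IsHeatSolution (fun t x => u₁ t x - u₂ t x) :=
    (IsHeatSolution.of_contDiffOn ((hu₁_smooth.mono hsub).of_le h2)
      fun t ht => hu₁_sol t (Ioo_subset_Ioc_self ht)).sub
    (IsHeatSolution.of_contDiffOn ((hu₂_smooth.mono hsub).of_le h2)
      fun t ht => hu₂_sol t (Ioo_subset_Ioc_self ht))
  have hc := hu₁_smooth.continuousOn.sub hu₂_smooth.continuousOn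
  have h0 : ∀ R > 0, Tendsto (localEnergy (fun t x => u₁ t x - u₂ t x) R)
      (nhdsWithin 0 (Ioi 0)) (nhds 0) := fun R hR => hu.tendsto_localEnergy (h_init R hR)
  have hbdd : ∀ R, ∃ B, ∀ t ∈ Ioo (0 : ℝ) 1,
      localEnergy (fun t x => u₁ t x - u₂ t x) R t ≤ B := fun R => by
    obtain ⟨B, hB⟩ := IsHeatSolution.exists_localEnergy_le hc (h0 (max R 1) (by positivity))
    exact ⟨B, fun t ht => (hu.localEnergy_mono ht (le_max_left R 1)).trans (hB t ht)⟩
  have hzero := hu.eq_zero_of_weighted_growth h0 hbdd ha.le hL_pos hL_mono hL_div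
    fun R hR s T hs hsT hT =>
      hu.integral_rpow_mul_localEnergy_le (h_growth R hR) (Real.exp_pos _).le hs hsT hT
  intro t ht x
  rcases ht.2.lt_or_eq with h | rfl
  · exact sub_eq_zero.1 (hzero t ⟨ht.1, h⟩ x)
  · have hx : ContinuousWithinAt (fun s => u₁ s x - u₂ s x) (Ioo 0 1) 1 :=
      ((hc (1, x) ⟨ht, mem_univ x⟩).comp (f := fun s : ℝ => (s, x))
        (by fun_prop) (fun s hs => ⟨Ioo_subset_Ioc_self hs, mem_univ x⟩))
    have hlim : Tendsto (fun s => u₁ s x - u₂ s x) (nhdsWithin 1 (Ioo 0 1)) (nhds 0) :=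
      tendsto_const_nhds.congr' (by
        filter_upwards [self_mem_nhdsWithin] with s hs
        exact (hzero s hs x).symm)
    have : (nhdsWithin (1 : ℝ) (Ioo 0 1)).NeBot := right_nhdsWithin_Ioo_neBot one_pos
    exact sub_eq_zero.1 (tendsto_nhds_unique hx hlim)
end
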